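/- Let A = (A₁,…,Aₙ) be a reduced and irreducible tuple of finite subsets of ℤⁿ. If there is no group automorphism φ of ℤⁿ and no vectors v₁,…,vₙ ∈ ℤⁿ such that φ(Aᵢ) + vᵢ ⊆ {0, e₁, …, eₙ} for all i (where e₁,…,eₙ is the standard basis of ℤⁿ), then A is dual effective: the Zariski closure D_A of the set of systems f ∈ ℂ^A possessing a singular root has complex dimension dim_ℂ ℂ^A − 1. -/

import Mathlib

open Pointwise MeasureTheory

namespace Esterov

/-- The standard embedding of the lattice `ℤⁿ` into `ℝⁿ`. -/
def toR {n : ℕ} (a : Fin n → ℤ) : Fin n → ℝ := fun j => (a j : ℝ)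

/-- The lattice mixed volume of finite sets `A₁, …, Aₙ ⊆ ℤⁿ`:
`MV(A₁,…,Aₙ) = ∑_{∅ ≠ S ⊆ {1,…,n}} (−1)^{n−|S|} vol (conv (∑_{i ∈ S} Aᵢ))`. -/
noncomputable def MV {n : ℕ} (A : Fin n → Finset (Fin n → ℤ)) : ℝ :=
  ∑ S ∈ Finset.univ.powerset.filter (fun S : Finset (Fin n) => S.Nonempty),
    (-1 : ℝ) ^ (n - S.card) *
      (volume (convexHull ℝ (∑ i ∈ S, toR '' (A i : Set (Fin n → ℤ))))).toReal

/-- The complex torus `(ℂ∖0)ⁿ`. -/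
abbrev Torus (n : ℕ) := Fin n → ℂˣ

/-- The index type of the coefficients of a tuple of supports. -/
abbrev CIdx {n : ℕ} (A : Fin n → Finset (Fin n → ℤ)) := Σ i : Fin n, {a : Fin n → ℤ // a ∈ A i}

/-- The space `ℂ^A = ℂ^{A₁} ⊕ ⋯ ⊕ ℂ^{Aₙ}` of systems of Laurent polynomials supported at `A`,
encoded by their coefficients. -/
abbrev Coeff {n : ℕ} (A : Fin n → Finset (Fin n → ℤ)) := CIdx A → ℂ

/-- The value of the Laurent monomial `x^a` at a point `x` of the torus. -/
noncomputable def mono {n : ℕ} (a : Fin n → ℤ) (x : Torus n) : ℂ :=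
  ∏ j, ((x j : ℂ) ^ (a j))

/-- The value of the `i`-th polynomial of the system `c ∈ ℂ^A` at `x`. -/
noncomputable def evalAt {n : ℕ} (A : Fin n → Finset (Fin n → ℤ)) (c : Coeff A) (i : Fin n)
    (x : Torus n) : ℂ :=
  ∑ a ∈ (A i).attach, c ⟨i, a⟩ * mono a.1 x

/-- `x` is a common root of the system `c ∈ ℂ^A`. -/
def IsRoot {n : ℕ} (A : Fin n → Finset (Fin n → ℤ)) (c : Coeff A) (x : Torus n) : Prop :=
  ∀ i, evalAt A c i x = 0

/-- The Jacobian matrix `(∂fᵢ/∂xⱼ (x))` of the system `c ∈ ℂ^A` at `x`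
(note `∂(x^a)/∂xⱼ = aⱼ x^a / xⱼ`). -/
noncomputable def jacobian {n : ℕ} (A : Fin n → Finset (Fin n → ℤ)) (c : Coeff A)
    (x : Torus n) : Matrix (Fin n) (Fin n) ℂ :=
  Matrix.of fun i j => (∑ a ∈ (A i).attach, c ⟨i, a⟩ * (a.1 j : ℂ) * mono a.1 x) * (x j : ℂ)⁻¹

/-- `x` is a singular root of the system `c`: a common root at which the Jacobian matrix
is degenerate. -/
def IsSingularRoot {n : ℕ} (A : Fin n → Finset (Fin n → ℤ)) (c : Coeff A) (x : Torus n) :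
    Prop :=
  IsRoot A c x ∧ (jacobian A c x).det = 0

/-- A subset of `ℂ^ι` is algebraic if it is the common zero locus of a family of polynomials. -/
def IsAlgebraicSet {ι : Type*} (Z : Set (ι → ℂ)) : Prop :=
  ∃ S : Set (MvPolynomial ι ℂ), Z = {c | ∀ p ∈ S, MvPolynomial.eval c p = 0}

/-- The Zariski closure of a subset of `ℂ^ι`. -/
def zclosure {ι : Type*} (Z : Set (ι → ℂ)) : Set (ι → ℂ) :=
  ⋂₀ {W | IsAlgebraicSet W ∧ Z ⊆ W}

/-- The ideal of polynomials vanishing on a subset of `ℂ^ι`. -/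
noncomputable def vanishingIdeal {ι : Type*} (Z : Set (ι → ℂ)) : Ideal (MvPolynomial ι ℂ) where
  carrier := {p | ∀ c ∈ Z, MvPolynomial.eval c p = 0}
  add_mem' := by
    intro p q hp hq c hc
    simp [hp c hc, hq c hc]
  zero_mem' := by
    intro c hc
    simp
  smul_mem' := by
    intro p q hq c hc
    simp [smul_eq_mul, hq c hc]

/-- The (complex) dimension of a subset of `ℂ^ι`, as the Krull dimension of the coordinate
ring of its Zariski closure. -/
noncomputable def adim {ι : Type*} (Z : Set (ι → ℂ)) : WithBot ℕ∞ :=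
  ringKrullDim (MvPolynomial ι ℂ ⧸ vanishingIdeal Z)

/-- The discriminant `D_A`: the Zariski closure of the set of systems having a singular root. -/
noncomputable def discSet {n : ℕ} (A : Fin n → Finset (Fin n → ℤ)) : Set (Coeff A) :=
  zclosure {c | ∃ x, IsSingularRoot A c x}

/-- The tuple `A` is dual effective: `D_A` is a hypersurface, i.e. has complex dimension
`dim ℂ^A − 1`. -/
def DualEffective {n : ℕ} (A : Fin n → Finset (Fin n → ℤ)) : Prop :=
  adim (discSet A) = ((Fintype.card (CIdx A) - 1 : ℕ) : WithBot ℕ∞)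

/-- The finite set `s` can be translated into the subgroup `L` of `ℤⁿ`. -/
def TranslatesInto {n : ℕ} (s : Finset (Fin n → ℤ)) (L : Submodule ℤ (Fin n → ℤ)) : Prop :=
  ∃ v : Fin n → ℤ, ∀ a ∈ s, a - v ∈ L

/-- A tuple of finite sets in `ℤⁿ` is reduced if the sets cannot all be translated into one
common proper subgroup of `ℤⁿ`. -/
def IsReducedTuple {n : ℕ} (A : Fin n → Finset (Fin n → ℤ)) : Prop :=
  ¬ ∃ L : Submodule ℤ (Fin n → ℤ), L ≠ ⊤ ∧ ∀ i, TranslatesInto (A i) L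

/-- A tuple of `n` finite sets in `ℤⁿ` is irreducible if for no `m` with `0 < m < n` can some
`n − m` of the sets be translated into one common subgroup of rank at most `n − m`. -/
def IsIrreducibleTuple {n : ℕ} (A : Fin n → Finset (Fin n → ℤ)) : Prop :=
  ¬ ∃ (I : Finset (Fin n)) (L : Submodule ℤ (Fin n → ℤ)),
      0 < I.card ∧ I.card < n ∧ Module.finrank ℤ L ≤ I.card ∧
      ∀ i ∈ I, TranslatesInto (A i) L

/-- The incidence variety `E = {(x, f) : f(x) = 0} ⊆ (ℂ∖0)ⁿ × ℂ^A`. -/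
def incidence {n : ℕ} (A : Fin n → Finset (Fin n → ℤ)) : Set (Torus n × Coeff A) :=
  {p | IsRoot A p.2 p.1}

/-- The projection `π : E → ℂ^A`. -/
def proj {n : ℕ} (A : Fin n → Finset (Fin n → ℤ)) : incidence A → Coeff A :=
  fun p => p.1.2

/-- The set of roots of the system `c`. -/
def RootSet {n : ℕ} (A : Fin n → Finset (Fin n → ℤ)) (c : Coeff A) :=
  {x : Torus n // IsRoot A c x}

/-- `γ` is a loop in `ℂ^A ∖ B` based at `f`. -/
def IsLoop {n : ℕ} (A : Fin n → Finset (Fin n → ℤ)) (B : Set (Coeff A)) (f : Coeff A)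
    (γ : unitInterval → Coeff A) : Prop :=
  Continuous γ ∧ (∀ t, γ t ∉ B) ∧ γ 0 = f ∧ γ 1 = f

/-- The loop `γ` based at `f` induces the permutation `σ` of the root set of `f` by path
lifting: for every root `x` the lift of `γ` starting at `x` ends at `σ x`. -/
def Induces {n : ℕ} (A : Fin n → Finset (Fin n → ℤ)) (γ : unitInterval → Coeff A)
    (f : Coeff A) (σ : RootSet A f → RootSet A f) : Prop :=
  ∀ x : RootSet A f, ∃ δ : unitInterval → Torus n,
    Continuous δ ∧ δ 0 = x.1 ∧ (∀ t, IsRoot A (γ t) (δ t)) ∧ δ 1 = (σ x).1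

/-- The vertex set `{0, e₁, …, eₙ}` of the standard simplex in `ℤⁿ`. -/
def stdSimplexVertices (n : ℕ) : Set (Fin n → ℤ) :=
  insert 0 (Set.range fun j : Fin n => (Pi.single j 1 : Fin n → ℤ))

/-- The tuple `A` is linear up to a monomial change of variables: some automorphism of `ℤⁿ`
followed by translations takes each `Aᵢ` into `{0, e₁, …, eₙ}`. -/
def EssentiallyLinear {n : ℕ} (A : Fin n → Finset (Fin n → ℤ)) : Prop :=
  ∃ (φ : (Fin n → ℤ) ≃+ (Fin n → ℤ)) (v : Fin n → (Fin n → ℤ)),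
    ∀ i, ∀ a ∈ A i, φ a + v i ∈ stdSimplexVertices n

/-!
In terms of a singular root `x` and the values of the terms `c_a x^a`, the singular systems are the
image of a hypersurface, given by the logarithmic Jacobian determinant, under a polynomial map
between affine spaces of dimension `dim ℂ^A`. Irreducibility and reducedness make that determinant
a nonzero polynomial, so some nonzero polynomial vanishes on all singular systems.

Conversely, suppose that some system has the singular root `(1, …, 1)` with a Jacobian of corank
one and with a nonzero Hessian on its kernel. By the inverse function theorem all coefficients but
one can then be perturbed freely while a singular root persists, so `D_A` has codimension one.

It remains to see that a tuple is essentially linear if the Hessian vanishes at all such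
degenerations. Choose one edge in each `Aᵢ`, all of them independent, and contract them all but one:
the vanishing of the Hessian then forces the remaining set to consist of two points modulo the
contracted edges. Release the edges one at a time. A cubic identity deduced from the vanishing of
the Hessian shows at each step that the released sets lie, up to translation, in the vertex set of
one simplex. In the end this holds over `ℂ` for the whole tuple, and as the difference lattice of a
reduced tuple is `ℤⁿ`, the simplex is unimodular.
-/

open Module

section IndepMod

variable {𝕜 V κ : Type*} [Field 𝕜] [AddCommGroup V] [Module 𝕜 V]

theorem mem_sup_span_singleton {E : Submodule 𝕜 V} {x y : V} :
    y ∈ E ⊔ Submodule.span 𝕜 {x} ↔ ∃ t : 𝕜, y - t • x ∈ E := by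
  rw [sup_comm, Submodule.mem_sup]
  constructor
  · rintro ⟨_, hu, z, hz, rfl⟩
    obtain ⟨t, rfl⟩ := Submodule.mem_span_singleton.1 hu
    exact ⟨t, by simpa using hz⟩
  · rintro ⟨t, ht⟩
    exact ⟨t • x, Submodule.mem_span_singleton.2 ⟨t, rfl⟩, _, ht, by abel⟩

/-- Linear independence of the vectors `x k`, `k ∈ K`, modulo the subspace `E`. -/
def IndepMod (E : Submodule 𝕜 V) (K : Finset κ) (x : κ → V) : Prop :=
  LinearIndepOn 𝕜 (E.mkQ ∘ x) K

theorem indepMod_iff_sum {E : Submodule 𝕜 V} {K : Finset κ} {x : κ → V} :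
    IndepMod E K x ↔ ∀ g : κ → 𝕜, ∑ k ∈ K, g k • x k ∈ E → ∀ k ∈ K, g k = 0 := by
  have hmk (g : κ → 𝕜) : ∑ k ∈ K, g k • (E.mkQ ∘ x) k = 0 ↔ ∑ k ∈ K, g k • x k ∈ E := by
    rw [← Submodule.Quotient.mk_eq_zero, ← Submodule.mkQ_apply, map_sum]
    simp only [map_smul, Function.comp_apply]
  simp only [IndepMod, linearIndepOn_finset_iff, hmk]

theorem indepMod_empty (E : Submodule 𝕜 V) (x : κ → V) : IndepMod E ∅ x := by
  simp [IndepMod]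

theorem IndepMod.mono_set {E : Submodule 𝕜 V} {K L : Finset κ} {x : κ → V}
    (h : IndepMod E K x) (hL : L ⊆ K) : IndepMod E L x :=
  LinearIndepOn.mono h (Finset.coe_subset.2 hL)

theorem IndepMod.anti {E F : Submodule 𝕜 V} {K : Finset κ} {x : κ → V}
    (h : IndepMod E K x) (hF : F ≤ E) : IndepMod F K x :=
  indepMod_iff_sum.2 fun g hg => indepMod_iff_sum.1 h g (hF hg)

theorem IndepMod.congr {E : Submodule 𝕜 V} {K : Finset κ} {x y : κ → V}
    (h : IndepMod E K x) (hxy : ∀ k ∈ K, x k = y k) : IndepMod E K y :=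
  LinearIndepOn.congr h fun k hk => by simp [hxy k hk]

theorem indepMod_insert_iff_notMem_sup [DecidableEq κ] {E : Submodule 𝕜 V} {K : Finset κ}
    {x : κ → V} {k : κ} (hk : k ∉ K) :
    IndepMod E (insert k K) x ↔
      IndepMod E K x ∧ x k ∉ E ⊔ Submodule.span 𝕜 (x '' K) := by
  rw [IndepMod, Finset.coe_insert, linearIndepOn_insert (by simpa using hk), Set.image_comp,
    Submodule.span_image, ← Submodule.comap_map_mkQ]
  rfl

theorem span_image_le_span_erase_sup_of_coeff_ne_zero [DecidableEq κ] {K : Finset κ} {e : κ → V}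
    {g : κ → 𝕜} {l : κ} (hl : l ∈ K) (hg : g l ≠ 0) :
    Submodule.span 𝕜 (e '' K) ≤
      Submodule.span 𝕜 (e '' ↑(K.erase l)) ⊔ Submodule.span 𝕜 {∑ i ∈ K, g i • e i} := by
  rw [Submodule.span_le]
  rintro _ ⟨i, hi, rfl⟩
  rcases eq_or_ne i l with rfl | hne
  · refine mem_sup_span_singleton.2 ⟨(g i)⁻¹, ?_⟩
    rw [← Finset.add_sum_erase K _ hl, smul_add, inv_smul_smul₀ hg, sub_add_cancel_left]
    exact neg_mem (Submodule.smul_mem _ _ (Submodule.sum_mem _ fun k hk =>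
      Submodule.smul_mem _ _ (Submodule.subset_span ⟨k, hk, rfl⟩)))
  · exact Submodule.mem_sup_left
      (Submodule.subset_span ⟨i, Finset.mem_coe.2 (Finset.mem_erase.2 ⟨hne, hi⟩), rfl⟩)

section FiniteDimensional

variable [FiniteDimensional 𝕜 V]

theorem finrank_map_mkQ_add (E F : Submodule 𝕜 V) :
    finrank 𝕜 (F.map E.mkQ) + finrank 𝕜 E = finrank 𝕜 ↥(E ⊔ F) := by
  have h := (E.mkQ.domRestrict (E ⊔ F)).finrank_range_add_finrank_ker
  rw [LinearMap.range_domRestrict, Submodule.map_sup, LinearMap.ker_domRestrict,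
    Submodule.ker_mkQ, Submodule.mkQ_map_self, bot_sup_eq,
    (Submodule.comapSubtypeEquivOfLe le_sup_left).finrank_eq] at h
  exact h

theorem indepMod_iff_finrank {E : Submodule 𝕜 V} {K : Finset κ} {x : κ → V} :
    IndepMod E K x ↔ finrank 𝕜 ↥(E ⊔ Submodule.span 𝕜 (x '' K)) = finrank 𝕜 E + K.card := by
  rw [IndepMod, LinearIndepOn, linearIndependent_iff_card_eq_finrank_span, Set.finrank,
    ← finrank_map_mkQ_add, ← Submodule.span_image, ← Set.image_comp,
    Set.image_eq_range]
  simp only [Fintype.card_coe, Finset.coe_sort_coe]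
  omega

theorem finrank_sup_span_image_le (E : Submodule 𝕜 V) (K : Finset κ) (x : κ → V) :
    finrank 𝕜 ↥(E ⊔ Submodule.span 𝕜 (x '' K)) ≤ finrank 𝕜 E + K.card := by
  classical
  refine (Submodule.finrank_add_le_finrank_add_finrank _ _).trans (Nat.add_le_add_left ?_ _)
  rw [← Finset.coe_image]
  exact (finrank_span_finset_le_card _).trans Finset.card_image_le

theorem finrank_sup_span_singleton_le (E : Submodule 𝕜 V) (x : V) :
    finrank 𝕜 ↥(E ⊔ Submodule.span 𝕜 {x}) ≤ finrank 𝕜 E + 1 := by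
  have := finrank_sup_span_image_le E {()} fun _ => x
  rwa [Finset.coe_singleton, Set.image_singleton, Finset.card_singleton] at this

theorem indepMod_insert_iff_sup_span_singleton [DecidableEq κ] {E : Submodule 𝕜 V}
    {K : Finset κ} {x : κ → V} {k : κ} (hk : k ∉ K) :
    IndepMod E (insert k K) x ↔ x k ∉ E ∧ IndepMod (E ⊔ Submodule.span 𝕜 {x k}) K x := by
  have hle := finrank_sup_span_image_le (E ⊔ Submodule.span 𝕜 {x k}) K x
  rw [indepMod_iff_finrank, indepMod_iff_finrank, Finset.card_insert_of_notMem hk,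
    Finset.coe_insert, Set.image_insert_eq, Submodule.span_insert, ← sup_assoc]
  by_cases hx : x k ∈ E
  · have : E ⊔ Submodule.span 𝕜 {x k} = E := by simpa using hx
    rw [this] at hle ⊢
    simp only [hx, not_true_eq_false, false_and, iff_false]
    omega
  · rw [Submodule.finrank_sup_span_singleton hx] at hle ⊢
    simp only [hx, not_false_eq_true, true_and]
    omega

theorem indepMod_union_iff [DecidableEq κ] {E : Submodule 𝕜 V} {K L : Finset κ} {x : κ → V}
    (hKL : Disjoint K L) :
    IndepMod E (K ∪ L) x ↔
      IndepMod E K x ∧ IndepMod (E ⊔ Submodule.span 𝕜 (x '' K)) L x := by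
  have hK := finrank_sup_span_image_le E K x
  have hL := finrank_sup_span_image_le (E ⊔ Submodule.span 𝕜 (x '' K)) L x
  rw [indepMod_iff_finrank, indepMod_iff_finrank, indepMod_iff_finrank,
    Finset.card_union_of_disjoint hKL, Finset.coe_union, Set.image_union, Submodule.span_union,
    ← sup_assoc]
  omega

theorem IndepMod.sup_span_singleton {E : Submodule 𝕜 V} {K : Finset κ} {x : κ → V} {y : V}
    (h : IndepMod E K x) (hy : y ∉ E ⊔ Submodule.span 𝕜 (x '' K)) :
    IndepMod (E ⊔ Submodule.span 𝕜 {y}) K x := by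
  rw [indepMod_iff_finrank] at h ⊢
  rw [sup_right_comm, Submodule.finrank_sup_span_singleton hy, h,
    Submodule.finrank_sup_span_singleton fun hyE => hy (Submodule.mem_sup_left hyE)]
  omega

end FiniteDimensional

end IndepMod

section Rado

variable {𝕜 V κ : Type*} [Field 𝕜] [AddCommGroup V] [Module 𝕜 V]

theorem exists_mem_forall_notMem_of_not_le [Infinite 𝕜] {ι : Type*} (W : Submodule 𝕜 V)
    (s : Finset ι) (P : ι → Submodule 𝕜 V) (hP : ∀ i ∈ s, ¬ W ≤ P i) :
    ∃ y ∈ W, ∀ i ∈ s, y ∉ P i := by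
  classical
  have hne := Subspace.biUnion_ne_univ_of_top_notMem (k := 𝕜) (E := W)
    (s := s.image fun i => (P i).comap W.subtype) (by
      simpa [Submodule.comap_subtype_eq_top] using hP)
  obtain ⟨y, hy⟩ := (Set.ne_univ_iff_exists_notMem _).1 hne
  refine ⟨y, y.2, fun i hi hyi => hy ?_⟩
  simp only [Set.mem_iUnion]
  exact ⟨_, Finset.mem_image_of_mem _ hi, hyi⟩

/-- Rado's condition for the existence of a transversal of the subspaces `W k`, `k ∈ L`,
which is linearly independent modulo `E`. -/
def RadoCondition (W : κ → Submodule 𝕜 V) (E : Submodule 𝕜 V) (L : Finset κ) : Prop :=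
  ∀ I ⊆ L, finrank 𝕜 E + I.card ≤ finrank 𝕜 ↥(E ⊔ ⨆ i ∈ I, W i)

variable [DecidableEq κ] {W : κ → Submodule 𝕜 V} {E : Submodule 𝕜 V} {L : Finset κ} {k : κ}

theorem RadoCondition.not_le_of_tight (h : RadoCondition W E L) (hk : k ∈ L) {I : Finset κ}
    (hI : I ⊆ L.erase k)
    (htight : finrank 𝕜 ↥(E ⊔ ⨆ i ∈ I, W i) = finrank 𝕜 E + I.card) :
    ¬ W k ≤ E ⊔ ⨆ i ∈ I, W i := by
  intro hle
  have hkI : k ∉ I := fun hkI => by simpa using hI hkI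
  have := h (insert k I) (Finset.insert_subset hk (hI.trans (Finset.erase_subset _ _)))
  rw [Finset.card_insert_of_notMem hkI, Finset.iSup_insert, sup_left_comm, sup_eq_right.2 hle]
    at this
  omega

variable [FiniteDimensional 𝕜 V]

theorem RadoCondition.sup_span_singleton (h : RadoCondition W E L) {y : V}
    (hy : ∀ I ⊆ L.erase k, finrank 𝕜 ↥(E ⊔ ⨆ i ∈ I, W i) = finrank 𝕜 E + I.card →
      y ∉ E ⊔ ⨆ i ∈ I, W i) :
    y ∉ E ∧ RadoCondition W (E ⊔ Submodule.span 𝕜 {y}) (L.erase k) := by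
  have hyE : y ∉ E := by simpa using hy ∅ (Finset.empty_subset _) (by
    rw [show E ⊔ ⨆ i ∈ (∅ : Finset κ), W i = E by simp]; simp)
  refine ⟨hyE, fun I hI => ?_⟩
  rw [Submodule.finrank_sup_span_singleton hyE, sup_right_comm]
  have hI' := h I (hI.trans (Finset.erase_subset _ _))
  by_cases htight : finrank 𝕜 ↥(E ⊔ ⨆ i ∈ I, W i) = finrank 𝕜 E + I.card
  · rw [Submodule.finrank_sup_span_singleton (hy I hI htight)]
    omega
  · have := Submodule.finrank_mono (R := 𝕜)
      (le_sup_left : E ⊔ ⨆ i ∈ I, W i ≤ (E ⊔ ⨆ i ∈ I, W i) ⊔ Submodule.span 𝕜 {y})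
    omega

variable {σ : Type*} [Infinite 𝕜]

theorem exists_mem_radoCondition_sup_span_singleton (S : Finset σ) (L : σ → Finset κ)
    (E : σ → Submodule 𝕜 V) (h : ∀ s ∈ S, RadoCondition W (E s) (L s)) (k : κ) :
    ∃ y ∈ W k, ∀ s ∈ S, k ∈ L s →
      y ∉ E s ∧ RadoCondition W (E s ⊔ Submodule.span 𝕜 {y}) ((L s).erase k) := by
  let tight (p : σ × Finset κ) : Prop := k ∈ L p.1 ∧ p.2 ⊆ (L p.1).erase k ∧
    finrank 𝕜 ↥(E p.1 ⊔ ⨆ i ∈ p.2, W i) = finrank 𝕜 (E p.1) + p.2.card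
  classical
  obtain ⟨y, hyW, hy⟩ := exists_mem_forall_notMem_of_not_le (W k)
    ((S ×ˢ (S.biUnion L).powerset).filter tight) (fun p => E p.1 ⊔ ⨆ i ∈ p.2, W i) (by
      rintro ⟨s, I⟩ hp
      simp only [Finset.mem_filter, Finset.mem_product] at hp
      exact (h s hp.1.1).not_le_of_tight hp.2.1 hp.2.2.1 hp.2.2.2)
  refine ⟨y, hyW, fun s hs hk => (h s hs).sup_span_singleton fun I hI htight => hy (s, I) ?_⟩
  simp only [Finset.mem_filter, Finset.mem_product, Finset.mem_powerset]
  exact ⟨⟨hs, (hI.trans (Finset.erase_subset _ _)).trans (Finset.subset_biUnion_of_mem L hs)⟩,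
    hk, hI, htight⟩

omit [DecidableEq κ] in
/-- The new vector has to avoid only the tight subspaces, which are finitely many and proper,
so several contracted families can be served at once. -/
theorem exists_transversal_forall_indepMod (S : Finset σ) (L : σ → Finset κ)
    (E : σ → Submodule 𝕜 V) (h : ∀ s ∈ S, RadoCondition W (E s) (L s)) :
    ∃ x : κ → V, (∀ i, x i ∈ W i) ∧ ∀ s ∈ S, IndepMod (E s) (L s) x := by
  classical
  suffices ∀ K : Finset κ, ∀ (L : σ → Finset κ) (E : σ → Submodule 𝕜 V), (∀ s ∈ S, L s ⊆ K) →
      (∀ s ∈ S, RadoCondition W (E s) (L s)) →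
      ∃ x : κ → V, (∀ i, x i ∈ W i) ∧ ∀ s ∈ S, IndepMod (E s) (L s) x from
    this (S.biUnion L) L E (fun s hs => Finset.subset_biUnion_of_mem L hs) h
  clear h L E
  intro K
  induction K using Finset.induction_on with
  | empty =>
    intro L E hL _
    refine ⟨0, fun i => (W i).zero_mem, fun s hs => ?_⟩
    rw [Finset.subset_empty.1 (hL s hs)]
    exact indepMod_empty _ _
  | insert k K hk ih =>
    intro L E hL h
    obtain ⟨y, hyW, hy⟩ := exists_mem_radoCondition_sup_span_singleton S L E h k
    obtain ⟨x, hxW, hx⟩ := ih (fun s => (L s).erase k)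
      (fun s => if k ∈ L s then E s ⊔ Submodule.span 𝕜 {y} else E s)
      (fun s hs => by simpa [Finset.subset_insert_iff] using hL s hs) (by
        intro s hs
        by_cases hks : k ∈ L s
        · simpa only [if_pos hks] using (hy s hs hks).2
        · simpa only [if_neg hks, Finset.erase_eq_of_notMem hks] using h s hs)
    refine ⟨Function.update x k y, fun i => ?_, fun s hs => ?_⟩
    · rcases eq_or_ne i k with rfl | hi
      · simpa using hyW
      · simpa [hi] using hxW i
    · have hx' := (hx s hs).congr (y := Function.update x k y) fun i hi => by
        rw [Function.update_of_ne (Finset.ne_of_mem_erase hi)]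
      by_cases hks : k ∈ L s
      · rw [← Finset.insert_erase hks, indepMod_insert_iff_sup_span_singleton (by simp),
          Function.update_self]
        exact ⟨(hy s hs hks).1, by simpa only [if_pos hks] using hx'⟩
      · simpa only [if_neg hks, Finset.erase_eq_of_notMem hks] using hx'

omit [DecidableEq κ] in
theorem RadoCondition.exists_transversal (h : RadoCondition W E L) :
    ∃ x : κ → V, (∀ i, x i ∈ W i) ∧ IndepMod E L x := by
  simpa using exists_transversal_forall_indepMod {()} (fun _ => L) (fun _ => E) (by simpa using h)

end Rado

section DirectionSpan

variable {𝕜 V ι : Type*} [Ring 𝕜] [AddCommGroup V] [Module 𝕜 V]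

theorem vectorSpan_le_iff {s : Set V} {E : Submodule 𝕜 V} :
    vectorSpan 𝕜 s ≤ E ↔ ∀ a ∈ s, ∀ b ∈ s, a - b ∈ E := by
  rw [vectorSpan_def, Submodule.span_le]
  exact Set.vsub_subset_iff

theorem mem_vectorSpan_of_mem_sub {s : Set V} {x : V} (hx : x ∈ s - s) : x ∈ vectorSpan 𝕜 s :=
  Submodule.subset_span hx

theorem exists_mem_sub_notMem {s : Set V} {x : V} {P : Submodule 𝕜 V} (hx : x ∈ vectorSpan 𝕜 s)
    (hP : x ∉ P) : ∃ y ∈ s - s, y ∉ P := by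
  by_contra! h
  exact hP (vectorSpan_le_iff.2 (fun a ha b hb => h _ (Set.sub_mem_sub ha hb)) hx)

theorem exists_mem_sub_notMem_notMem {s : Set V} {P Q : Submodule 𝕜 V}
    (hP : ∃ y ∈ s - s, y ∉ P) (hQ : ∃ y ∈ s - s, y ∉ Q) : ∃ y ∈ s - s, y ∉ P ∧ y ∉ Q := by
  obtain ⟨_, ⟨a, ha, b, hb, rfl⟩, hab⟩ := hP
  simp only at hab
  by_contra! hcon
  have habQ : a - b ∈ Q := hcon _ (Set.sub_mem_sub ha hb) hab
  obtain ⟨d, hd, hda⟩ : ∃ d ∈ s, d - a ∉ Q := by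
    by_contra! h
    obtain ⟨_, ⟨a', ha', b', hb', rfl⟩, hab'⟩ := hQ
    exact hab' (by simpa using Q.sub_mem (h a' ha') (h b' hb'))
  have hdb : d - b ∉ Q := fun h => hda (by simpa using Q.sub_mem h habQ)
  have hdaP : d - a ∈ P := by
    by_contra h
    exact hda (hcon _ (Set.sub_mem_sub hd ha) h)
  have hdbP : d - b ∈ P := by
    by_contra h
    exact hdb (hcon _ (Set.sub_mem_sub hd hb) h)
  exact hab (by simpa using P.sub_mem hdbP hdaP)

variable (𝕜) in
/-- The sum of the direction spaces of the sets `A i`, `i ∈ I`. -/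
def directionSpan (A : ι → Set V) (I : Finset ι) : Submodule 𝕜 V := ⨆ i ∈ I, vectorSpan 𝕜 (A i)

theorem directionSpan_le_iff {A : ι → Set V} {I : Finset ι} {E : Submodule 𝕜 V} :
    directionSpan 𝕜 A I ≤ E ↔ ∀ i ∈ I, vectorSpan 𝕜 (A i) ≤ E := by
  simp [directionSpan]

theorem vectorSpan_le_directionSpan {A : ι → Set V} {I : Finset ι} {i : ι} (hi : i ∈ I) :
    vectorSpan 𝕜 (A i) ≤ directionSpan 𝕜 A I :=
  le_biSup (fun i => vectorSpan 𝕜 (A i)) hi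

theorem directionSpan_mono {A : ι → Set V} {I J : Finset ι} (h : I ⊆ J) :
    directionSpan 𝕜 A I ≤ directionSpan 𝕜 A J :=
  directionSpan_le_iff.2 fun _ hi => vectorSpan_le_directionSpan (h hi)

theorem directionSpan_insert [DecidableEq ι] (A : ι → Set V) (k : ι) (I : Finset ι) :
    directionSpan 𝕜 A (insert k I) = vectorSpan 𝕜 (A k) ⊔ directionSpan 𝕜 A I :=
  Finset.iSup_insert k I _

end DirectionSpan

section Edges

variable {𝕜 V ι : Type*} [Field 𝕜] [AddCommGroup V] [Module 𝕜 V] [FiniteDimensional 𝕜 V]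

theorem exists_edges_indepMod_indepMod (A : ι → Set V) (K : Finset ι) {E F : Submodule 𝕜 V}
    {x x' : ι → V} (hx : ∀ i ∈ K, x i ∈ vectorSpan 𝕜 (A i))
    (hx' : ∀ i ∈ K, x' i ∈ vectorSpan 𝕜 (A i)) (hE : IndepMod E K x) (hF : IndepMod F K x') :
    ∃ y : ι → V, (∀ i ∈ K, y i ∈ A i - A i) ∧ IndepMod E K y ∧ IndepMod F K y := by
  classical
  induction K using Finset.induction_on generalizing E F with
  | empty => exact ⟨0, by simp, indepMod_empty _ _, indepMod_empty _ _⟩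
  | insert k K hk ih =>
    rw [indepMod_insert_iff_notMem_sup hk] at hE hF
    obtain ⟨z, hz, hzE, hzF⟩ := exists_mem_sub_notMem_notMem
      (exists_mem_sub_notMem (hx k (Finset.mem_insert_self k K)) hE.2)
      (exists_mem_sub_notMem (hx' k (Finset.mem_insert_self k K)) hF.2)
    obtain ⟨y, hy, hyE, hyF⟩ := ih (fun i hi => hx i (Finset.mem_insert_of_mem hi))
      (fun i hi => hx' i (Finset.mem_insert_of_mem hi)) (hE.1.sup_span_singleton hzE)
      (hF.1.sup_span_singleton hzF)
    have hupd : ∀ i ∈ K, y i = Function.update y k z i := fun i hi =>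
      (Function.update_of_ne (ne_of_mem_of_not_mem hi hk) _ _).symm
    refine ⟨Function.update y k z, fun i hi => ?_, ?_, ?_⟩
    · rcases Finset.mem_insert.1 hi with rfl | hi
      · simpa using hz
      · simpa [← hupd i hi] using hy i hi
    · rw [indepMod_insert_iff_sup_span_singleton hk, Function.update_self]
      exact ⟨fun h => hzE (Submodule.mem_sup_left h), hyE.congr hupd⟩
    · rw [indepMod_insert_iff_sup_span_singleton hk, Function.update_self]
      exact ⟨fun h => hzF (Submodule.mem_sup_left h), hyF.congr hupd⟩

end Edges

section Irreducible

variable {𝕜 V ι : Type*} [Field 𝕜] [AddCommGroup V] [Module 𝕜 V]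

/-- The images of the sets `A i`, `i ∈ T`, in `V ⧸ E` form an irreducible tuple spanning a space
of dimension `|T|`: the inequality of Rado's condition is strict for proper nonempty subtuples. -/
structure IsIrreducibleMod (A : ι → Set V) (T : Finset ι) (E : Submodule 𝕜 V) : Prop where
  lt_finrank : ∀ I ⊂ T, I.Nonempty →
    finrank 𝕜 E + I.card < finrank 𝕜 ↥(E ⊔ directionSpan 𝕜 A I)
  sup_directionSpan : E ⊔ directionSpan 𝕜 A T = ⊤
  finrank_add_card : finrank 𝕜 E + T.card = finrank 𝕜 V

variable {A : ι → Set V} {T J : Finset ι} {E : Submodule 𝕜 V}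

theorem IsIrreducibleMod.radoCondition (h : IsIrreducibleMod A T E) :
    RadoCondition (fun i => vectorSpan 𝕜 (A i)) E T := by
  intro I hI
  rcases I.eq_empty_or_nonempty with rfl | hne
  · rw [show E ⊔ ⨆ i ∈ (∅ : Finset ι), vectorSpan 𝕜 (A i) = E by simp, Finset.card_empty, add_zero]
  rcases hI.eq_or_ssubset with rfl | hT
  · rw [h.finrank_add_card, ← finrank_top 𝕜 V, ← h.sup_directionSpan, directionSpan]
  · exact (h.lt_finrank I hT hne).le

theorem IsIrreducibleMod.directionSpan_eq_top (h : IsIrreducibleMod A T (⊥ : Submodule 𝕜 V)) :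
    directionSpan 𝕜 A T = ⊤ := by
  simpa using h.sup_directionSpan

theorem IsIrreducibleMod.card_lt_finrank (h : IsIrreducibleMod A T (⊥ : Submodule 𝕜 V))
    (hJ : J ⊂ T) (hJne : J.Nonempty) : J.card < finrank 𝕜 ↥(directionSpan 𝕜 A J) := by
  have := h.lt_finrank J hJ hJne
  rwa [finrank_bot, bot_sup_eq, zero_add] at this

section FiniteDimensional

variable [FiniteDimensional 𝕜 V]

theorem IsIrreducibleMod.exists_edges [Infinite 𝕜] (h : IsIrreducibleMod A T E) :
    ∃ e : ι → V, (∀ i ∈ T, e i ∈ A i - A i) ∧ IndepMod E T e := by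
  obtain ⟨x, hx, hI⟩ := h.radoCondition.exists_transversal
  obtain ⟨e, he, hE, -⟩ :=
    exists_edges_indepMod_indepMod A T (fun i _ => hx i) (fun i _ => hx i) hI hI
  exact ⟨e, he, hE⟩

theorem isIrreducibleMod_singleton {j : ι} (hE : finrank 𝕜 E + 1 = finrank 𝕜 V)
    (hj : ¬ vectorSpan 𝕜 (A j) ≤ E) : IsIrreducibleMod A {j} E where
  lt_finrank I hI hne := absurd (Finset.ssubset_singleton_iff.1 hI) hne.ne_empty
  sup_directionSpan := by
    refine Submodule.eq_top_of_finrank_eq (le_antisymm (Submodule.finrank_le _) ?_)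
    rw [← hE]
    refine Submodule.finrank_lt_finrank_of_lt (lt_of_le_of_ne le_sup_left fun h => hj ?_)
    rw [h]
    exact (vectorSpan_le_directionSpan (Finset.mem_singleton_self j)).trans le_sup_right
  finrank_add_card := hE

/-- The strict inequality for proper subtuples absorbs the contraction of one vector. -/
theorem IsIrreducibleMod.radoCondition_sup_span_singleton (h : IsIrreducibleMod A T E)
    {L : Finset ι} (hL : L ⊂ T) (f : V) :
    RadoCondition (fun i => vectorSpan 𝕜 (A i)) (E ⊔ Submodule.span 𝕜 {f}) L := by
  intro I hI
  rcases I.eq_empty_or_nonempty with rfl | hne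
  · simpa using Submodule.finrank_mono le_sup_left
  · have h1 := h.lt_finrank I (hI.trans_ssubset hL) hne
    have h2 : E ⊔ directionSpan 𝕜 A I ≤
        E ⊔ Submodule.span 𝕜 {f} ⊔ ⨆ i ∈ I, vectorSpan 𝕜 (A i) :=
      sup_le_sup_right le_sup_left _
    have h3 := finrank_sup_span_singleton_le E f
    exact (by omega : _ ≤ _).trans (Submodule.finrank_mono h2)

theorem IsIrreducibleMod.not_vectorSpan_le_sup_span_singleton (h : IsIrreducibleMod A T E) {k : ι}
    (hk : {k} ⊂ T) (y : V) : ¬ vectorSpan 𝕜 (A k) ≤ E ⊔ Submodule.span 𝕜 {y} := fun hle => by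
  have h1 := h.lt_finrank {k} hk (Finset.singleton_nonempty k)
  have h2 : E ⊔ directionSpan 𝕜 A {k} ≤ E ⊔ Submodule.span 𝕜 {y} :=
    sup_le le_sup_left (by simpa [directionSpan] using hle)
  have h3 := Submodule.finrank_mono h2
  have h4 := finrank_sup_span_singleton_le E y
  rw [Finset.card_singleton] at h1
  omega

theorem IsIrreducibleMod.exists_mem_inf_ne_zero (h : IsIrreducibleMod A T (⊥ : Submodule 𝕜 V))
    (hJT : J ⊂ T) (hJne : J.Nonempty) (hJ : IsIrreducibleMod A J E) :
    ∃ f ∈ E ⊓ directionSpan 𝕜 A J, f ≠ 0 := by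
  refine Submodule.exists_mem_ne_zero_of_ne_bot fun hbot => ?_
  have h1 := Submodule.finrank_sup_add_finrank_inf_eq E (directionSpan 𝕜 A J)
  rw [hJ.sup_directionSpan, finrank_top, hbot, finrank_bot] at h1
  have := h.card_lt_finrank hJT hJne
  have := hJ.finrank_add_card
  omega

theorem IsIrreducibleMod.lt_finrank_insert [DecidableEq ι] {I : Finset ι} {y : V} {l : ι}
    (h : IsIrreducibleMod A J (E ⊔ Submodule.span 𝕜 {y})) (hI : I ⊂ J) (hl : l ∉ I) (hy : y ∉ E)
    (hyl : y ∈ vectorSpan 𝕜 (A l)) (hAl : ¬ vectorSpan 𝕜 (A l) ≤ E ⊔ Submodule.span 𝕜 {y}) :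
    finrank 𝕜 E + (insert l I).card < finrank 𝕜 ↥(E ⊔ directionSpan 𝕜 A (insert l I)) := by
  have hrank := Submodule.finrank_sup_span_singleton hy
  have hle : E ⊔ Submodule.span 𝕜 {y} ≤ E ⊔ vectorSpan 𝕜 (A l) :=
    sup_le_sup_left ((Submodule.span_singleton_le_iff_mem _ _).2 hyl) _
  rw [Finset.card_insert_of_notMem hl, directionSpan_insert, ← sup_assoc]
  rcases I.eq_empty_or_nonempty with rfl | hne
  · have hlt := Submodule.finrank_lt_finrank_of_lt
      (lt_of_le_of_ne hle fun heq => hAl (heq ▸ le_sup_right))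
    rw [Finset.card_empty, show directionSpan 𝕜 A ∅ = ⊥ by simp [directionSpan], sup_bot_eq]
    omega
  · have h1 := h.lt_finrank I hI hne
    have h2 := Submodule.finrank_mono (sup_le_sup_right hle (directionSpan 𝕜 A I))
    omega

/-- Exchanging `y` for a vector `f` of the old direction space uncontracts the line through
`y`. -/
theorem IsIrreducibleMod.insert_of_sup_le [DecidableEq ι] {y f : V} {l : ι}
    (h : IsIrreducibleMod A J (E ⊔ Submodule.span 𝕜 {y})) (hl : l ∉ J) (hy : y ∉ E)
    (hyl : y ∈ vectorSpan 𝕜 (A l)) (hf : f ∈ directionSpan 𝕜 A J)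
    (hEf : E ⊔ Submodule.span 𝕜 {y} ≤ E ⊔ Submodule.span 𝕜 {f})
    (hAl : ¬ vectorSpan 𝕜 (A l) ≤ E ⊔ Submodule.span 𝕜 {y}) :
    IsIrreducibleMod A (insert l J) E := by
  have hrank := Submodule.finrank_sup_span_singleton hy
  have htop : ∀ I, J ⊆ I → E ⊔ directionSpan 𝕜 A I = ⊤ := fun I hI => by
    rw [eq_top_iff, ← h.sup_directionSpan]
    refine sup_le (hEf.trans (sup_le_sup_left ?_ _)) (le_sup_of_le_right (directionSpan_mono hI))
    exact (Submodule.span_singleton_le_iff_mem _ _).2 (directionSpan_mono hI hf)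
  refine ⟨fun I hI hne => ?_, htop _ (Finset.subset_insert l J), ?_⟩
  · by_cases hlI : l ∈ I
    · rw [← Finset.insert_erase hlI]
      exact h.lt_finrank_insert (by grind) (Finset.notMem_erase l I) hy hyl hAl
    · have hIJ : I ⊆ J := (Finset.subset_insert_iff_of_notMem hlI).1 hI.subset
      rcases hIJ.eq_or_ssubset with rfl | hIJ
      · rw [htop I subset_rfl, finrank_top, ← h.finrank_add_card]
        omega
      · have h1 := h.lt_finrank I hIJ hne
        have h2 := Submodule.finrank_mono (sup_le_sup_right hEf (directionSpan 𝕜 A I))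
        have h3 := finrank_sup_span_singleton_le (E ⊔ directionSpan 𝕜 A I) f
        rw [sup_right_comm E (Submodule.span 𝕜 {f})] at h2
        omega
  · rw [Finset.card_insert_of_notMem hl, ← h.finrank_add_card]
    omega

end FiniteDimensional

end Irreducible

section EdgeTransversal

variable {𝕜 V ι : Type*} [Field 𝕜] [AddCommGroup V] [Module 𝕜 V]

variable (𝕜) in
/-- A linearly independent choice of one difference `e i` of points of `A i` for each `i ∈ K`.
Contracting these differences eliminates the equations with index in `K`. -/
structure IsEdgeTransversal (A : ι → Set V) (K : Finset ι) (e : ι → V) : Prop where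
  mem_sub : ∀ i ∈ K, e i ∈ A i - A i
  indepMod : IndepMod (⊥ : Submodule 𝕜 V) K e

variable {A : ι → Set V} {K L J : Finset ι} {e : ι → V}

theorem IndepMod.exists_coeff_ne_zero {f : V} (h : IndepMod (Submodule.span 𝕜 {f}) L e)
    (hLK : L ⊆ K) {g : ι → 𝕜} (hg : ∑ i ∈ K, g i • e i = f) (hf : f ≠ 0) :
    ∃ l ∈ K, l ∉ L ∧ g l ≠ 0 := by
  by_contra! hcon
  rw [← Finset.sum_subset hLK fun i hi hiL => by rw [hcon i hi hiL, zero_smul]] at hg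
  have hzero := indepMod_iff_sum.1 h g (by rw [hg]; exact Submodule.mem_span_singleton_self f)
  exact hf (by rw [← hg, Finset.sum_eq_zero fun i hi => by rw [hzero i hi, zero_smul]])

variable [DecidableEq ι]

theorem span_image_erase_sup_span_singleton {l : ι} (hl : l ∈ K) :
    Submodule.span 𝕜 (e '' ↑(K.erase l)) ⊔ Submodule.span 𝕜 {e l} =
      Submodule.span 𝕜 (e '' K) := by
  rw [← Submodule.span_union, Set.union_singleton, ← Set.image_insert_eq, ← Finset.coe_insert,
    Finset.insert_erase hl]

theorem IsEdgeTransversal.notMem_span_erase (h : IsEdgeTransversal 𝕜 A K e) {l : ι} (hl : l ∈ K) :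
    e l ∉ Submodule.span 𝕜 (e '' ↑(K.erase l)) := by
  have := h.indepMod
  rw [← Finset.insert_erase hl, indepMod_insert_iff_notMem_sup (Finset.notMem_erase l K),
    bot_sup_eq] at this
  exact this.2

variable [FiniteDimensional 𝕜 V]

omit [DecidableEq ι] in
theorem IsEdgeTransversal.finrank_span (h : IsEdgeTransversal 𝕜 A K e) :
    finrank 𝕜 ↥(Submodule.span 𝕜 (e '' K)) = K.card := by
  have := indepMod_iff_finrank.1 h.indepMod
  rwa [bot_sup_eq, finrank_bot, zero_add] at this

omit [DecidableEq ι] in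
/-- The edges in `L` may be changed freely inside the span of all edges. -/
theorem IsEdgeTransversal.exists_indepMod (h : IsEdgeTransversal 𝕜 A K e) (hLK : L ⊆ K)
    (hL : ∀ i ∈ L, vectorSpan 𝕜 (A i) ≤ Submodule.span 𝕜 (e '' K)) {F : Submodule 𝕜 V}
    {x : ι → V} (hx : ∀ i, x i ∈ vectorSpan 𝕜 (A i)) (hF : IndepMod F L x) :
    ∃ e' : ι → V, IsEdgeTransversal 𝕜 A K e' ∧ IndepMod F L e' ∧
      Submodule.span 𝕜 (e' '' K) = Submodule.span 𝕜 (e '' K) := by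
  classical
  have hdisj : Disjoint (K \ L) L := Finset.sdiff_disjoint
  have hKL : K \ L ∪ L = K := Finset.sdiff_union_of_subset hLK
  have hindep := h.indepMod
  rw [← hKL, indepMod_union_iff hdisj] at hindep
  obtain ⟨u, hu, huE, huF⟩ := exists_edges_indepMod_indepMod A L
    (fun i hi => mem_vectorSpan_of_mem_sub (h.mem_sub i (hLK hi))) (fun i _ => hx i) hindep.2 hF
  let e' : ι → V := fun i => if i ∈ L then u i else e i
  have heu : ∀ i ∈ L, u i = e' i := fun i hi => (if_pos hi).symm
  have hee : ∀ i ∈ K \ L, e i = e' i := fun i hi => (if_neg (Finset.mem_sdiff.1 hi).2).symm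
  have he' : IsEdgeTransversal 𝕜 A K e' := by
    refine ⟨fun i hi => ?_, ?_⟩
    · by_cases hiL : i ∈ L
      · exact heu i hiL ▸ hu i hiL
      · exact hee i (Finset.mem_sdiff.2 ⟨hi, hiL⟩) ▸ h.mem_sub i hi
    · rw [← hKL, indepMod_union_iff hdisj, ← Set.image_congr hee]
      exact ⟨hindep.1.congr hee, huE.congr heu⟩
  refine ⟨e', he', huF.congr heu, Submodule.eq_of_le_of_finrank_eq ?_ ?_⟩
  · rw [Submodule.span_le]
    rintro _ ⟨i, hi, rfl⟩
    by_cases hiL : i ∈ L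
    · exact hL i hiL (mem_vectorSpan_of_mem_sub (he'.mem_sub i hi))
    · rw [← hee i (Finset.mem_sdiff.2 ⟨hi, hiL⟩)]
      exact Submodule.subset_span ⟨i, hi, rfl⟩
  · rw [he'.finrank_span, h.finrank_span]

/-- One contracted edge can be released: take a vector `f` common to the contracted space and to
the directions in `J`, rechoose the edges lying in the contracted space so that they are
independent modulo `f`, and release an edge that occurs in `f`. -/
theorem IsIrreducibleMod.exists_release [Infinite 𝕜] {T : Finset ι}
    (h : IsIrreducibleMod A T (⊥ : Submodule 𝕜 V)) (hJT : J ⊂ T) (hJne : J.Nonempty)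
    (he : IsEdgeTransversal 𝕜 A (T \ J) e)
    (hJ : IsIrreducibleMod A J (Submodule.span 𝕜 (e '' ↑(T \ J)))) :
    ∃ l ∈ T \ J, ∃ e', IsEdgeTransversal 𝕜 A (T \ J) e' ∧
      Submodule.span 𝕜 (e' '' ↑(T \ J)) = Submodule.span 𝕜 (e '' ↑(T \ J)) ∧
      IsIrreducibleMod A (insert l J) (Submodule.span 𝕜 (e' '' ↑((T \ J).erase l))) := by
  classical
  set K := T \ J
  obtain ⟨f, ⟨hfE, hfJ⟩, hf0⟩ := h.exists_mem_inf_ne_zero hJT hJne hJ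
  let L := K.filter fun i => vectorSpan 𝕜 (A i) ≤ Submodule.span 𝕜 (e '' K)
  have hLK : L ⊆ K := Finset.filter_subset _ _
  have hLT : L ⊂ T := (hLK.trans Finset.sdiff_subset).ssubset_of_not_subset fun hTL => by
    obtain ⟨j, hj⟩ := hJne
    exact (Finset.mem_sdiff.1 (hLK (hTL (hJT.subset hj)))).2 hj
  obtain ⟨x, hx, hxf⟩ := by
    simpa only [bot_sup_eq] using (h.radoCondition_sup_span_singleton hLT f).exists_transversal
  obtain ⟨e', he', hef, hspan⟩ := he.exists_indepMod hLK
    (fun i hi => (Finset.mem_filter.1 hi).2) hx hxf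
  obtain ⟨g, hg⟩ : ∃ g : ι → 𝕜, ∑ i ∈ K, g i • e' i = f := by
    rw [← Submodule.mem_span_image_finset_iff_exists_fun', hspan]
    exact hfE
  obtain ⟨l, hl, hlL, hgl⟩ := hef.exists_coeff_ne_zero hLK hg hf0
  have hsup := span_image_erase_sup_span_singleton (𝕜 := 𝕜) (e := e') hl
  refine ⟨l, hl, e', he', hspan, IsIrreducibleMod.insert_of_sup_le (y := e' l) (f := f) ?_
    (Finset.mem_sdiff.1 hl).2 (he'.notMem_span_erase hl)
    (mem_vectorSpan_of_mem_sub (he'.mem_sub l hl)) hfJ ?_ fun hle => hlL ?_⟩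
  · rwa [hsup, hspan]
  · rw [hsup, ← hg]
    exact span_image_le_span_erase_sup_of_coeff_ne_zero hl hgl
  · rw [hsup, hspan] at hle
    exact Finset.mem_filter.2 ⟨hl, hle⟩

end EdgeTransversal

section Hessian

variable {𝕜 V ι : Type*} [Field 𝕜] [AddCommGroup V] [Module 𝕜 V]

/-- The linear relation between first derivatives `∑ cₐ (a - o)` and second derivatives
`∑ cₐ v(a - o)²` in the direction `v` of the exponential sums `∑ cₐ exp a` supported at `s`.
If `v` vanishes on the first derivative, the second one does not depend on `o ∈ s`. -/
def hessianGraph (s : Set V) (o : V) (v : Dual 𝕜 V) : Submodule 𝕜 (V × 𝕜) :=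
  Submodule.span 𝕜 ((fun a => (a - o, v (a - o) ^ 2)) '' s)

/-- The degenerate systems of corank one in the contraction `V ⧸ E` have degenerate Hessian:
whenever `v` spans the annihilator of `E` and of the gradients `x i`, and `l` is a relation between
the gradients modulo `E`, the Hessian of `∑ l i fᵢ` vanishes in the direction `v`. -/
def HessianVanishes (A : ι → Set V) (T : Finset ι) (E : Submodule 𝕜 V) : Prop :=
  ∀ (o x : ι → V) (q l : ι → 𝕜) (v : Dual 𝕜 V),
    (∀ i ∈ T, o i ∈ A i ∧ (x i, q i) ∈ hessianGraph (A i) (o i) v) →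
    LinearMap.ker v = E ⊔ Submodule.span 𝕜 (x '' T) →
    ∑ i ∈ T, l i • x i ∈ E → ∑ i ∈ T, l i * q i = 0

theorem sub_mem_hessianGraph {s : Set V} {a : V} (ha : a ∈ s) (o : V) (v : Dual 𝕜 V) :
    (a - o, v (a - o) ^ 2) ∈ hessianGraph s o v :=
  Submodule.subset_span ⟨a, ha, rfl⟩

theorem exists_mem_hessianGraph {s : Set V} {o x : V} (ho : o ∈ s) (hx : x ∈ vectorSpan 𝕜 s)
    (v : Dual 𝕜 V) : ∃ q, (x, q) ∈ hessianGraph s o v := by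
  have hmap : (hessianGraph s o v).map (LinearMap.fst 𝕜 V 𝕜) = vectorSpan 𝕜 s := by
    rw [hessianGraph, Submodule.map_span, ← Set.image_comp, vectorSpan_eq_span_vsub_set_right 𝕜 ho]
    rfl
  rw [← hmap] at hx
  obtain ⟨⟨_, q⟩, hq, rfl⟩ := hx
  exact ⟨q, hq⟩

variable {A : ι → Set V} {T : Finset ι} {E : Submodule 𝕜 V}

theorem exists_dual_of_forall_sum_mem {x : ι → V} {q : ι → 𝕜}
    (h : ∀ l : ι → 𝕜, ∑ i ∈ T, l i • x i ∈ E → ∑ i ∈ T, l i * q i = 0) :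
    ∃ Φ : Dual 𝕜 V, E ≤ LinearMap.ker Φ ∧ ∀ i ∈ T, Φ (x i) = q i := by
  classical
  let L : (ι → 𝕜) →ₗ[𝕜] V ⧸ E := ∑ i ∈ T, (LinearMap.proj i).smulRight (E.mkQ (x i))
  let ψ : Dual 𝕜 (ι → 𝕜) := ∑ i ∈ T, q i • LinearMap.proj i
  have hψ : ψ ∈ (LinearMap.ker L).dualAnnihilator := by
    rw [Submodule.mem_dualAnnihilator]
    intro l hl
    have hlE : ∑ i ∈ T, l i • x i ∈ E := by
      rw [← Submodule.ker_mkQ E, LinearMap.mem_ker, map_sum]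
      simpa [L] using hl
    simpa [ψ, mul_comm] using h l hlE
  rw [← LinearMap.range_dualMap_eq_dualAnnihilator_ker] at hψ
  obtain ⟨Φ, hΦ⟩ := hψ
  refine ⟨Φ ∘ₗ E.mkQ, fun y hy => ?_, fun i hi => ?_⟩
  · simp [(Submodule.Quotient.mk_eq_zero E).2 hy]
  · simpa [L, ψ, Finset.sum_apply, Pi.single_apply, hi] using
      LinearMap.congr_fun hΦ (Pi.single i 1)

theorem HessianVanishes.exists_dual (h : HessianVanishes A T E) {o x : ι → V} {q : ι → 𝕜}
    {v : Dual 𝕜 V} (hx : ∀ i ∈ T, o i ∈ A i ∧ (x i, q i) ∈ hessianGraph (A i) (o i) v)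
    (hv : LinearMap.ker v = E ⊔ Submodule.span 𝕜 (x '' T)) :
    ∃ Φ : Dual 𝕜 V, E ≤ LinearMap.ker Φ ∧ ∀ i ∈ T, Φ (x i) = q i :=
  exists_dual_of_forall_sum_mem fun l => h o x q l v hx hv

/-- A contracted difference `a - b` has `v (a - b) = 0`, so, with base point `b`, it contributes
nothing to the Hessian. -/
theorem HessianVanishes.contract [DecidableEq ι] (h : HessianVanishes A T (⊥ : Submodule 𝕜 V))
    {J : Finset ι} (hJ : J ⊆ T) {e : ι → V} (he : ∀ i ∈ T \ J, e i ∈ A i - A i) :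
    HessianVanishes A J (Submodule.span 𝕜 (e '' ↑(T \ J))) := by
  intro o x q l v hx hv hl
  choose! a ha b hb hab using he
  obtain ⟨g, hg⟩ := (Submodule.mem_span_image_finset_iff_exists_fun' 𝕜).1 hl
  have hdisj : ∀ i ∈ T \ J, i ∉ J := fun i hi => (Finset.mem_sdiff.1 hi).2
  have key := h (fun i => if i ∈ J then o i else b i) (fun i => if i ∈ J then x i else e i)
    (fun i => if i ∈ J then q i else 0) (fun i => if i ∈ J then l i else - g i) v ?_ ?_ ?_
  · rw [← key, ← Finset.sum_sdiff hJ, Finset.sum_eq_zero (s := T \ J) fun i hi => by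
      simp [hdisj i hi], zero_add]
    exact Finset.sum_congr rfl fun i hi => by simp [hi]
  · intro i hi
    by_cases hiJ : i ∈ J
    · simpa [hiJ] using hx i hiJ
    have hiK : i ∈ T \ J := Finset.mem_sdiff.2 ⟨hi, hiJ⟩
    have hve : v (e i) = 0 := by
      rw [← LinearMap.mem_ker, hv]
      exact Submodule.mem_sup_left (Submodule.subset_span ⟨i, hiK, rfl⟩)
    have := sub_mem_hessianGraph (ha i hiK) (b i) v
    rw [show a i - b i = e i from hab i hiK, hve, zero_pow two_ne_zero] at this
    simpa [hiJ] using ⟨hb i hiK, this⟩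
  · have himg : (fun i => if i ∈ J then x i else e i) '' T = e '' ↑(T \ J) ∪ x '' J := by
      rw [← Finset.sdiff_union_of_subset hJ, Finset.coe_union, Set.image_union,
        Set.image_congr fun i hi => if_neg (hdisj i hi),
        Set.image_congr fun i (hi : i ∈ J) => if_pos hi]
      simp
    rw [hv, bot_sup_eq, himg, Submodule.span_union]
  · have hK : ∑ i ∈ T \ J, (if i ∈ J then l i else -g i) • (if i ∈ J then x i else e i) =
        -∑ i ∈ T \ J, g i • e i := by
      rw [← Finset.sum_neg_distrib]
      exact Finset.sum_congr rfl fun i hi => by simp [hdisj i hi]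
    have hJ' : ∑ i ∈ J, (if i ∈ J then l i else -g i) • (if i ∈ J then x i else e i) =
        ∑ i ∈ J, l i • x i := Finset.sum_congr rfl fun i hi => by simp [hi]
    rw [Submodule.mem_bot, ← Finset.sum_sdiff hJ, hK, hJ', hg, neg_add_cancel]

end Hessian

section BaseStep

variable {𝕜 V ι : Type*} [Field 𝕜] [AddCommGroup V] [Module 𝕜 V]

/-- Coordinates on `V ⧸ E` identifying it with the space of vectors of coordinate sum zero in
`𝕜^β`, in which the sets `A i`, `i ∈ T`, become, up to translation, sets of vertices of the
standard simplex. -/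
structure SimplexLabelling (A : ι → Set V) (T : Finset ι) (E : Submodule 𝕜 V) (β : Type)
    [Fintype β] [DecidableEq β] where
  /-- The coordinates on `V ⧸ E`. -/
  coord : V →ₗ[𝕜] β → 𝕜
  /-- The vertex corresponding to a point of `A i`. -/
  label : ι → V → β
  card_eq : Fintype.card β = T.card + 1
  ker_coord : LinearMap.ker coord = E
  coord_sub : ∀ i ∈ T, ∀ a ∈ A i, ∀ b ∈ A i,
    coord (a - b) = Pi.single (label i a) 1 - Pi.single (label i b) 1

/-- The images of the sets `A i`, `i ∈ T`, in `V ⧸ E` lie, up to translation, in the vertex set of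
one simplex of dimension `|T|`. -/
def IsSimplicialMod (A : ι → Set V) (T : Finset ι) (E : Submodule 𝕜 V) : Prop :=
  ∃ (β : Type) (_ : Fintype β) (_ : DecidableEq β), Nonempty (SimplexLabelling A T E β)

/-- The gradients `v(q - p)(a - p) - v(a - p)(q - p)` vanish on `v`, so their Hessians
`v(q - p) v(a - p) (v(a - p) - v(q - p))` are zero. -/
theorem HessianVanishes.apply_eq_or {A : ι → Set V} {j : ι}
    {v : Dual 𝕜 V} (h : HessianVanishes A {j} (LinearMap.ker v)) {p q a : V} (hp : p ∈ A j)
    (hq : q ∈ A j) (ha : a ∈ A j) (hpq : v (q - p) = 1) : v (a - p) = 0 ∨ v (a - p) = 1 := by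
  have hmem : v (q - p) • (a - p) - v (a - p) • (q - p) ∈ LinearMap.ker v := by
    simp [mul_comm]
  have := h (fun _ => p) (fun _ => v (q - p) • (a - p) - v (a - p) • (q - p))
    (fun _ => v (q - p) * v (a - p) ^ 2 - v (a - p) * v (q - p) ^ 2) (fun _ => 1) v ?_ ?_ ?_
  · rw [Finset.sum_singleton, one_mul, hpq] at this
    rcases mul_eq_zero.1 (show v (a - p) * (v (a - p) - 1) = 0 by linear_combination this)
      with h0 | h1
    · exact Or.inl h0
    · exact Or.inr (sub_eq_zero.1 h1)
  · rintro i hi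
    rw [Finset.mem_singleton.1 hi]
    exact ⟨hp, sub_mem (Submodule.smul_mem _ _ (sub_mem_hessianGraph ha p v))
      (Submodule.smul_mem _ _ (sub_mem_hessianGraph hq p v))⟩
  · simpa using hmem
  · simpa using hmem

theorem isSimplicialMod_singleton {A : ι → Set V} {j : ι} {v : Dual 𝕜 V} {p : V}
    (hv : ∀ a ∈ A j, v (a - p) = 0 ∨ v (a - p) = 1) :
    IsSimplicialMod A {j} (LinearMap.ker v) := by
  classical
  refine ⟨Bool, inferInstance, inferInstance, ⟨{
    coord := LinearMap.pi fun b => cond b v (-v)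
    label := fun _ a => decide (v (a - p) = 1)
    card_eq := rfl
    ker_coord := by
      ext x
      simp [LinearMap.mem_ker, funext_iff]
    coord_sub := ?_ }⟩⟩
  intro i hi a ha b hb
  rw [Finset.mem_singleton.1 hi] at ha hb
  have hab : v (a - b) = v (a - p) - v (b - p) := by rw [← map_sub, sub_sub_sub_cancel_right]
  ext c
  cases c <;> rcases hv a ha with h | h <;> rcases hv b hb with h' | h' <;>
    simp [-map_sub, hab, h, h']

end BaseStep

section Deletion

variable {𝕜 ι β : Type*} [Field 𝕜] [DecidableEq β]

variable (𝕜) in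
/-- The direction space of the face with vertex set `s` of the standard simplex in `𝕜^β`. -/
def faceDirections (s : Set β) : Submodule 𝕜 (β → 𝕜) :=
  vectorSpan 𝕜 ((fun b => (Pi.single b 1 : β → 𝕜)) '' s)

theorem faceDirections_le_iff {s : Set β} {E : Submodule 𝕜 (β → 𝕜)} :
    faceDirections 𝕜 s ≤ E ↔
      ∀ b ∈ s, ∀ c ∈ s, (Pi.single b 1 - Pi.single c 1 : β → 𝕜) ∈ E := by
  simp only [faceDirections, vectorSpan_le_iff, Set.forall_mem_image]

theorem single_sub_single_mem_faceDirections {s : Set β} {b c : β} (hb : b ∈ s) (hc : c ∈ s) :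
    (Pi.single b 1 - Pi.single c 1 : β → 𝕜) ∈ faceDirections 𝕜 s :=
  faceDirections_le_iff.1 le_rfl b hb c hc

variable {S : ι → Set β} {I J : Finset ι}

theorem apply_eq_zero_of_mem_iSup_faceDirections {b : β} (hb : ∀ i ∈ I, b ∉ S i) {x : β → 𝕜}
    (hx : x ∈ ⨆ i ∈ I, faceDirections 𝕜 (S i)) : x b = 0 := by
  have hle : ⨆ i ∈ I, faceDirections 𝕜 (S i) ≤ LinearMap.ker (LinearMap.proj b) := by
    refine iSup₂_le fun i hi => faceDirections_le_iff.2 fun c hc d hd => ?_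
    have hcb : b ≠ c := fun h => hb i hi (h ▸ hc)
    have hdb : b ≠ d := fun h => hb i hi (h ▸ hd)
    simp [hcb, hdb]
  exact hle hx

theorem disjoint_iSup_faceDirections {R : Set β} (hI : ∀ i ∈ I, S i ⊆ R)
    (hJ : ∀ i ∈ J, S i ⊆ Rᶜ) :
    Disjoint (⨆ i ∈ I, faceDirections 𝕜 (S i)) (⨆ i ∈ J, faceDirections 𝕜 (S i)) := by
  refine Submodule.disjoint_def.2 fun x hxI hxJ => funext fun b => ?_
  by_cases hb : b ∈ R
  · exact apply_eq_zero_of_mem_iSup_faceDirections (fun i hi h => hJ i hi h hb) hxJ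
  · exact apply_eq_zero_of_mem_iSup_faceDirections (fun i hi h => hb (hI i hi h)) hxI

theorem faceDirections_le_sup_span_singleton {s : Set β} {m b₀ : β} {G : Submodule 𝕜 (β → 𝕜)}
    (h : ∀ b ∈ s \ {m}, (Pi.single b 1 - Pi.single b₀ 1 : β → 𝕜) ∈ G) :
    faceDirections 𝕜 s ≤ G ⊔ Submodule.span 𝕜 {Pi.single m 1 - Pi.single b₀ 1} := by
  have key : ∀ b ∈ s, (Pi.single b 1 - Pi.single b₀ 1 : β → 𝕜) ∈
      G ⊔ Submodule.span 𝕜 {Pi.single m 1 - Pi.single b₀ 1} := fun b hb => by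
    by_cases hbm : b = m
    · exact hbm ▸ Submodule.mem_sup_right (Submodule.mem_span_singleton_self _)
    · exact Submodule.mem_sup_left (h b ⟨hb, hbm⟩)
  refine faceDirections_le_iff.2 fun b hb c hc => ?_
  simpa using sub_mem (key b hb) (key c hc)

theorem diff_singleton_nonempty_of_faceDirections_ne_bot {s : Set β}
    (h : faceDirections 𝕜 s ≠ ⊥) (m : β) : (s \ {m}).Nonempty := by
  by_contra hs
  have hm : ∀ b ∈ s, b = m := fun b hb => by
    by_contra hbm
    exact hs ⟨b, hb, hbm⟩
  refine h (le_bot_iff.1 (faceDirections_le_iff.2 fun b hb c hc => ?_))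
  rw [hm b hb, hm c hc, sub_self]
  exact zero_mem _

theorem finrank_iSup_faceDirections_le [Finite β] {m b₀ : β} {G : Submodule 𝕜 (β → 𝕜)}
    (h : ∀ i ∈ I, ∀ b ∈ S i \ {m}, (Pi.single b 1 - Pi.single b₀ 1 : β → 𝕜) ∈ G) :
    finrank 𝕜 ↥(⨆ i ∈ I, faceDirections 𝕜 (S i)) ≤ finrank 𝕜 G + 1 :=
  (Submodule.finrank_mono <| iSup₂_le fun i hi =>
    faceDirections_le_sup_span_singleton (h i hi)).trans (finrank_sup_span_singleton_le G _)

theorem finrank_iSup_faceDirections_union [Finite β] [DecidableEq ι] {R : Set β}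
    (hI : ∀ i ∈ I, S i ⊆ R) (hJ : ∀ i ∈ J, S i ⊆ Rᶜ) :
    finrank 𝕜 ↥(⨆ i ∈ I ∪ J, faceDirections 𝕜 (S i)) =
      finrank 𝕜 ↥(⨆ i ∈ I, faceDirections 𝕜 (S i)) +
        finrank 𝕜 ↥(⨆ i ∈ J, faceDirections 𝕜 (S i)) := by
  have h := Submodule.finrank_sup_add_finrank_inf_eq
    (⨆ i ∈ I, faceDirections 𝕜 (S i)) (⨆ i ∈ J, faceDirections 𝕜 (S i))
  rwa [(disjoint_iSup_faceDirections hI hJ).eq_bot, finrank_bot, add_zero,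
    ← Finset.iSup_union] at h

/-- Two vertices are joined if their difference lies in the span of the shrunken faces. If all
vertices off `m` are joined, at most one dimension is lost; otherwise the tuple splits into two
subtuples with disjoint spans and the bound follows by induction. -/
theorem card_le_finrank_iSup_faceDirections_diff [Finite β] (m : β)
    (hI : ∀ J ⊆ I, J.Nonempty → J.card < finrank 𝕜 ↥(⨆ i ∈ J, faceDirections 𝕜 (S i))) :
    I.card ≤ finrank 𝕜 ↥(⨆ i ∈ I, faceDirections 𝕜 (S i \ {m})) := by
  classical
  induction I using Finset.strongInduction with
  | H I ih =>
  rcases I.eq_empty_or_nonempty with rfl | ⟨i₀, hi₀⟩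
  · simp
  obtain ⟨b₀, hb₀⟩ : (S i₀ \ {m}).Nonempty := by
    refine diff_singleton_nonempty_of_faceDirections_ne_bot (𝕜 := 𝕜) (fun h => ?_) m
    have := hI {i₀} (by simpa using hi₀) (by simp)
    rw [Finset.card_singleton, Finset.iSup_singleton, h, finrank_bot] at this
    omega
  set G := ⨆ i ∈ I, faceDirections 𝕜 (S i \ {m}) with hG
  let R : Set β := {b | (Pi.single b 1 - Pi.single b₀ 1 : β → 𝕜) ∈ G}
  have hjoined : ∀ i ∈ I, ∀ b ∈ S i \ {m}, b ∈ R → S i \ {m} ⊆ R := fun i hi b hb hbR c hc => by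
    have := le_biSup (fun i => faceDirections 𝕜 (S i \ {m})) hi
      (single_sub_single_mem_faceDirections hc hb)
    simpa [R] using G.add_mem this hbR
  set I₁ := I.filter fun i => S i \ {m} ⊆ R
  set I₂ := I.filter fun i => ¬ S i \ {m} ⊆ R
  have hI₁₂ : I₁ ∪ I₂ = I := Finset.filter_union_filter_not_eq _ _
  rcases I₂.eq_empty_or_nonempty with hI₂ | ⟨i₂, hi₂⟩
  · have hall : ∀ i ∈ I, S i \ {m} ⊆ R := by
      simpa only [I₂, Finset.filter_eq_empty_iff, not_not] using hI₂
    have hlt := hI I subset_rfl ⟨i₀, hi₀⟩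
    have hle := finrank_iSup_faceDirections_le (G := G) hall
    omega
  · have hi₀₁ : i₀ ∈ I₁ := Finset.mem_filter.2 ⟨hi₀, hjoined i₀ hi₀ b₀ hb₀ (by simp [R])⟩
    have hI₂R : ∀ i ∈ I₂, S i \ {m} ⊆ Rᶜ := fun i hi b hb hbR =>
      (Finset.mem_filter.1 hi).2 (hjoined i (Finset.mem_filter.1 hi).1 b hb hbR)
    have hI₁ : I₁ ⊂ I := Finset.filter_ssubset.2
      ⟨i₂, (Finset.mem_filter.1 hi₂).1, (Finset.mem_filter.1 hi₂).2⟩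
    have hI₂ : I₂ ⊂ I := Finset.filter_ssubset.2
      ⟨i₀, hi₀, not_not.2 (Finset.mem_filter.1 hi₀₁).2⟩
    have h1 := ih I₁ hI₁ fun J hJ => hI J (hJ.trans hI₁.subset)
    have h2 := ih I₂ hI₂ fun J hJ => hI J (hJ.trans hI₂.subset)
    have hsum := finrank_iSup_faceDirections_union (𝕜 := 𝕜) (S := fun i => S i \ {m}) (I := I₁)
      (fun i hi => (Finset.mem_filter.1 hi).2) hI₂R
    have hcard := Finset.card_union_le I₁ I₂
    rw [hI₁₂, ← hG] at hsum
    rw [hI₁₂] at hcard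
    omega

end Deletion

section LabelledTuple

variable {𝕜 V ι : Type*} [Field 𝕜] [AddCommGroup V] [Module 𝕜 V] {A : ι → Set V} {T : Finset ι}
  {E : Submodule 𝕜 V} {β : Type} [Fintype β] [DecidableEq β]

theorem finrank_ker_sup [FiniteDimensional 𝕜 V] {W : Type*} [AddCommGroup W] [Module 𝕜 W]
    (ρ : V →ₗ[𝕜] W) (F : Submodule 𝕜 V) :
    finrank 𝕜 ↥(LinearMap.ker ρ ⊔ F) = finrank 𝕜 (LinearMap.ker ρ) + finrank 𝕜 (F.map ρ) := by
  have h := LinearMap.finrank_range_add_finrank_ker (ρ.domRestrict (LinearMap.ker ρ ⊔ F))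
  rw [LinearMap.range_domRestrict, Submodule.map_sup, (Submodule.map_le_iff_le_comap.2 le_rfl :
    (LinearMap.ker ρ).map ρ ≤ ⊥).antisymm bot_le, bot_sup_eq, LinearMap.ker_domRestrict,
    (Submodule.comapSubtypeEquivOfLe le_sup_left).finrank_eq] at h
  omega

theorem SimplexLabelling.map_vectorSpan (L : SimplexLabelling A T E β) {i : ι} (hi : i ∈ T)
    {s : Set V} (hs : s ⊆ A i) :
    (vectorSpan 𝕜 s).map L.coord = faceDirections 𝕜 (L.label i '' s) := by
  refine le_antisymm (Submodule.map_le_iff_le_comap.2 (vectorSpan_le_iff.2 fun a ha b hb => ?_))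
    (faceDirections_le_iff.2 ?_)
  · rw [Submodule.mem_comap, L.coord_sub i hi a (hs ha) b (hs hb)]
    exact single_sub_single_mem_faceDirections ⟨a, ha, rfl⟩ ⟨b, hb, rfl⟩
  · rintro _ ⟨a, ha, rfl⟩ _ ⟨b, hb, rfl⟩
    exact ⟨a - b, vsub_mem_vectorSpan 𝕜 ha hb, L.coord_sub i hi a (hs ha) b (hs hb)⟩

theorem SimplexLabelling.map_iSup_vectorSpan (L : SimplexLabelling A T E β) {S : ι → Set V}
    (hS : ∀ i, S i ⊆ A i) {I : Finset ι} (hI : I ⊆ T) :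
    (⨆ i ∈ I, vectorSpan 𝕜 (S i)).map L.coord = ⨆ i ∈ I, faceDirections 𝕜 (L.label i '' S i) := by
  simp only [Submodule.map_iSup]
  exact biSup_congr fun i hi => L.map_vectorSpan (hI hi) (hS i)

theorem SimplexLabelling.finrank_sup [FiniteDimensional 𝕜 V] (L : SimplexLabelling A T E β)
    (F : Submodule 𝕜 V) :
    finrank 𝕜 ↥(E ⊔ F) = finrank 𝕜 E + finrank 𝕜 (F.map L.coord) := by
  have h := finrank_ker_sup L.coord F
  rwa [L.ker_coord] at h

theorem SimplexLabelling.sum_coord_eq_zero (L : SimplexLabelling A T E β) {x : V}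
    (hx : x ∈ E ⊔ directionSpan 𝕜 A T) : ∑ b, L.coord x b = 0 := by
  have hle : E ⊔ directionSpan 𝕜 A T ≤
      LinearMap.ker ((∑ b, LinearMap.proj b : (β → 𝕜) →ₗ[𝕜] 𝕜) ∘ₗ L.coord) := by
    refine sup_le (L.ker_coord.ge.trans (LinearMap.ker_le_ker_comp _ _)) ?_
    refine directionSpan_le_iff.2 fun i hi => vectorSpan_le_iff.2 fun a ha b hb => ?_
    simp [L.coord_sub i hi a ha b hb]
  simpa using hle hx

/-- The points of `A i` not mapped to the vertex `m`. -/
def SimplexLabelling.avoiding (L : SimplexLabelling A T E β) (m : β) (i : ι) : Set V :=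
  {a ∈ A i | L.label i a ≠ m}

theorem SimplexLabelling.avoiding_subset (L : SimplexLabelling A T E β) (m : β) (i : ι) :
    L.avoiding m i ⊆ A i :=
  Set.sep_subset _ _

theorem SimplexLabelling.radoCondition_avoiding [FiniteDimensional 𝕜 V]
    (L : SimplexLabelling A T E β) (hA : IsIrreducibleMod A T E) (m : β) {K : Finset ι}
    (hK : K ⊂ T) : RadoCondition (fun i => vectorSpan 𝕜 (L.avoiding m i)) E K := by
  intro I hI
  have himage : ∀ i, L.label i '' L.avoiding m i = L.label i '' A i \ {m} := fun i => by
    ext b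
    simp only [SimplexLabelling.avoiding, Set.mem_image, Set.mem_sep_iff, Set.mem_sdiff,
      Set.mem_singleton_iff]
    grind
  have hcard := card_le_finrank_iSup_faceDirections_diff (𝕜 := 𝕜) (S := fun i => L.label i '' A i)
    (I := I) m fun J hJ hne => ?_
  · beta_reduce
    rw [L.finrank_sup, L.map_iSup_vectorSpan (L.avoiding_subset m) (hI.trans hK.subset)]
    rw [biSup_congr fun i _ => congrArg (faceDirections 𝕜) (himage i)]
    exact Nat.add_le_add_left hcard _
  · have h := hA.lt_finrank J ((hJ.trans hI).trans_ssubset hK) hne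
    rw [L.finrank_sup, directionSpan, L.map_iSup_vectorSpan (fun i => subset_rfl)
      ((hJ.trans hI).trans hK.subset)] at h
    exact Nat.lt_of_add_lt_add_left h

end LabelledTuple

section Hyperplanes

variable {𝕜 V ι : Type*} [Field 𝕜] [AddCommGroup V] [Module 𝕜 V]

theorem mem_hessianGraph_of_apply_eq_mul {s s' : Set V} (hs : s ⊆ s') {o : V} {v w : Dual 𝕜 V}
    {t : 𝕜} (h : ∀ a ∈ s, v (a - o) = t * w (a - o)) {x : V} {q : 𝕜}
    (hx : (x, q) ∈ hessianGraph s o w) : (x, t ^ 2 * q) ∈ hessianGraph s' o v := by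
  have hle : hessianGraph s o w ≤
      (hessianGraph s' o v).comap (LinearMap.id.prodMap (t ^ 2 • LinearMap.id)) := by
    refine Submodule.span_le.2 ?_
    rintro _ ⟨a, ha, rfl⟩
    have := sub_mem_hessianGraph (hs ha) o v
    rw [h a ha, mul_pow] at this
    exact this
  exact hle hx

theorem mem_hessianGraph_of_vectorSpan_le_ker {s : Set V} {o x : V} {v : Dual 𝕜 V} (ho : o ∈ s)
    (hv : vectorSpan 𝕜 s ≤ LinearMap.ker v) (hx : x ∈ vectorSpan 𝕜 s) :
    (x, 0) ∈ hessianGraph s o v := by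
  obtain ⟨q, hq⟩ := exists_mem_hessianGraph ho hx v
  simpa using mem_hessianGraph_of_apply_eq_mul (t := 0) (w := v) subset_rfl
    (fun a ha => by rw [zero_mul]; exact hv (vsub_mem_vectorSpan 𝕜 ha ho)) hq

theorem sub_add_smul_sub_mem_hessianGraph {s : Set V} {a b : V} (ha : a ∈ s) (hb : b ∈ s) (o : V)
    (v : Dual 𝕜 V) (t : 𝕜) :
    (a - o + t • (b - o), v (a - o) ^ 2 + t * v (b - o) ^ 2) ∈ hessianGraph s o v :=
  add_mem (sub_mem_hessianGraph ha o v) (Submodule.smul_mem _ t (sub_mem_hessianGraph hb o v))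

theorem smul_sub_smul_mem_hessianGraph {s : Set V} {o p x : V} {q : 𝕜} {v : Dual 𝕜 V}
    (hx : (x, q) ∈ hessianGraph s o v) (hp : p ∈ s) :
    (v (p - o) • x - v x • (p - o), v (p - o) * q - v x * v (p - o) ^ 2) ∈ hessianGraph s o v :=
  sub_mem (Submodule.smul_mem _ _ hx) (Submodule.smul_mem _ _ (sub_mem_hessianGraph hp o v))

theorem HessianVanishes.exists_dual_insert [DecidableEq ι] {A : ι → Set V}
    {E : Submodule 𝕜 V} {j : ι} {K : Finset ι} (h : HessianVanishes A (insert j K) E)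
    (hj : j ∉ K) {o x : ι → V} {q : ι → 𝕜} {v : Dual 𝕜 V} {oj xj : V} {qj : 𝕜}
    (hx : ∀ i ∈ K, o i ∈ A i ∧ (x i, q i) ∈ hessianGraph (A i) (o i) v)
    (hxj : oj ∈ A j ∧ (xj, qj) ∈ hessianGraph (A j) oj v)
    (hv : LinearMap.ker v = E ⊔ Submodule.span 𝕜 (x '' K) ⊔ Submodule.span 𝕜 {xj}) :
    ∃ Φ : Dual 𝕜 V, E ≤ LinearMap.ker Φ ∧ (∀ i ∈ K, Φ (x i) = q i) ∧ Φ xj = qj := by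
  have hne : ∀ i ∈ K, i ≠ j := fun i hi => ne_of_mem_of_not_mem hi hj
  have hΦ := h.exists_dual (o := Function.update o j oj) (x := Function.update x j xj)
    (q := Function.update q j qj) (v := v) ?_ ?_
  · obtain ⟨Φ, hΦE, hΦ⟩ := hΦ
    refine ⟨Φ, hΦE, fun i hi => ?_, ?_⟩
    · simpa [hne i hi] using hΦ i (by simp [hi])
    · simpa using hΦ j (by simp)
  · intro i hi
    rcases Finset.mem_insert.1 hi with rfl | hi
    · simpa using hxj
    · simpa [hne i hi] using hx i hi
  · rw [hv, Finset.coe_insert, Set.image_insert_eq, Function.update_self,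
      Set.image_congr fun i (hi : i ∈ K) => Function.update_of_ne (hne i hi) xj x,
      Submodule.span_insert, sup_assoc, sup_comm (Submodule.span 𝕜 (x '' _))]

theorem HessianVanishes.exists_dual_insert_insert [DecidableEq ι] {A : ι → Set V}
    {E : Submodule 𝕜 V} {j k : ι} {K : Finset ι}
    (h : HessianVanishes A (insert j (insert k K)) E) (hj : j ∉ insert k K) (hk : k ∉ K)
    {o x : ι → V} {q : ι → 𝕜} {v : Dual 𝕜 V} {oj xj ok xk : V} {qj qk : 𝕜}
    (hx : ∀ i ∈ K, o i ∈ A i ∧ (x i, q i) ∈ hessianGraph (A i) (o i) v)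
    (hxj : oj ∈ A j ∧ (xj, qj) ∈ hessianGraph (A j) oj v)
    (hxk : ok ∈ A k ∧ (xk, qk) ∈ hessianGraph (A k) ok v)
    (hv : LinearMap.ker v = E ⊔ Submodule.span 𝕜 (x '' K) ⊔ Submodule.span 𝕜 {xj, xk}) :
    ∃ Φ : Dual 𝕜 V, E ≤ LinearMap.ker Φ ∧ (∀ i ∈ K, Φ (x i) = q i) ∧ Φ xj = qj ∧ Φ xk = qk := by
  have hjk : j ≠ k := fun h => hj (h ▸ Finset.mem_insert_self j K)
  have hne : ∀ i ∈ K, i ≠ k := fun i hi => ne_of_mem_of_not_mem hi hk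
  have hΦ := h.exists_dual_insert hj (o := Function.update o k ok) (x := Function.update x k xk)
    (q := Function.update q k qk) (v := v) ?_ hxj ?_
  · obtain ⟨Φ, hΦE, hΦ, hΦj⟩ := hΦ
    refine ⟨Φ, hΦE, fun i hi => ?_, hΦj, ?_⟩
    · simpa [hne i hi] using hΦ i (by simp [hi])
    · simpa using hΦ k (by simp)
  · intro i hi
    rcases Finset.mem_insert.1 hi with rfl | hi
    · simpa using hxk
    · simpa [hne i hi] using hx i hi
  · rw [hv, Finset.coe_insert, Set.image_insert_eq, Function.update_self,
      Set.image_congr fun i (hi : i ∈ K) => Function.update_of_ne (hne i hi) xk x,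
      Submodule.span_insert, Submodule.span_insert]
    simp only [sup_assoc, sup_comm, sup_left_comm]

theorem exists_dual_apply_eq_one {Y : Submodule 𝕜 V} {e : V} (he : e ∉ Y) :
    ∃ h : Dual 𝕜 V, Y ≤ LinearMap.ker h ∧ h e = 1 := by
  obtain ⟨h, he, hY⟩ := Submodule.exists_le_ker_of_notMem he
  exact ⟨(h e)⁻¹ • h, fun y hy => by simp [LinearMap.mem_ker.1 (hY hy)], by simp [he]⟩

theorem sup_span_pair_of_mem {F : Submodule 𝕜 V} {x y : V} (h : y ∈ F ⊔ Submodule.span 𝕜 {x}) :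
    F ⊔ Submodule.span 𝕜 {x, y} = F ⊔ Submodule.span 𝕜 {x} := by
  rw [Submodule.span_insert, ← sup_assoc, sup_eq_left]
  exact (Submodule.span_singleton_le_iff_mem _ _).2 h

theorem IndepMod.exists_dual {E : Submodule 𝕜 V} {K : Finset ι} {x : ι → V}
    (h : IndepMod E K x) (q : ι → 𝕜) :
    ∃ Φ : Dual 𝕜 V, E ≤ LinearMap.ker Φ ∧ ∀ i ∈ K, Φ (x i) = q i :=
  exists_dual_of_forall_sum_mem fun l hl =>
    Finset.sum_eq_zero fun i hi => by rw [indepMod_iff_sum.1 h l hl i hi, zero_mul]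

theorem ker_smul_sub_smul_eq_sup_span_singleton {Y : Submodule 𝕜 V} {r h : Dual 𝕜 V}
    (hr : Y ≤ LinearMap.ker r) (hh : Y ≤ LinearMap.ker h)
    (hY : ∀ z, r z = 0 → h z = 0 → z ∈ Y) {w : V} (hw : r w ≠ 0) :
    LinearMap.ker (h w • r - r w • h) = Y ⊔ Submodule.span 𝕜 {w} := by
  refine le_antisymm (fun z hz => mem_sup_span_singleton.2 ⟨r z / r w, hY _ ?_ ?_⟩)
    (sup_le (fun y hy => ?_) ((Submodule.span_singleton_le_iff_mem _ _).2 ?_))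
  · simp [hw]
  · have hz' : h w * r z - r w * h z = 0 := by simpa using hz
    rw [map_sub, map_smul, smul_eq_mul, div_mul_eq_mul_div, sub_eq_zero, eq_div_iff hw]
    linear_combination -hz'
  · simp [LinearMap.mem_ker.1 (hr hy), LinearMap.mem_ker.1 (hh hy)]
  · simp [mul_comm]

variable [FiniteDimensional 𝕜 V]

theorem ker_eq_sup_span_singleton {Y : Submodule 𝕜 V} {v : Dual 𝕜 V} {y : V}
    (hY : Y ≤ LinearMap.ker v) (hrank : finrank 𝕜 Y + 2 = finrank 𝕜 V) (hv : v ≠ 0)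
    (hy : v y = 0) (hyY : y ∉ Y) : LinearMap.ker v = Y ⊔ Submodule.span 𝕜 {y} := by
  refine (Submodule.eq_of_le_of_finrank_eq
    (sup_le hY ((Submodule.span_singleton_le_iff_mem _ _).2 hy)) ?_).symm
  have := Dual.finrank_ker_add_one_of_ne_zero hv
  rw [Submodule.finrank_sup_span_singleton hyY]
  omega

theorem IndepMod.notMem_sup_span {E : Submodule 𝕜 V} {K : Finset ι} {x : ι → V} {e : V}
    (he : e ∉ E) (h : IndepMod (E ⊔ Submodule.span 𝕜 {e}) K x) :
    e ∉ E ⊔ Submodule.span 𝕜 (x '' K) := fun hmem => by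
  have hrank := indepMod_iff_finrank.1 h
  rw [sup_right_comm, sup_eq_left.2 ((Submodule.span_singleton_le_iff_mem _ _).2 hmem),
    Submodule.finrank_sup_span_singleton he] at hrank
  have := finrank_sup_span_image_le E K x
  omega

end Hyperplanes

section CoordAt

variable {𝕜 V ι : Type*} [Field 𝕜] [AddCommGroup V] [Module 𝕜 V] {A : ι → Set V} {T : Finset ι}
  {E : Submodule 𝕜 V} {β : Type} [Fintype β] [DecidableEq β]

/-- The barycentric coordinate at the vertex `m`. -/
def SimplexLabelling.coordAt (L : SimplexLabelling A T E β) (m : β) : Dual 𝕜 V :=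
  LinearMap.proj m ∘ₗ L.coord

theorem SimplexLabelling.coordAt_sub (L : SimplexLabelling A T E β) {i : ι} (hi : i ∈ T) {a b : V}
    (ha : a ∈ A i) (hb : b ∈ A i) (m : β) : L.coordAt m (a - b) =
      (if L.label i a = m then 1 else 0) - (if L.label i b = m then 1 else 0) := by
  simp [SimplexLabelling.coordAt, L.coord_sub i hi a ha b hb, Pi.single_apply, eq_comm]

theorem SimplexLabelling.le_ker_coordAt (L : SimplexLabelling A T E β) (m : β) :
    E ≤ LinearMap.ker (L.coordAt m) :=
  L.ker_coord.ge.trans (LinearMap.ker_le_ker_comp _ _)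

theorem SimplexLabelling.vectorSpan_avoiding_le_ker (L : SimplexLabelling A T E β) {i : ι}
    (hi : i ∈ T) (m : β) : vectorSpan 𝕜 (L.avoiding m i) ≤ LinearMap.ker (L.coordAt m) :=
  vectorSpan_le_iff.2 fun a ha b hb => by
    rw [LinearMap.mem_ker, L.coordAt_sub hi ha.1 hb.1, if_neg ha.2, if_neg hb.2, sub_zero]

theorem SimplexLabelling.coordAt_sub_eq_one (L : SimplexLabelling A T E β) {i : ι} (hi : i ∈ T)
    {m : β} {p b : V} (hp : p ∈ A i) (hpm : L.label i p = m) (hb : b ∈ L.avoiding m i) :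
    L.coordAt m (p - b) = 1 := by
  rw [L.coordAt_sub hi hp hb.1, if_pos hpm, if_neg hb.2, sub_zero]

end CoordAt

/-- A tuple `A i`, `i ∈ insert j T`, satisfying the Hessian condition modulo `E`, whose part
`A i`, `i ∈ T`, is known to be simplicial modulo `E` and the edge `a₁ - a₀` of `A j`. The point `c`
of `A j` is distinguished by its coordinate at `m` being neither `0` nor `1`. -/
structure ExtensionStep {𝕜 V ι : Type*} [Field 𝕜] [AddCommGroup V] [Module 𝕜 V] [DecidableEq ι]
    (A : ι → Set V) (T : Finset ι) (j : ι) (E : Submodule 𝕜 V) (β : Type) [Fintype β]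
    [DecidableEq β] where
  /-- The base point of `A j`. -/
  a₀ : V
  /-- The other end of the contracted edge. -/
  a₁ : V
  /-- The distinguished point of `A j`. -/
  c : V
  /-- The distinguished vertex. -/
  m : β
  /-- The simplicial structure modulo the edge. -/
  labelling : SimplexLabelling A T (E ⊔ Submodule.span 𝕜 {a₁ - a₀}) β
  notMem : j ∉ T
  a₀_mem : a₀ ∈ A j
  a₁_mem : a₁ ∈ A j
  c_mem : c ∈ A j
  edge_notMem : a₁ - a₀ ∉ E
  irreducible_contract : IsIrreducibleMod A T (E ⊔ Submodule.span 𝕜 {a₁ - a₀})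
  irreducible : IsIrreducibleMod A (insert j T) E
  hessianVanishes : HessianVanishes A (insert j T) E
  coordAt_ne_zero : labelling.coordAt m (c - a₀) ≠ 0
  coordAt_ne_one : labelling.coordAt m (c - a₀) ≠ 1

namespace ExtensionStep

variable {𝕜 V ι : Type*} [Field 𝕜] [AddCommGroup V] [Module 𝕜 V] [DecidableEq ι]
  {A : ι → Set V} {T : Finset ι} {j : ι} {E : Submodule 𝕜 V} {β : Type} [Fintype β]
  [DecidableEq β] (X : ExtensionStep A T j E β)

/-- The contracted edge. -/
def edge : V := X.a₁ - X.a₀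

/-- The barycentric coordinate at the distinguished vertex. -/
abbrev r : Dual 𝕜 V := X.labelling.coordAt X.m

/-- The points of `A i` off the distinguished vertex. -/
abbrev off (i : ι) : Set V := X.labelling.avoiding X.m i

theorem r_edge : X.r X.edge = 0 :=
  X.labelling.le_ker_coordAt X.m (Submodule.mem_sup_right (Submodule.mem_span_singleton_self _))

theorem sup_span_le_ker_r {K : Finset ι} (hK : K ⊆ T) {x : ι → V}
    (hx : ∀ i ∈ K, x i ∈ vectorSpan 𝕜 (X.off i)) :
    E ⊔ Submodule.span 𝕜 (x '' K) ≤ LinearMap.ker X.r := by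
  refine sup_le (le_sup_left.trans (X.labelling.le_ker_coordAt X.m)) (Submodule.span_le.2 ?_)
  rintro _ ⟨i, hi, rfl⟩
  exact X.labelling.vectorSpan_avoiding_le_ker (hK hi) X.m (hx i hi)

theorem r_ne_zero : X.r ≠ 0 := fun h => X.coordAt_ne_zero (LinearMap.congr_fun h _)

variable {X} [FiniteDimensional 𝕜 V] {k : ι} {x : ι → V}

theorem finrank_sup_span_erase_add_two (hk : k ∈ T)
    (hE' : IndepMod (E ⊔ Submodule.span 𝕜 {X.edge}) (T.erase k) x) :
    finrank 𝕜 ↥(E ⊔ Submodule.span 𝕜 (x '' (T.erase k))) + 2 = finrank 𝕜 V := by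
  rw [indepMod_iff_finrank.1 (hE'.anti le_sup_left), ← X.irreducible.finrank_add_card,
    Finset.card_insert_of_notMem X.notMem, ← Finset.card_erase_add_one hk]
  ring

theorem ker_r_eq (hk : k ∈ T) (hx : ∀ i ∈ T, x i ∈ vectorSpan 𝕜 (X.off i))
    (hE' : IndepMod (E ⊔ Submodule.span 𝕜 {X.edge}) (T.erase k) x) :
    LinearMap.ker X.r =
      E ⊔ Submodule.span 𝕜 (x '' (T.erase k)) ⊔ Submodule.span 𝕜 {X.edge} :=
  ker_eq_sup_span_singleton
    (X.sup_span_le_ker_r (T.erase_subset k) fun i hi => hx i (Finset.mem_of_mem_erase hi))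
    (finrank_sup_span_erase_add_two hk hE') X.r_ne_zero X.r_edge
    (hE'.notMem_sup_span X.edge_notMem)

theorem mem_of_r_eq_zero (hk : k ∈ T) (hx : ∀ i ∈ T, x i ∈ vectorSpan 𝕜 (X.off i))
    (hE' : IndepMod (E ⊔ Submodule.span 𝕜 {X.edge}) (T.erase k) x) {h : Dual 𝕜 V}
    (hY : E ⊔ Submodule.span 𝕜 (x '' (T.erase k)) ≤ LinearMap.ker h) (he : h X.edge = 1) {z : V}
    (hrz : X.r z = 0) (hhz : h z = 0) : z ∈ E ⊔ Submodule.span 𝕜 (x '' (T.erase k)) := by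
  rw [← LinearMap.mem_ker, ker_r_eq hk hx hE', mem_sup_span_singleton] at hrz
  obtain ⟨t, ht⟩ := hrz
  have ht0 : t = 0 := by simpa [hhz, he] using hY ht
  simpa [ht0] using ht

theorem ker_smul_sub_smul_eq (hk : k ∈ T) (hx : ∀ i ∈ T, x i ∈ vectorSpan 𝕜 (X.off i))
    (hE' : IndepMod (E ⊔ Submodule.span 𝕜 {X.edge}) (T.erase k) x) {h : Dual 𝕜 V}
    (hY : E ⊔ Submodule.span 𝕜 (x '' (T.erase k)) ≤ LinearMap.ker h) (he : h X.edge = 1) {w : V}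
    (hw : X.r w ≠ 0) : LinearMap.ker (h w • X.r - X.r w • h) =
      E ⊔ Submodule.span 𝕜 (x '' (T.erase k)) ⊔ Submodule.span 𝕜 {w} :=
  ker_smul_sub_smul_eq_sup_span_singleton
    (X.sup_span_le_ker_r (T.erase_subset k) fun i hi => hx i (Finset.mem_of_mem_erase hi)) hY
    (fun _ => mem_of_r_eq_zero hk hx hE' hY he) hw

omit [FiniteDimensional 𝕜 V] in
theorem mem_hessianGraph_smul_sub_smul {h : Dual 𝕜 V} (w : V) {i : ι} (hi : i ∈ T) {o y : V}
    {q : 𝕜} (ho : o ∈ X.off i) (hy : (y, q) ∈ hessianGraph (X.off i) o h) :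
    (y, X.r w ^ 2 * q) ∈ hessianGraph (A i) o (h w • X.r - X.r w • h) := by
  rw [← neg_sq (X.r w)]
  refine mem_hessianGraph_of_apply_eq_mul (X.labelling.avoiding_subset X.m i) (fun a ha => ?_) hy
  have hr : X.r (a - o) = 0 :=
    X.labelling.vectorSpan_avoiding_le_ker hi X.m (vsub_mem_vectorSpan 𝕜 ha ho)
  rw [LinearMap.sub_apply, LinearMap.smul_apply, LinearMap.smul_apply, hr, smul_zero, zero_sub,
    smul_eq_mul, neg_mul]

theorem exists_dual_pencil (hk : k ∈ T) (hx : ∀ i ∈ T, x i ∈ vectorSpan 𝕜 (X.off i))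
    (hE' : IndepMod (E ⊔ Submodule.span 𝕜 {X.edge}) (T.erase k) x) {h : Dual 𝕜 V}
    (hY : E ⊔ Submodule.span 𝕜 (x '' (T.erase k)) ≤ LinearMap.ker h) (he : h X.edge = 1)
    {o : ι → V} {C : ι → 𝕜}
    (ho : ∀ i ∈ T, o i ∈ X.off i ∧ (x i, C i) ∈ hessianGraph (X.off i) (o i) h) {Φ₀ : Dual 𝕜 V}
    (hΦ₀E : E ≤ LinearMap.ker Φ₀) (hΦ₀ : ∀ i ∈ T.erase k, Φ₀ (x i) = C i) {w xj xk : V}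
    {qj qk : 𝕜} (hw : X.r w ≠ 0)
    (hxj : (xj, qj) ∈ hessianGraph (A j) X.a₀ (h w • X.r - X.r w • h))
    (hxk : (xk, qk) ∈ hessianGraph (A k) (o k) (h w • X.r - X.r w • h))
    (hspan : E ⊔ Submodule.span 𝕜 (x '' (T.erase k)) ⊔ Submodule.span 𝕜 {xj, xk} =
      E ⊔ Submodule.span 𝕜 (x '' (T.erase k)) ⊔ Submodule.span 𝕜 {w}) :
    ∃ Φ : Dual 𝕜 V, (∀ z ∈ E ⊔ Submodule.span 𝕜 (x '' (T.erase k)), Φ z = X.r w ^ 2 * Φ₀ z) ∧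
      Φ xj = qj ∧ Φ xk = qk := by
  have hX := X.hessianVanishes
  rw [← Finset.insert_erase hk] at hX
  obtain ⟨Φ, hΦE, hΦx, hΦj, hΦk⟩ := hX.exists_dual_insert_insert (q := fun i => X.r w ^ 2 * C i)
    (by rw [Finset.insert_erase hk]; exact X.notMem) (T.notMem_erase k)
    (fun i hi => have hiT := Finset.mem_of_mem_erase hi
      ⟨(ho i hiT).1.1, mem_hessianGraph_smul_sub_smul w hiT (ho i hiT).1 (ho i hiT).2⟩)
    ⟨X.a₀_mem, hxj⟩ ⟨(ho k hk).1.1, hxk⟩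
    ((ker_smul_sub_smul_eq hk hx hE' hY he hw).trans hspan.symm)
  have hle : E ⊔ Submodule.span 𝕜 (x '' (T.erase k)) ≤
      LinearMap.ker (Φ - X.r w ^ 2 • Φ₀) := by
    refine sup_le (fun z hz => ?_) (Submodule.span_le.2 ?_)
    · simp [LinearMap.mem_ker.1 (hΦE hz), LinearMap.mem_ker.1 (hΦ₀E hz)]
    · rintro _ ⟨i, hi, rfl⟩
      simp [hΦx i hi, hΦ₀ i hi]
  exact ⟨Φ, fun z hz => sub_eq_zero.1 (hle hz), hΦj, hΦk⟩

/-- The functional `h (e + ε f) r - r (e + ε f) h` spans the annihilator of the gradients `e + ε f`,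
`x i` for `i ≠ k`, and a combination of `x k` and `u`. Their Hessians depend polynomially
on `ε`. -/
theorem quadratic_eq_zero (hk : k ∈ T) (hx : ∀ i ∈ T, x i ∈ vectorSpan 𝕜 (X.off i))
    (hE' : IndepMod (E ⊔ Submodule.span 𝕜 {X.edge}) (T.erase k) x) {h : Dual 𝕜 V}
    (hY : E ⊔ Submodule.span 𝕜 (x '' (T.erase k)) ≤ LinearMap.ker h) (he : h X.edge = 1)
    {o : ι → V} {C : ι → 𝕜}
    (ho : ∀ i ∈ T, o i ∈ X.off i ∧ (x i, C i) ∈ hessianGraph (X.off i) (o i) h) {Φ₀ : Dual 𝕜 V}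
    (hΦ₀E : E ≤ LinearMap.ker Φ₀) (hΦ₀ : ∀ i ∈ T.erase k, Φ₀ (x i) = C i) {p f u : V} (hp : p ∈ A k)
    (hpm : X.labelling.label k p = X.m) (hf : X.c - X.a₀ = f) (hu : p - o k = u) {φ δ η ε : 𝕜}
    (hφ : X.r f = φ) (hδ : h f - φ * h u = δ) (hη : h (x k) = η) (hε : ε ≠ 0) :
    η * (1 + ε * δ) ^ 2 - η * φ * (1 + ε) + ε * φ * (C k * (1 + ε * δ) -
      Φ₀ (x k - η • X.edge) - ε * Φ₀ (δ • x k + (φ * η) • u - η • f)) = 0 := by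
  have hφ0 : φ ≠ 0 := by rw [← hφ, ← hf]; exact X.coordAt_ne_zero
  have hru : X.r u = 1 := hu ▸ X.labelling.coordAt_sub_eq_one hk hp hpm (ho k hk).1
  have hrx : X.r (x k) = 0 := X.labelling.vectorSpan_avoiding_le_ker hk X.m (hx k hk)
  have hre : X.r X.edge = 0 := X.r_edge
  set w := X.edge + ε • f with hw
  have hrw : X.r w = ε * φ := by simp [hw, hre, hφ]
  set v := h w • X.r - X.r w • h with hv
  have hv_apply (z : V) : v z = (1 + ε * h f) * X.r z - ε * φ * h z := by
    rw [hv, hrw]; simp [hw, he]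
  have hve : v X.edge = -(ε * φ) := by rw [hv_apply, hre, he]; ring
  have hvf : v f = φ := by rw [hv_apply, hφ]; ring
  have hvu : v u = 1 + ε * δ := by rw [hv_apply, hru, ← hδ]; ring
  have hvx : v (x k) = -(ε * φ * η) := by rw [hv_apply, hrx, hη]; ring
  have hxj : (w, v X.edge ^ 2 + ε * v f ^ 2) ∈ hessianGraph (A j) X.a₀ v := by
    rw [hw, ← hf]
    exact sub_add_smul_sub_mem_hessianGraph X.a₁_mem X.c_mem X.a₀ v ε
  have hxk : (v u • x k - v (x k) • u, v u * (X.r w ^ 2 * C k) - v (x k) * v u ^ 2) ∈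
      hessianGraph (A k) (o k) v :=
    hu ▸ smul_sub_smul_mem_hessianGraph
      (mem_hessianGraph_smul_sub_smul w hk (ho k hk).1 (ho k hk).2) hp
  have hmem {z : V} : X.r z = 0 → h z = 0 → z ∈ _ := mem_of_r_eq_zero hk hx hE' hY he
  have hy₀ := hmem (z := x k - η • X.edge) (by simp [hrx, hre]) (by simp [he, hη])
  have hy₁ := hmem (z := δ • x k + (φ * η) • u - η • f) (by
      simp only [map_add, map_sub, map_smul, hrx, hru, hφ, smul_eq_mul]; ring) (by
      simp only [map_add, map_sub, map_smul, hη, ← hδ, smul_eq_mul]; ring)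
  have hrow : v u • x k - v (x k) • u = η • w +
      ((x k - η • X.edge) + ε • (δ • x k + (φ * η) • u - η • f)) := by
    rw [hvu, hvx, hw]
    module
  obtain ⟨Φ, hΦ, hΦj, hΦk⟩ := exists_dual_pencil hk hx hE' hY he ho hΦ₀E hΦ₀
    (hrw ▸ mul_ne_zero hε hφ0) hxj hxk (sup_span_pair_of_mem (hrow ▸ add_mem
      (Submodule.mem_sup_right (Submodule.smul_mem _ _ (Submodule.mem_span_singleton_self _)))
      (Submodule.mem_sup_left (add_mem hy₀ (Submodule.smul_mem _ _ hy₁)))))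
  rw [hrow, map_add Φ (η • w), map_smul Φ η w, hΦj, map_add, map_smul, hΦ _ hy₀, hΦ _ hy₁, hrw, hvu,
    hvx, hvf, hve] at hΦk
  refine mul_left_cancel₀ (mul_ne_zero hε hφ0) ?_
  simp only [smul_eq_mul] at hΦk
  linear_combination -hΦk

end ExtensionStep

section RadoOfMem

variable {𝕜 V κ : Type*} [Field 𝕜] [AddCommGroup V] [Module 𝕜 V] [FiniteDimensional 𝕜 V]

theorem radoCondition_of_mem_sup {W : κ → Submodule 𝕜 V} {E : Submodule 𝕜 V} {L : Finset κ} {y : V}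
    (hyE : y ∉ E) (hy : y ∈ E ⊔ ⨆ i ∈ L, W i)
    (h : ∀ K ⊂ L, RadoCondition W (E ⊔ Submodule.span 𝕜 {y}) K) : RadoCondition W E L := by
  classical
  have hE := Submodule.finrank_sup_span_singleton hyE
  intro I hI
  rcases hI.ssubset_or_eq with hI | rfl
  · have hI' := h I hI I subset_rfl
    have := finrank_sup_span_singleton_le (E ⊔ ⨆ i ∈ I, W i) y
    rw [sup_right_comm] at hI'
    omega
  · obtain ⟨k, hk⟩ : I.Nonempty := Finset.nonempty_iff_ne_empty.2 (by rintro rfl; simp_all)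
    have hk' := h _ (Finset.erase_ssubset hk) _ subset_rfl
    have hle : E ⊔ Submodule.span 𝕜 {y} ⊔ ⨆ i ∈ I.erase k, W i ≤ E ⊔ ⨆ i ∈ I, W i :=
      sup_le (sup_le le_sup_left (by simpa using hy))
        (le_sup_of_le_right (biSup_mono fun i => Finset.mem_of_mem_erase))
    have := Submodule.finrank_mono hle
    rw [← Finset.card_erase_add_one hk]
    omega

end RadoOfMem

section Split

variable {𝕜 V ι : Type*} [Field 𝕜] [AddCommGroup V] [Module 𝕜 V] {A : ι → Set V} {T : Finset ι}
  {E : Submodule 𝕜 V} {β : Type} [Fintype β] [DecidableEq β]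

/-- The coordinates for which the vertex `m` is split into two vertices, `q` being the coordinate
at the new one. -/
def SimplexLabelling.splitCoord (L : SimplexLabelling A T E β) (m : β) (q : Dual 𝕜 V) :
    V →ₗ[𝕜] Option β → 𝕜 :=
  LinearMap.pi fun o => o.elim q fun b => L.coordAt b - (Pi.single m q : β → Dual 𝕜 V) b

open Classical in
/-- The labels for which the vertex `m` is split into two vertices, the points of `N i` being
mapped to the new one. -/
noncomputable def SimplexLabelling.splitLabel (L : SimplexLabelling A T E β) (N : ι → Set V)
    (i : ι) (a : V) : Option β :=
  if a ∈ N i then none else some (L.label i a)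

theorem SimplexLabelling.splitCoord_sub (L : SimplexLabelling A T E β) {m : β} {q : Dual 𝕜 V}
    {N : ι → Set V} {i : ι} (hi : i ∈ T) {o : V} (ho : o ∈ A i) (hoN : o ∉ N i)
    (hNm : ∀ a ∈ N i, L.label i a = m) (hN : ∀ a ∈ N i, q (a - o) = 1)
    (hN' : ∀ a ∈ A i, a ∉ N i → q (a - o) = 0) {a : V} (ha : a ∈ A i) :
    L.splitCoord m q (a - o) =
      Pi.single (L.splitLabel N i a) 1 - Pi.single (L.splitLabel N i o) 1 := by
  have hcoord (b : β) := L.coordAt_sub hi ha ho b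
  funext b
  rcases b with _ | b
  · by_cases haN : a ∈ N i
    · simp [splitCoord, splitLabel, haN, hoN, hN a haN]
    · simp [splitCoord, splitLabel, haN, hoN, hN' a ha haN]
  · by_cases haN : a ∈ N i <;> rcases eq_or_ne b m with rfl | hb
    · simp [splitCoord, splitLabel, haN, hoN, hcoord, hN a haN, hNm a haN, Pi.single_apply, eq_comm]
    · simp [splitCoord, splitLabel, haN, hoN, hcoord, hNm a haN, hb.symm, Pi.single_apply,
        eq_comm]
    · simp [splitCoord, splitLabel, haN, hoN, hcoord, hN' a ha haN, Pi.single_apply, eq_comm]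
    · simp [splitCoord, splitLabel, haN, hoN, hcoord, hb.symm, Pi.single_apply, eq_comm]

theorem SimplexLabelling.ker_splitCoord {e : V}
    (L : SimplexLabelling A T (E ⊔ Submodule.span 𝕜 {e}) β) (m : β) {q : Dual 𝕜 V}
    (hqE : E ≤ LinearMap.ker q) (hqe : q e ≠ 0) : LinearMap.ker (L.splitCoord m q) = E := by
  refine le_antisymm (fun x hx => ?_) fun x hx => ?_
  · have hq : q x = 0 := congrFun hx none
    have hcoord : x ∈ LinearMap.ker L.coord := by
      ext b
      rcases eq_or_ne b m with rfl | hb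
      · simpa [splitCoord, coordAt, hq] using congrFun hx (some b)
      · simpa [splitCoord, coordAt, hb] using congrFun hx (some b)
    rw [L.ker_coord, mem_sup_span_singleton] at hcoord
    obtain ⟨t, ht⟩ := hcoord
    have ht0 : t = 0 := by simpa [hq, hqe] using hqE ht
    simpa [ht0] using ht
  · have hq : q x = 0 := hqE hx
    ext o
    rcases o with _ | b
    · exact hq
    · have hb : L.coordAt b x = 0 := L.le_ker_coordAt b (Submodule.mem_sup_left hx)
      rcases eq_or_ne b m with rfl | hbm
      · simp [splitCoord, hb, hq]
      · simp [splitCoord, hb, hbm]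

theorem SimplexLabelling.sum_splitCoord (L : SimplexLabelling A T E β) (m : β) (q : Dual 𝕜 V)
    (hE : E ⊔ directionSpan 𝕜 A T = ⊤) (x : V) : ∑ b, L.splitCoord m q x b = 0 := by
  have hsum : ∑ b, L.coordAt b x = 0 := L.sum_coord_eq_zero (hE ▸ Submodule.mem_top)
  have hsingle : ∑ b, (Pi.single m q : β → Dual 𝕜 V) b x = q x := by
    rw [Finset.sum_eq_single m (fun b _ hb => by simp [hb]) (by simp), Pi.single_eq_same]
  simp [Fintype.sum_option, splitCoord, hsum, hsingle]

end Split

namespace ExtensionStep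

variable {𝕜 V ι : Type*} [Field 𝕜] [AddCommGroup V] [Module 𝕜 V] [DecidableEq ι]
  {A : ι → Set V} {T : Finset ι} {j : ι} {E : Submodule 𝕜 V} {β : Type} [Fintype β]
  [DecidableEq β] (X : ExtensionStep A T j E β)

theorem exists_label_eq : ∃ k ∈ T, ∃ p ∈ A k, X.labelling.label k p = X.m := by
  by_contra! h
  refine X.r_ne_zero (LinearMap.ker_eq_top.1 (top_le_iff.1 ?_))
  rw [← X.irreducible_contract.sup_directionSpan]
  refine sup_le (X.labelling.le_ker_coordAt X.m) (directionSpan_le_iff.2 fun i hi => ?_)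
  exact (vectorSpan_mono 𝕜 (show A i ⊆ X.off i from fun a ha => ⟨ha, h i hi a ha⟩)).trans
    (X.labelling.vectorSpan_avoiding_le_ker hi X.m)

theorem off_nonempty {i : ι} (hi : i ∈ T) : (X.off i).Nonempty := by
  by_contra! h
  have hlabel : ∀ a ∈ A i, X.labelling.label i a = X.m := fun a ha => by
    by_contra hne
    exact Set.notMem_empty a (h ▸ ⟨ha, hne⟩)
  have hle : vectorSpan 𝕜 (A i) ≤ E ⊔ Submodule.span 𝕜 {X.a₁ - X.a₀} :=
    vectorSpan_le_iff.2 fun a ha b hb => by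
      rw [← X.labelling.ker_coord, LinearMap.mem_ker, X.labelling.coord_sub i hi a ha b hb,
        hlabel a ha, hlabel b hb, sub_self]
  have := X.irreducible_contract.radoCondition {i} (Finset.singleton_subset_iff.2 hi)
  beta_reduce at this
  rw [Finset.iSup_singleton, sup_eq_left.2 hle] at this
  simp at this

variable [FiniteDimensional 𝕜 V]

theorem not_indepMod [CharZero 𝕜] {k : ι} (hk : k ∈ T) {p : V} (hp : p ∈ A k)
    (hpm : X.labelling.label k p = X.m) {x : ι → V} (hx : ∀ i ∈ T, x i ∈ vectorSpan 𝕜 (X.off i))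
    (hE : IndepMod E T x) : ¬ IndepMod (E ⊔ Submodule.span 𝕜 {X.edge}) (T.erase k) x := by
  intro hE'
  obtain ⟨h, hY, he⟩ := exists_dual_apply_eq_one (hE'.notMem_sup_span X.edge_notMem)
  have hoC : ∀ i ∈ T, ∃ o C, o ∈ X.off i ∧ (x i, C) ∈ hessianGraph (X.off i) o h := fun i hi =>
    have ⟨o, ho⟩ := X.off_nonempty hi
    have ⟨C, hC⟩ := exists_mem_hessianGraph ho (hx i hi) h
    ⟨o, C, ho, hC⟩
  choose! o C ho using hoC
  obtain ⟨Φ₀, hΦ₀E, hΦ₀⟩ := (hE'.anti le_sup_left).exists_dual C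
  have hquad (ε : 𝕜) (hε : ε ≠ 0) := quadratic_eq_zero hk hx hE' hY he ho hΦ₀E hΦ₀ hp hpm
    rfl rfl rfl rfl rfl hε
  -- The constant coefficient of a quadratic polynomial vanishing at `1`, `-1` and `2`.
  have hφη : h (x k) * (1 - X.r (X.c - X.a₀)) = 0 := by
    linear_combination hquad 1 one_ne_zero + hquad (-1) (by norm_num) / 3 -
      hquad 2 two_ne_zero / 3
  rcases mul_eq_zero.1 hφη with hη | hφ
  · rw [← Finset.insert_erase hk, indepMod_insert_iff_notMem_sup (T.notMem_erase k)] at hE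
    exact hE.2 (mem_of_r_eq_zero hk hx hE' hY he
      (X.labelling.vectorSpan_avoiding_le_ker hk X.m (hx k hk)) hη)
  · exact X.coordAt_ne_one (sub_eq_zero.1 hφ).symm

theorem edge_notMem_sup [CharZero 𝕜] : X.edge ∉ E ⊔ ⨆ i ∈ T, vectorSpan 𝕜 (X.off i) := by
  intro he
  obtain ⟨k, hk, p, hp, hpm⟩ := X.exists_label_eq
  have hrado : ∀ K ⊂ T, RadoCondition (fun i => vectorSpan 𝕜 (X.off i))
      (E ⊔ Submodule.span 𝕜 {X.edge}) K := fun K hK =>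
    X.labelling.radoCondition_avoiding X.irreducible_contract X.m hK
  obtain ⟨x, hx, hindep⟩ := exists_transversal_forall_indepMod
    (W := fun i => vectorSpan 𝕜 (X.off i)) {true, false} (fun s => cond s T (T.erase k))
    (fun s => cond s E (E ⊔ Submodule.span 𝕜 {X.edge})) (by
      simpa using ⟨hrado _ (Finset.erase_ssubset hk),
        radoCondition_of_mem_sup X.edge_notMem he hrado⟩)
  simp only [Finset.mem_insert, Finset.mem_singleton, forall_eq_or_imp, forall_eq, cond_true,
    cond_false] at hindep
  exact X.not_indepMod hk hp hpm (fun i _ => hx i) hindep.1 hindep.2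

/-- The functional `h u • r - r u • h`, `u = p - o k`, spans the annihilator of the gradients
`c - a₀ + σ (a₁ - a₀)`, `u`, and of a transversal of the sets `off i`, `i ≠ k`, whose Hessians are
`σ² + σ` and zeros. -/
theorem smul_r_sub_smul_eq_zero_or_one [CharZero 𝕜] {h : Dual 𝕜 V} (hE : E ≤ LinearMap.ker h)
    (hoff : ∀ i ∈ T, vectorSpan 𝕜 (X.off i) ≤ LinearMap.ker h) (he : h X.edge = 1) {o : ι → V}
    (ho : ∀ i ∈ T, o i ∈ X.off i) {k : ι} (hk : k ∈ T) {p : V} (hp : p ∈ A k)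
    (hpm : X.labelling.label k p = X.m) :
    (h (X.c - X.a₀) • X.r - X.r (X.c - X.a₀) • h) (p - o k) = 0 ∨
      (h (X.c - X.a₀) • X.r - X.r (X.c - X.a₀) • h) (p - o k) = 1 := by
  obtain ⟨x, hx, hE'⟩ := (X.labelling.radoCondition_avoiding X.irreducible_contract X.m
    (Finset.erase_ssubset hk)).exists_transversal
  replace hx : ∀ i ∈ T, x i ∈ vectorSpan 𝕜 (X.off i) := fun i _ => hx i
  have hY : E ⊔ Submodule.span 𝕜 (x '' (T.erase k)) ≤ LinearMap.ker h := by
    refine sup_le hE (Submodule.span_le.2 ?_)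
    rintro _ ⟨i, hi, rfl⟩
    exact hoff i (Finset.mem_of_mem_erase hi) (hx i (Finset.mem_of_mem_erase hi))
  set u := p - o k with hu
  have hru : X.r u = 1 := X.labelling.coordAt_sub_eq_one hk hp hpm (ho k hk)
  set v := h u • X.r - X.r u • h with hv
  have hve : v X.edge = -1 := by simp [hv, X.r_edge, hru, he]
  have hvu : v u = 0 := by simp [hv, mul_comm]
  set σ := v (X.c - X.a₀) with hσ
  have hker := ker_smul_sub_smul_eq hk hx hE' hY he (w := u) (by simp [hru])
  have hxj : X.c - X.a₀ + σ • X.edge ∈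
      E ⊔ Submodule.span 𝕜 (x '' (T.erase k)) ⊔ Submodule.span 𝕜 {u} := by
    rw [← hker, LinearMap.mem_ker, ← hv]
    simp [hve, ← hσ]
  obtain ⟨Φ, hΦY, hΦj, hΦu⟩ := exists_dual_pencil hk hx hE' hY he (C := fun _ => 0)
    (fun i hi => ⟨ho i hi, mem_hessianGraph_of_vectorSpan_le_ker (ho i hi) (hoff i hi) (hx i hi)⟩)
    (Φ₀ := 0) (by simp) (by simp) (w := u) (by simp [hru])
    (sub_add_smul_sub_mem_hessianGraph X.c_mem X.a₁_mem X.a₀ v σ)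
    (sub_mem_hessianGraph hp (o k) v)
    (by rw [Set.pair_comm]; exact sup_span_pair_of_mem hxj)
  have hΦ : E ⊔ Submodule.span 𝕜 (x '' (T.erase k)) ⊔ Submodule.span 𝕜 {u} ≤ LinearMap.ker Φ :=
    sup_le (fun z hz => by simp [hΦY z hz])
      ((Submodule.span_singleton_le_iff_mem _ _).2 (hΦu.trans (by
        rw [← hu, hvu, zero_pow two_ne_zero])))
  have hzero : σ ^ 2 + σ * v X.edge ^ 2 = 0 := hΦj.symm.trans (hΦ hxj)
  rw [hve] at hzero
  have hσu : (h (X.c - X.a₀) • X.r - X.r (X.c - X.a₀) • h) u = -σ := by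
    simp [hσ, hv, hru]
    ring
  rw [hσu]
  rcases mul_eq_zero.1 (show σ * (σ + 1) = 0 by linear_combination hzero) with hσ0 | hσ1
  · exact .inl (by rw [hσ0, neg_zero])
  · exact .inr (by linear_combination -hσ1)

omit [FiniteDimensional 𝕜 V] in
theorem smul_r_sub_smul_sub_eq_zero {h : Dual 𝕜 V} {i : ι} (hi : i ∈ T)
    (hoff : vectorSpan 𝕜 (X.off i) ≤ LinearMap.ker h) (s t : 𝕜) {a b : V} (ha : a ∈ X.off i)
    (hb : b ∈ X.off i) : (s • X.r - t • h) (a - b) = 0 := by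
  have hmem := vsub_mem_vectorSpan 𝕜 ha hb
  have hr : X.r (a - b) = 0 := X.labelling.vectorSpan_avoiding_le_ker hi X.m hmem
  have hh : h (a - b) = 0 := hoff hmem
  rw [LinearMap.sub_apply, LinearMap.smul_apply, LinearMap.smul_apply, hr, hh, smul_zero,
    smul_zero, sub_zero]

theorem exists_splitting [CharZero 𝕜] (X : ExtensionStep A T j E β) :
    ∃ (ρ : V →ₗ[𝕜] Option β → 𝕜) (ℓ : ι → V → Option β),
    LinearMap.ker ρ = E ∧ (∀ x, ∑ b, ρ x b = 0) ∧ ∀ i ∈ T, ∀ a ∈ A i, ∀ b ∈ A i,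
      ρ (a - b) = Pi.single (ℓ i a) 1 - Pi.single (ℓ i b) 1 := by
  obtain ⟨h, hker, he⟩ := exists_dual_apply_eq_one X.edge_notMem_sup
  have hE : E ≤ LinearMap.ker h := le_sup_left.trans hker
  have hoff : ∀ i ∈ T, vectorSpan 𝕜 (X.off i) ≤ LinearMap.ker h := fun i hi =>
    (le_biSup (fun i => vectorSpan 𝕜 (X.off i)) hi).trans (le_sup_right.trans hker)
  choose! o ho using fun i (hi : i ∈ T) => X.off_nonempty hi
  set q := h (X.c - X.a₀) • X.r - X.r (X.c - X.a₀) • h with hq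
  have hqE : E ≤ LinearMap.ker q := fun x hx => by
    simp [hq, LinearMap.mem_ker.1 (hE hx),
      LinearMap.mem_ker.1 (X.labelling.le_ker_coordAt X.m (Submodule.mem_sup_left hx))]
  have hqe : q X.edge ≠ 0 := by
    simp only [hq, LinearMap.sub_apply, LinearMap.smul_apply, X.r_edge, he, smul_eq_mul,
      mul_zero, mul_one, zero_sub]
    exact neg_ne_zero.2 X.coordAt_ne_zero
  let N (i : ι) : Set V := {a ∈ A i | X.labelling.label i a = X.m ∧ q (a - o i) = 1}
  have hbase : ∀ i ∈ T, ∀ a ∈ A i, X.labelling.splitCoord X.m q (a - o i) =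
      Pi.single (X.labelling.splitLabel N i a) 1 - Pi.single (X.labelling.splitLabel N i (o i)) 1 :=
    fun i hi a ha => X.labelling.splitCoord_sub hi (ho i hi).1 (fun hN => (ho i hi).2 hN.2.1)
      (fun a ha => ha.2.1) (fun a ha => ha.2.2) (fun a ha haN => by
        by_cases ham : X.labelling.label i a = X.m
        · exact (X.smul_r_sub_smul_eq_zero_or_one hE hoff he ho hi ha ham).resolve_right
            fun h1 => haN ⟨ha, ham, h1⟩
        · exact X.smul_r_sub_smul_sub_eq_zero hi (hoff i hi) _ _ ⟨ha, ham⟩ (ho i hi)) ha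
  refine ⟨X.labelling.splitCoord X.m q, X.labelling.splitLabel N,
    X.labelling.ker_splitCoord X.m hqE hqe,
    X.labelling.sum_splitCoord X.m q X.irreducible_contract.sup_directionSpan,
    fun i hi a ha b hb => ?_⟩
  rw [← sub_sub_sub_cancel_right a b (o i), map_sub, hbase i hi a ha, hbase i hi b hb,
    sub_sub_sub_cancel_right]

end ExtensionStep

section CubicForm

variable {𝕜 γ : Type*} [Field 𝕜] [Fintype γ]

/-- The cubic form whose vanishing at `ν` expresses that the Hessian of a triangle with edge
vectors `p`, `q` vanishes in the direction `ν`, see `cubicForm_eq_zero_of_ker_eq`. -/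
def cubicForm (p q ν : γ → 𝕜) : 𝕜 :=
  (∑ b, ν b * p b) * (∑ b, ν b * q b) * (∑ b, ν b * p b - ∑ b, ν b * q b) -
    (∑ b, ν b * q b) * (∑ b, ν b ^ 2 * p b) + (∑ b, ν b * p b) * ∑ b, ν b ^ 2 * q b

theorem cubicForm_swap (p q ν : γ → 𝕜) : cubicForm q p ν = -cubicForm p q ν := by
  simp only [cubicForm]
  ring

theorem cubicForm_neg_sub (p q ν : γ → 𝕜) : cubicForm (-q) (p - q) ν = cubicForm p q ν := by
  simp only [cubicForm, Pi.neg_apply, Pi.sub_apply, mul_neg, mul_sub, Finset.sum_neg_distrib,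
    Finset.sum_sub_distrib]
  ring

variable [DecidableEq γ] {p q : γ → 𝕜}

theorem cubicForm_indicator (p q : γ → 𝕜) (s : Finset γ) :
    cubicForm p q (fun b => if b ∈ s then 1 else 0) =
      (∑ b ∈ s, p b) * (∑ b ∈ s, q b) * (∑ b ∈ s, p b - ∑ b ∈ s, q b) := by
  simp only [cubicForm, ite_mul, ite_pow, one_pow, zero_pow two_ne_zero, one_mul, zero_mul,
    Finset.sum_ite_mem, Finset.univ_inter]
  ring

theorem cubicForm_single_sub_single (p q : γ → 𝕜) {b c : γ} (hbc : b ≠ c) :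
    cubicForm p q (Pi.single b 1 - Pi.single c 1) =
      (p b - p c) * (q b - q c) * (p b - p c - (q b - q c)) + 2 * (p b * q c - p c * q b) := by
  have hsum (f : γ → 𝕜) :
      ∑ d, (Pi.single b 1 - Pi.single c 1 : γ → 𝕜) d * f d = f b - f c := by
    simp [sub_mul, Finset.sum_sub_distrib, Pi.single_apply]
  have hsq (d : γ) : (Pi.single b 1 - Pi.single c 1 : γ → 𝕜) d ^ 2 =
      (Pi.single b 1 + Pi.single c 1 : γ → 𝕜) d := by
    rcases eq_or_ne d b with rfl | hb <;> simp [Pi.single_apply, *]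
  have hsum_sq (f : γ → 𝕜) :
      ∑ d, (Pi.single b 1 - Pi.single c 1 : γ → 𝕜) d ^ 2 * f d = f b + f c := by
    simp only [hsq]
    simp [add_mul, Finset.sum_add_distrib, Pi.single_apply]
  simp only [cubicForm, hsum, hsum_sq]
  ring

variable [CharZero 𝕜]

omit [DecidableEq γ] in
theorem apply_eq_one_of_cubicForm_eq_zero (h : ∀ ν, cubicForm p q ν = 0) (hq : q ≠ 0) {b : γ}
    (hqb : q b = 0) (hpb : p b ≠ 0) : p b = 1 := by
  classical
  obtain ⟨c, hc⟩ := Function.ne_iff.1 hq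
  rw [Pi.zero_apply] at hc
  have hbc : b ≠ c := by rintro rfl; exact hc hqb
  have hsub := (cubicForm_single_sub_single p q hbc).symm.trans (h _)
  have hpair := (cubicForm_indicator p q {b, c}).symm.trans (h _)
  have hc' := (cubicForm_indicator p q {c}).symm.trans (h _)
  rw [Finset.sum_pair hbc, Finset.sum_pair hbc] at hpair
  simp only [Finset.sum_singleton] at hc'
  have : 2 * (q c * p b) * (p b - 1) = 0 := by
    rw [hqb] at hsub hpair
    linear_combination hpair - hsub - 2 * hc'
  simpa [hc, hpb, sub_eq_zero] using this

omit [DecidableEq γ] in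
theorem apply_eq_of_cubicForm_eq_zero (h : ∀ ν, cubicForm p q ν = 0) (hp : p ≠ 0) (hq : q ≠ 0)
    (hpq : p ≠ q) (b : γ) : (p b = 0 ∧ q b = 0) ∨ (p b = 1 ∧ q b = 0) ∨ (p b = 0 ∧ q b = 1) ∨
      (p b = -1 ∧ q b = -1) := by
  classical
  have hb := (cubicForm_indicator p q {b}).symm.trans (h _)
  simp only [Finset.sum_singleton, mul_eq_zero, sub_eq_zero] at hb
  by_cases h0 : p b = 0 ∧ q b = 0
  · exact .inl h0
  rcases hb with (hpb | hqb) | hpqb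
  · exact .inr (.inr (.inl ⟨hpb, apply_eq_one_of_cubicForm_eq_zero (fun ν => by
      rw [cubicForm_swap, h ν, neg_zero]) hp hpb fun hqb => h0 ⟨hpb, hqb⟩⟩))
  · exact .inr (.inl ⟨apply_eq_one_of_cubicForm_eq_zero h hq hqb fun hpb => h0 ⟨hpb, hqb⟩, hqb⟩)
  · have hqb := apply_eq_one_of_cubicForm_eq_zero (p := -q) (q := p - q) (b := b)
      (fun ν => (cubicForm_neg_sub p q ν).trans (h ν)) (sub_ne_zero.2 hpq) (by simp [hpqb])
      (fun hqb => h0 (by simp_all))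
    rw [Pi.neg_apply, neg_eq_iff_eq_neg] at hqb
    exact .inr (.inr (.inr ⟨hpqb.trans hqb, hqb⟩))

omit [DecidableEq γ] in
theorem eq_of_cubicForm_eq_zero (h : ∀ ν, cubicForm p q ν = 0) {b c d : γ}
    (hb : p b = 1 ∧ q b = 0) (hc : p c = 1 ∧ q c = 0) (hd : p d = 0 ∧ q d = 1) : b = c := by
  classical
  by_contra hbc
  have hcd : c ≠ d := by rintro rfl; exact one_ne_zero (hc.1.symm.trans hd.1)
  have hbd : b ∉ ({c, d} : Finset γ) := by
    rw [Finset.mem_insert, Finset.mem_singleton, not_or]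
    exact ⟨hbc, by rintro rfl; exact one_ne_zero (hb.1.symm.trans hd.1)⟩
  have := (cubicForm_indicator p q {b, c, d}).symm.trans (h _)
  simp only [Finset.sum_insert hbd, Finset.sum_pair hcd, hb, hc, hd] at this
  norm_num at this

theorem exists_eq_single_sub_single (h : ∀ ν, cubicForm p q ν = 0) (hp : p ≠ 0) (hq : q ≠ 0)
    (hpq : p ≠ q) (hp_sum : ∑ b, p b = 0) (hq_sum : ∑ b, q b = 0) :
    ∃ b₁ b₂ b₃ : γ, b₁ ≠ b₃ ∧ p = Pi.single b₁ 1 - Pi.single b₃ 1 ∧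
      q = Pi.single b₂ 1 - Pi.single b₃ 1 := by
  classical
  have htype := apply_eq_of_cubicForm_eq_zero h hp hq hpq
  set P : Finset γ := {b | p b = 1 ∧ q b = 0}
  set Q : Finset γ := {b | p b = 0 ∧ q b = 1}
  set R : Finset γ := {b | p b = -1}
  have hneg : (-1 : 𝕜) ≠ 1 := by norm_num
  have hp_apply (b : γ) : p b = (if b ∈ P then 1 else 0) - (if b ∈ R then 1 else 0) := by
    rcases htype b with hb | hb | hb | hb <;> simp [P, R, hb, hneg, hneg.symm]
  have hq_apply (b : γ) : q b = (if b ∈ Q then 1 else 0) - (if b ∈ R then 1 else 0) := by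
    rcases htype b with hb | hb | hb | hb <;> simp [Q, R, hb, hneg, hneg.symm]
  have hPR : P.card = R.card := by
    rw [Finset.sum_congr rfl fun b _ => hp_apply b] at hp_sum
    simpa [Finset.sum_sub_distrib, sub_eq_zero] using hp_sum
  have hQR : Q.card = R.card := by
    rw [Finset.sum_congr rfl fun b _ => hq_apply b] at hq_sum
    simpa [Finset.sum_sub_distrib, sub_eq_zero] using hq_sum
  have hR : R.Nonempty := by
    by_contra hR
    rw [Finset.not_nonempty_iff_eq_empty] at hR
    rw [hR, Finset.card_empty, Finset.card_eq_zero] at hPR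
    exact hp (funext fun b => by simp [hp_apply, hPR, hR])
  obtain ⟨d, hd⟩ : Q.Nonempty := Finset.card_pos.1 (hQR ▸ hR.card_pos)
  have hP : P.card ≤ 1 := Finset.card_le_one.2 fun b hb c hc =>
    eq_of_cubicForm_eq_zero h ((Finset.mem_filter_univ b).1 hb) ((Finset.mem_filter_univ c).1 hc)
      ((Finset.mem_filter_univ d).1 hd)
  have hR1 : R.card = 1 := le_antisymm (hPR ▸ hP) hR.card_pos
  obtain ⟨b₁, hP₁⟩ := Finset.card_eq_one.1 (hPR.trans hR1)
  obtain ⟨b₂, hQ₂⟩ := Finset.card_eq_one.1 (hQR.trans hR1)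
  obtain ⟨b₃, hR₃⟩ := Finset.card_eq_one.1 hR1
  refine ⟨b₁, b₂, b₃, ?_, funext fun b => ?_, funext fun b => ?_⟩
  · rintro rfl
    have h₁ := (Finset.mem_filter_univ b₁).1 (hP₁ ▸ Finset.mem_singleton_self b₁ : b₁ ∈ P)
    have h₃ := (Finset.mem_filter_univ b₁).1 (hR₃ ▸ Finset.mem_singleton_self b₁ : b₁ ∈ R)
    exact hneg (h₃.symm.trans h₁.1)
  · simp [hp_apply, hP₁, hR₃, Pi.single_apply]
  · simp [hq_apply, hQ₂, hR₃, Pi.single_apply]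

omit [DecidableEq γ] in
theorem cubicForm_eq_zero_of_third_difference {ν₀ ν₁ : γ → 𝕜} {t : 𝕜} (ht : t ≠ 0)
    (h : ∀ n : Fin 4, cubicForm p q (ν₀ + ((n : ℕ) * t) • ν₁) = 0) : cubicForm p q ν₁ = 0 := by
  have hsum (s : 𝕜) (f : γ → 𝕜) :
      ∑ b, (ν₀ + s • ν₁) b * f b = ∑ b, ν₀ b * f b + s * ∑ b, ν₁ b * f b := by
    rw [Finset.mul_sum, ← Finset.sum_add_distrib]
    exact Finset.sum_congr rfl fun b _ => by simp; ring
  have hsum_sq (s : 𝕜) (f : γ → 𝕜) : ∑ b, (ν₀ + s • ν₁) b ^ 2 * f b =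
      ∑ b, ν₀ b ^ 2 * f b + 2 * s * (∑ b, ν₀ b * ν₁ b * f b) + s ^ 2 * ∑ b, ν₁ b ^ 2 * f b := by
    rw [Finset.mul_sum, Finset.mul_sum, ← Finset.sum_add_distrib, ← Finset.sum_add_distrib]
    exact Finset.sum_congr rfl fun b _ => by simp; ring
  have h0 := h 0
  have h1 := h 1
  have h2 := h 2
  have h3 := h 3
  have : 6 * t ^ 3 * cubicForm p q ν₁ = 0 := by
    simp only [cubicForm, hsum, hsum_sq] at h0 h1 h2 h3 ⊢
    norm_num at h0 h1 h2 h3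
    linear_combination h3 - 3 * h2 + 3 * h1 - h0
  simpa [ht] using this

end CubicForm

section WeightedDual

variable {𝕜 V ι γ : Type*} [Field 𝕜] [AddCommGroup V] [Module 𝕜 V] [Fintype γ] [DecidableEq γ]
  {ρ : V →ₗ[𝕜] γ → 𝕜}

/-- The linear form `∑ b, ν b * ρ b` combining the coordinates `ρ` with the weights `ν`. -/
def weightedDual (ρ : V →ₗ[𝕜] γ → 𝕜) : (γ → 𝕜) →ₗ[𝕜] Dual 𝕜 V :=
  ρ.dualMap ∘ₗ (dotProductEquiv 𝕜 γ).toLinearMap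

theorem weightedDual_apply (ρ : V →ₗ[𝕜] γ → 𝕜) (ν : γ → 𝕜) (x : V) :
    weightedDual ρ ν x = ∑ b, ν b * ρ x b := rfl

theorem ker_le_ker_weightedDual (ρ : V →ₗ[𝕜] γ → 𝕜) (ν : γ → 𝕜) :
    LinearMap.ker ρ ≤ LinearMap.ker (weightedDual ρ ν) := fun x hx => by
  simp [weightedDual_apply, LinearMap.mem_ker.1 hx]

theorem exists_weightedDual_eq {v : Dual 𝕜 V} (hv : LinearMap.ker ρ ≤ LinearMap.ker v) :
    ∃ ν, weightedDual ρ ν = v := by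
  obtain ⟨f, rfl⟩ : v ∈ LinearMap.range ρ.dualMap := by
    rw [LinearMap.range_dualMap_eq_dualAnnihilator_ker, Submodule.mem_dualAnnihilator]
    exact hv
  exact ⟨(dotProductEquiv 𝕜 γ).symm f, by simp [weightedDual]⟩

omit [Fintype γ] [DecidableEq γ] in
theorem indepMod_ker_iff {ρ : V →ₗ[𝕜] γ → 𝕜} {K : Finset ι} {x : ι → V} :
    IndepMod (LinearMap.ker ρ) K x ↔ LinearIndepOn 𝕜 (ρ ∘ x) K := by
  simp [indepMod_iff_sum, linearIndepOn_finset_iff, LinearMap.mem_ker]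

/-- In the direction with weights `ν`, second derivatives are spanned by
`(ν a - ν o)² = (ν a² - ν o²) - 2 ν o (ν a - ν o)`, where the last term is proportional to the
first derivative. -/
theorem eq_weightedDual_of_mem_hessianGraph {s : Set V} {ℓ : V → γ}
    (hℓ : ∀ a ∈ s, ∀ b ∈ s, ρ (a - b) = Pi.single (ℓ a) 1 - Pi.single (ℓ b) 1) {o : V}
    (ho : o ∈ s) {ν : γ → 𝕜} {x : V} {q : 𝕜} (hx : (x, q) ∈ hessianGraph s o (weightedDual ρ ν))
    (hν : weightedDual ρ ν x = 0) : q = weightedDual ρ (ν ^ 2) x := by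
  have hle : hessianGraph s o (weightedDual ρ ν) ≤
      (weightedDual ρ (ν ^ 2) - (2 * ν (ℓ o)) • weightedDual ρ ν).graph := by
    refine Submodule.span_le.2 ?_
    rintro _ ⟨a, ha, rfl⟩
    have happly (μ : γ → 𝕜) : weightedDual ρ μ (a - o) = μ (ℓ a) - μ (ℓ o) := by
      simp [weightedDual_apply, hℓ a ha o ho, mul_sub, Finset.sum_sub_distrib, Pi.single_apply]
    simp only [SetLike.mem_coe, LinearMap.mem_graph_iff, LinearMap.sub_apply,
      LinearMap.smul_apply, smul_eq_mul, happly, Pi.pow_apply]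
    ring
  have := (LinearMap.mem_graph_iff _ _).1 (hle hx)
  simpa [hν] using this

end WeightedDual

section CubicRelation

variable {V ι γ : Type*} [AddCommGroup V] [Fintype γ] [DecidableEq γ] [DecidableEq ι]
  {A : ι → Set V} {T : Finset ι} {j : ι}

theorem cubicForm_eq_zero_of_ker_eq {𝕜 : Type*} [Field 𝕜] [Module 𝕜 V] {ρ : V →ₗ[𝕜] γ → 𝕜}
    {ℓ : ι → V → γ} (hH : HessianVanishes A (insert j T) (LinearMap.ker ρ)) (hj : j ∉ T)
    (hℓ : ∀ i ∈ T, ∀ a ∈ A i, ∀ b ∈ A i,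
      ρ (a - b) = Pi.single (ℓ i a) 1 - Pi.single (ℓ i b) 1)
    (hA : ∀ i ∈ T, (A i).Nonempty) {y : ι → V} (hy : ∀ i ∈ T, y i ∈ vectorSpan 𝕜 (A i))
    {ν : γ → 𝕜} (hν : LinearMap.ker (weightedDual ρ ν) =
      LinearMap.ker ρ ⊔ Submodule.span 𝕜 (y '' T)) {a₀ a₁ a₂ : V} (ha₀ : a₀ ∈ A j)
    (ha₁ : a₁ ∈ A j) (ha₂ : a₂ ∈ A j) : cubicForm (ρ (a₁ - a₀)) (ρ (a₂ - a₀)) ν = 0 := by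
  choose! o ho using hA
  choose! q hq using fun i (hi : i ∈ T) =>
    exists_mem_hessianGraph (ho i hi) (hy i hi) (weightedDual ρ ν)
  set v := weightedDual ρ ν
  have hgrad : v (a₂ - a₀) • (a₁ - a₀) - v (a₁ - a₀) • (a₂ - a₀) ∈ LinearMap.ker v := by
    simp [mul_comm]
  obtain ⟨Φ, hΦE, hΦ, hΦj⟩ := hH.exists_dual_insert hj
    (fun i hi => ⟨ho i hi, hq i hi⟩)
    ⟨ha₀, smul_sub_smul_mem_hessianGraph (sub_mem_hessianGraph ha₁ a₀ v) ha₂⟩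
    (by rw [← hν, left_eq_sup, Submodule.span_singleton_le_iff_mem]; exact hgrad)
  have hΦ_eq : LinearMap.ker v ≤ LinearMap.ker (Φ - weightedDual ρ (ν ^ 2)) := by
    rw [hν]
    refine sup_le (fun x hx => ?_) (Submodule.span_le.2 ?_)
    · simp [LinearMap.mem_ker.1 (hΦE hx),
        LinearMap.mem_ker.1 (ker_le_ker_weightedDual ρ (ν ^ 2) hx)]
    · rintro _ ⟨i, hi, rfl⟩
      have hvy : v (y i) = 0 := by
        rw [← LinearMap.mem_ker, hν]
        exact Submodule.mem_sup_right (Submodule.subset_span ⟨i, hi, rfl⟩)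
      have := eq_weightedDual_of_mem_hessianGraph (hℓ i hi) (ho i hi) (hq i hi) hvy
      simp [hΦ i hi, this]
  have := sub_eq_zero.1 (LinearMap.mem_ker.1 (hΦ_eq hgrad))
  rw [hΦj, LinearMap.map_sub (weightedDual ρ (ν ^ 2)), LinearMap.map_smul, LinearMap.map_smul,
    smul_eq_mul, smul_eq_mul] at this
  change v _ * v _ * (v _ - v _) - v _ * weightedDual ρ (ν ^ 2) _ +
    v _ * weightedDual ρ (ν ^ 2) _ = 0
  linear_combination this

end CubicRelation

section Eventually

open Filter Topology

variable {𝕜 : Type*} [NontriviallyNormedField 𝕜]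

theorem cubicForm_eq_zero_of_eventually {γ : Type*} [Fintype γ] [CharZero 𝕜] {p q ν₀ ν₁ : γ → 𝕜}
    (h : ∀ᶠ s in 𝓝 (0 : 𝕜), cubicForm p q (ν₀ + s • ν₁) = 0) : cubicForm p q ν₁ = 0 := by
  have hmul (n : Fin 4) :
      ∀ᶠ t in 𝓝 (0 : 𝕜), cubicForm p q (ν₀ + (((n : ℕ) : 𝕜) * t) • ν₁) = 0 :=
    ((continuous_const_mul ((n : ℕ) : 𝕜)).tendsto' 0 0 (mul_zero _)).eventually h
  obtain ⟨t, ht, ht0⟩ := ((eventually_all.2 hmul).filter_mono nhdsWithin_le_nhds |>.and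
    (self_mem_nhdsWithin : {0}ᶜ ∈ 𝓝[≠] (0 : 𝕜))).exists
  exact cubicForm_eq_zero_of_third_difference ht0 ht

variable {V ι γ : Type*} [AddCommGroup V] [Module 𝕜 V] [Finite γ]

theorem eventually_indepMod_ker [CompleteSpace 𝕜] {ρ : V →ₗ[𝕜] γ → 𝕜} {K : Finset ι}
    {y : 𝕜 → ι → V} (hy : ∀ i ∈ K, Continuous fun s => ρ (y s i))
    (h : IndepMod (LinearMap.ker ρ) K (y 0)) :
    ∀ᶠ s in 𝓝 0, IndepMod (LinearMap.ker ρ) K (y s) := by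
  have := Fintype.ofFinite γ
  simp only [indepMod_ker_iff] at h ⊢
  have hcont : Continuous fun s => fun i : (K : Set ι) => ρ (y s i) :=
    continuous_pi fun i => hy i i.2
  exact hcont.continuousAt.eventually (LinearIndependent.eventually h)

end Eventually

section CubicVanishing

variable {𝕜 V ι γ : Type*} [AddCommGroup V] {A : ι → Set V} {T : Finset ι} {j : ι}

theorem IndepMod.smul [Field 𝕜] [Module 𝕜 V] {E : Submodule 𝕜 V} {x : ι → V}
    (h : IndepMod E T x) {c : ι → 𝕜} (hc : ∀ i ∈ T, c i ≠ 0) :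
    IndepMod E T fun i => c i • x i := by
  refine indepMod_iff_sum.2 fun g hg i hi => ?_
  simp only [smul_smul] at hg
  exact (mul_eq_zero.1 (indepMod_iff_sum.1 h (fun i => g i * c i) hg i hi)).resolve_right (hc i hi)

section FiniteDimensional

variable [Field 𝕜] [Module 𝕜 V] [FiniteDimensional 𝕜 V] {E : Submodule 𝕜 V}

theorem IsIrreducibleMod.ker_eq_sup_span [DecidableEq ι]
    (h : IsIrreducibleMod A (insert j T) E) (hj : j ∉ T)
    {y : ι → V} (hy : IndepMod E T y) {v : Dual 𝕜 V} (hv : v ≠ 0) (hE : E ≤ LinearMap.ker v)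
    (hvy : ∀ i ∈ T, v (y i) = 0) : LinearMap.ker v = E ⊔ Submodule.span 𝕜 (y '' T) := by
  refine (Submodule.eq_of_le_of_finrank_eq (sup_le hE (Submodule.span_le.2 ?_)) ?_).symm
  · rintro _ ⟨i, hi, rfl⟩
    exact hvy i hi
  · have h1 := Dual.finrank_ker_add_one_of_ne_zero hv
    have h2 := h.finrank_add_card
    have h3 := indepMod_iff_finrank.1 hy
    rw [Finset.card_insert_of_notMem hj] at h2
    omega

theorem IsIrreducibleMod.nonempty (h : IsIrreducibleMod A T E) {k : ι} (hk : {k} ⊂ T) :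
    (A k).Nonempty := by
  by_contra hA
  refine h.not_vectorSpan_le_sup_span_singleton hk 0 ?_
  rw [Set.not_nonempty_iff_eq_empty.1 hA, vectorSpan_empty]
  exact bot_le

theorem IsIrreducibleMod.exists_transversal_notMem [Infinite 𝕜] [DecidableEq ι]
    (h : IsIrreducibleMod A (insert j T) E) (hj : j ∉ T) (hT : T.Nonempty) : ∃ x z : ι → V,
      (∀ i, x i ∈ vectorSpan 𝕜 (A i)) ∧ (∀ i ∈ T, z i ∈ vectorSpan 𝕜 (A i)) ∧
      IndepMod E T x ∧ ∀ k ∈ T, z k ∉ E ⊔ Submodule.span 𝕜 (x '' T) := by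
  have hTj : T ⊂ insert j T := Finset.ssubset_insert hj
  obtain ⟨k₀, hk₀⟩ := hT
  choose! z hz hzE using fun k (hk : k ∈ T) => SetLike.not_le_iff_exists.1 fun hle =>
    h.not_vectorSpan_le_sup_span_singleton
      ((Finset.singleton_subset_iff.2 hk).trans_ssubset hTj) 0 (hle.trans le_sup_left)
  obtain ⟨x, hx, hindep⟩ := exists_transversal_forall_indepMod T (fun _ => T)
    (fun k => E ⊔ Submodule.span 𝕜 {z k}) fun k _ => h.radoCondition_sup_span_singleton hTj (z k)
  exact ⟨x, z, hx, hz, (hindep k₀ hk₀).anti le_sup_left,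
    fun k hk => (hindep k hk).notMem_sup_span (hzE k hk)⟩

end FiniteDimensional

/-- The cubic form vanishes at `ν₀ + s ν₁` for small `s`, where `ν₀` annihilates a transversal
`x i`: for such weights `v (z i) x i - v (x i) z i` is a transversal annihilated by `v`. -/
theorem cubicForm_eq_zero [NontriviallyNormedField 𝕜] [CompleteSpace 𝕜] [CharZero 𝕜] [Module 𝕜 V]
    [DecidableEq ι] [FiniteDimensional 𝕜 V] [Fintype γ] [DecidableEq γ] {ρ : V →ₗ[𝕜] γ → 𝕜}
    {ℓ : ι → V → γ}
    (h : IsIrreducibleMod A (insert j T) (LinearMap.ker ρ))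
    (hH : HessianVanishes A (insert j T) (LinearMap.ker ρ)) (hj : j ∉ T) (hT : T.Nonempty)
    (hℓ : ∀ i ∈ T, ∀ a ∈ A i, ∀ b ∈ A i,
      ρ (a - b) = Pi.single (ℓ i a) 1 - Pi.single (ℓ i b) 1)
    {a₀ a₁ a₂ : V} (ha₀ : a₀ ∈ A j) (ha₁ : a₁ ∈ A j) (ha₂ : a₂ ∈ A j) (ν₁ : γ → 𝕜) :
    cubicForm (ρ (a₁ - a₀)) (ρ (a₂ - a₀)) ν₁ = 0 := by
  obtain ⟨x, z, hx, hz, hxE, hzE⟩ := h.exists_transversal_notMem hj hT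
  obtain ⟨k, hk⟩ := hT
  obtain ⟨v₀, hv₀, hv₀k⟩ := exists_dual_apply_eq_one (hzE k hk)
  have hv₀x : ∀ i ∈ T, v₀ (x i) = 0 := fun i hi =>
    hv₀ (Submodule.mem_sup_right (Submodule.subset_span ⟨i, hi, rfl⟩))
  have hv₀z : ∀ i ∈ T, v₀ (z i) ≠ 0 := fun i hi hvz => hzE i hi <| by
    rwa [← h.ker_eq_sup_span hj hxE (by rintro rfl; simp at hv₀k)
      (le_sup_left.trans hv₀) hv₀x]
  obtain ⟨ν₀, hν₀⟩ := exists_weightedDual_eq (le_sup_left.trans hv₀)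
  let v (s : 𝕜) : Dual 𝕜 V := weightedDual ρ (ν₀ + s • ν₁)
  have hv (s : 𝕜) (x : V) : v s x = v₀ x + s * weightedDual ρ ν₁ x := by simp [v, hν₀]
  let y (s : 𝕜) (i : ι) : V := v s (z i) • x i - v s (x i) • z i
  have hy0 : IndepMod (LinearMap.ker ρ) T (y 0) :=
    (hxE.smul hv₀z).congr fun i hi => by simp [y, hv, hv₀x i hi]
  have hyc : ∀ i ∈ T, Continuous fun s => ρ (y s i) := fun i _ => by
    simp only [y, hv, map_sub, map_smul]
    fun_prop
  refine cubicForm_eq_zero_of_eventually (ν₀ := ν₀)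
    ((eventually_indepMod_ker hyc hy0).mono fun s hs => ?_)
  refine cubicForm_eq_zero_of_ker_eq hH hj hℓ
    (fun i hi => h.nonempty ((Finset.singleton_subset_iff.2 hi).trans_ssubset
      (Finset.ssubset_insert hj)))
    (fun i hi => sub_mem (Submodule.smul_mem _ _ (hx i)) (Submodule.smul_mem _ _ (hz i hi)))
    (h.ker_eq_sup_span hj hs (fun hv0 => ?_) (ker_le_ker_weightedDual ρ _) fun i _ => ?_)
    ha₀ ha₁ ha₂
  · refine hs.ne_zero hk ?_
    simp only [Function.comp_apply, y, v, hv0, LinearMap.zero_apply, zero_smul, sub_zero, map_zero]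
  · simp only [y, v, LinearMap.map_sub, LinearMap.map_smul, smul_eq_mul]
    ring

end CubicVanishing

section Extension

theorem exists_forall_eq_single_sub_single {𝕜 γ : Type*} [Field 𝕜] [CharZero 𝕜] [Fintype γ]
    [DecidableEq γ] {S : Set (γ → 𝕜)} (h : ∀ p ∈ S, ∀ q ∈ S, ∀ ν, cubicForm p q ν = 0)
    (hsum : ∀ p ∈ S, ∑ b, p b = 0) {p q : γ → 𝕜} (hp : p ∈ S) (hq : q ∈ S) (hp0 : p ≠ 0)
    (hq0 : q ≠ 0) (hpq : p ≠ q) :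
    ∃ b : γ, ∀ x ∈ S, ∃ o : γ, x = Pi.single o 1 - Pi.single b 1 := by
  obtain ⟨b₁, -, b, hb₁, hpb, -⟩ :=
    exists_eq_single_sub_single (h p hp q hq) hp0 hq0 hpq (hsum p hp) (hsum q hq)
  refine ⟨b, fun x hx => ?_⟩
  by_cases hx0 : x = 0
  · exact ⟨b, by rw [hx0, sub_self]⟩
  by_cases hpx : p = x
  · exact ⟨b₁, hpx ▸ hpb⟩
  obtain ⟨c₁, c₂, c, -, hpc, hxc⟩ :=
    exists_eq_single_sub_single (h p hp x hx) hp0 hx0 hpx (hsum p hp) (hsum x hx)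
  have hbc : b = c := by
    by_contra hne
    have hpb' := congrFun (hpb.symm.trans hpc) b
    simp only [Pi.sub_apply, Pi.single_eq_same, Pi.single_eq_of_ne hb₁.symm,
      Pi.single_eq_of_ne hne, Pi.single_apply] at hpb'
    split_ifs at hpb' <;> norm_num at hpb'
  exact ⟨c₂, hbc ▸ hxc⟩

variable {𝕜 V ι : Type*} [AddCommGroup V] {A : ι → Set V} {T : Finset ι} {j : ι}

theorem ExtensionStep.notMem_sup_edge [DecidableEq ι] [Field 𝕜] [Module 𝕜 V]
    {E : Submodule 𝕜 V} {β : Type} [Fintype β] [DecidableEq β] (X : ExtensionStep A T j E β) :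
    X.c - X.a₀ ∉ E ⊔ Submodule.span 𝕜 {X.a₁ - X.a₀} := fun h =>
  X.coordAt_ne_zero (X.labelling.le_ker_coordAt X.m h)

/-- A vector with coordinates `0` and `1` only has nonzero coordinate sum. -/
theorem SimplexLabelling.exists_coordAt_ne [Field 𝕜] [CharZero 𝕜] [Module 𝕜 V]
    {E : Submodule 𝕜 V} {β : Type} [Fintype β] [DecidableEq β] (L : SimplexLabelling A T E β)
    (hE : E ⊔ directionSpan 𝕜 A T = ⊤) {x : V} (hx : x ∉ E) :
    ∃ m, L.coordAt m x ≠ 0 ∧ L.coordAt m x ≠ 1 := by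
  classical
  by_contra! h
  have hsum := L.sum_coord_eq_zero (hE ▸ Submodule.mem_top : x ∈ E ⊔ directionSpan 𝕜 A T)
  have hcoord (m : β) : L.coord x m = if L.coord x m ≠ 0 then 1 else 0 := by
    split_ifs with hm
    · exact h m hm
    · exact not_not.1 hm
  rw [Finset.sum_congr rfl fun m _ => hcoord m, Finset.sum_boole, Nat.cast_eq_zero,
    Finset.card_eq_zero, Finset.filter_eq_empty_iff] at hsum
  refine hx (L.ker_coord.le (LinearMap.mem_ker.2 (funext fun m => ?_)))
  simpa using hsum (Finset.mem_univ m)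

variable [NontriviallyNormedField 𝕜] [CompleteSpace 𝕜] [CharZero 𝕜] [Module 𝕜 V]
  [FiniteDimensional 𝕜 V] [DecidableEq ι] {E : Submodule 𝕜 V}

theorem ExtensionStep.isSimplicialMod {β : Type} [Fintype β] [DecidableEq β]
    (X : ExtensionStep A T j E β) : IsSimplicialMod A (insert j T) E := by
  obtain ⟨ρ, ℓ, rfl, hsum, hℓ⟩ := X.exists_splitting
  obtain ⟨k, hk, -⟩ := X.exists_label_eq
  have hp0 : ρ (X.a₁ - X.a₀) ≠ 0 := X.edge_notMem
  have hq0 : ρ (X.c - X.a₀) ≠ 0 := fun h => X.notMem_sup_edge (Submodule.mem_sup_left h)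
  have hpq : ρ (X.a₁ - X.a₀) ≠ ρ (X.c - X.a₀) := fun h => by
    have hmem : (X.c - X.a₀) - (X.a₁ - X.a₀) ∈ LinearMap.ker ρ := by
      rw [LinearMap.mem_ker, LinearMap.map_sub, h, sub_self]
    refine X.notMem_sup_edge ?_
    simpa using Submodule.add_mem_sup hmem (Submodule.mem_span_singleton_self (X.a₁ - X.a₀))
  obtain ⟨b, hb⟩ := exists_forall_eq_single_sub_single (S := (fun a => ρ (a - X.a₀)) '' A j)
    (by
      rintro _ ⟨a, ha, rfl⟩ _ ⟨a', ha', rfl⟩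
      exact cubicForm_eq_zero X.irreducible X.hessianVanishes X.notMem ⟨k, hk⟩ hℓ X.a₀_mem ha ha')
    (by
      rintro _ ⟨a, -, rfl⟩
      exact hsum _)
    ⟨_, X.a₁_mem, rfl⟩ ⟨_, X.c_mem, rfl⟩ hp0 hq0 hpq
  obtain ⟨o, ho⟩ : ∃ o : V → Option β,
      ∀ a ∈ A j, ρ (a - X.a₀) = Pi.single (o a) 1 - Pi.single b 1 := by
    choose! o ho using fun a (ha : a ∈ A j) => hb _ ⟨a, ha, rfl⟩
    exact ⟨o, ho⟩
  refine ⟨Option β, inferInstance, inferInstance, ⟨{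
    coord := ρ
    label := fun i a => if i = j then o a else ℓ i a
    card_eq := by
      rw [Fintype.card_option, X.labelling.card_eq, Finset.card_insert_of_notMem X.notMem]
    ker_coord := rfl
    coord_sub := fun i hi a ha a' ha' => ?_ }⟩⟩
  rcases Finset.mem_insert.1 hi with rfl | hiT
  · rw [if_pos rfl, if_pos rfl, ← sub_sub_sub_cancel_right a a' X.a₀, LinearMap.map_sub, ho a ha,
      ho a' ha', sub_sub_sub_cancel_right]
  · have hij : i ≠ j := fun h => X.notMem (h ▸ hiT)
    rw [if_neg hij, if_neg hij, hℓ i hiT a ha a' ha']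

theorem IsSimplicialMod.insert_of_contract (hj : j ∉ T) (hT : T.Nonempty) {a₀ a₁ : V}
    (ha₀ : a₀ ∈ A j) (ha₁ : a₁ ∈ A j) (ha : a₁ - a₀ ∉ E)
    (hIrrT : IsIrreducibleMod A T (E ⊔ Submodule.span 𝕜 {a₁ - a₀}))
    (hIrr : IsIrreducibleMod A (insert j T) E) (hH : HessianVanishes A (insert j T) E)
    (h : IsSimplicialMod A T (E ⊔ Submodule.span 𝕜 {a₁ - a₀})) :
    IsSimplicialMod A (insert j T) E := by
  obtain ⟨β, _, _, ⟨L⟩⟩ := h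
  have hjT : {j} ⊂ insert j T := by
    obtain ⟨t, ht⟩ := hT
    refine Finset.ssubset_iff_subset_ne.2 ⟨by simp, fun h => hj ?_⟩
    have := h ▸ Finset.mem_insert_of_mem ht
    rwa [← Finset.mem_singleton.1 this]
  obtain ⟨c, hc, hcE⟩ : ∃ c ∈ A j, c - a₀ ∉ E ⊔ Submodule.span 𝕜 {a₁ - a₀} := by
    by_contra! hle
    refine hIrr.not_vectorSpan_le_sup_span_singleton hjT (a₁ - a₀)
      (vectorSpan_le_iff.2 fun a ha b hb => ?_)
    simpa using Submodule.sub_mem _ (hle a ha) (hle b hb)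
  obtain ⟨m, hm0, hm1⟩ := L.exists_coordAt_ne hIrrT.sup_directionSpan hcE
  exact ExtensionStep.isSimplicialMod (β := β) ⟨a₀, a₁, c, m, L, hj, ha₀, ha₁, hc, ha, hIrrT,
    hIrr, hH, hm0, hm1⟩

end Extension

section Induction

variable {𝕜 V ι : Type*} [AddCommGroup V] [DecidableEq ι] {A : ι → Set V} {T J : Finset ι} {j : ι}

variable (𝕜) in
/-- `A i`, `i ∈ J`, becomes irreducible and simplicial after contracting one difference of points
of each of the remaining sets `A i`, `i ∈ T \ J`. -/
def HasSimplicialContraction [Field 𝕜] [Module 𝕜 V] (A : ι → Set V) (T J : Finset ι) : Prop :=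
  ∃ e : ι → V, IsEdgeTransversal 𝕜 A (T \ J) e ∧
    IsIrreducibleMod A J (Submodule.span 𝕜 (e '' ↑(T \ J))) ∧
    IsSimplicialMod A J (Submodule.span 𝕜 (e '' ↑(T \ J)))

theorem hasSimplicialContraction_singleton [Field 𝕜] [Infinite 𝕜] [Module 𝕜 V]
    [FiniteDimensional 𝕜 V] (h : IsIrreducibleMod A T (⊥ : Submodule 𝕜 V))
    (hH : HessianVanishes A T (⊥ : Submodule 𝕜 V)) (hj : j ∈ T) :
    HasSimplicialContraction 𝕜 A T {j} := by
  obtain ⟨e, he, hI⟩ := h.exists_edges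
  have hsing : {j} ⊆ T := Finset.singleton_subset_iff.2 hj
  have hT : T = insert j (T \ {j}) := by rw [Finset.insert_eq, Finset.union_sdiff_of_subset hsing]
  have hjK : j ∉ T \ {j} := by simp
  have he' : IsEdgeTransversal 𝕜 A (T \ {j}) e :=
    ⟨fun i hi => he i (Finset.sdiff_subset hi), hI.mono_set Finset.sdiff_subset⟩
  set E := Submodule.span 𝕜 (e '' ↑(T \ {j}))
  have hejE : e j ∉ E := by
    rw [hT, indepMod_insert_iff_notMem_sup hjK, bot_sup_eq] at hI
    exact hI.2
  have hE : finrank 𝕜 E + 1 = finrank 𝕜 V := by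
    rw [he'.finrank_span, ← h.finrank_add_card, finrank_bot, zero_add,
      ← Finset.card_insert_of_notMem hjK, ← hT]
  obtain ⟨q, hq, p, hp, hqp⟩ := he j hj
  obtain ⟨v, hv, hvj⟩ := exists_dual_apply_eq_one hejE
  have hker : E = LinearMap.ker v := by
    refine Submodule.eq_of_le_of_finrank_eq hv ?_
    have := Dual.finrank_ker_add_one_of_ne_zero (f := v) (by rintro rfl; simp at hvj)
    omega
  refine ⟨e, he', isIrreducibleMod_singleton hE fun hle => hejE (hle ?_), ?_⟩
  · exact mem_vectorSpan_of_mem_sub (he j hj)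
  · have hHj := hH.contract hsing he'.mem_sub
    change IsSimplicialMod A {j} E
    change HessianVanishes A {j} E at hHj
    rw [hker] at hHj ⊢
    exact isSimplicialMod_singleton fun a ha => hHj.apply_eq_or hp hq ha (by rwa [← hqp] at hvj)

variable [NontriviallyNormedField 𝕜] [CompleteSpace 𝕜] [CharZero 𝕜] [Module 𝕜 V]
  [FiniteDimensional 𝕜 V]

theorem HasSimplicialContraction.exists_insert (hJ : HasSimplicialContraction 𝕜 A T J)
    (h : IsIrreducibleMod A T (⊥ : Submodule 𝕜 V)) (hH : HessianVanishes A T (⊥ : Submodule 𝕜 V))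
    (hJT : J ⊂ T) (hJne : J.Nonempty) :
    ∃ l ∈ T \ J, HasSimplicialContraction 𝕜 A T (insert l J) := by
  obtain ⟨e, he, hIrr, hsimp⟩ := hJ
  obtain ⟨l, hl, e', he', hspan, hIrr'⟩ := h.exists_release hJT hJne he hIrr
  obtain ⟨hlT, hlJ⟩ := Finset.mem_sdiff.1 hl
  have hsub : (T \ J).erase l ⊆ T \ J := Finset.erase_subset l _
  obtain ⟨a₁, ha₁, a₀, ha₀, hle⟩ := he'.mem_sub l hl
  have hsup : Submodule.span 𝕜 (e '' ↑(T \ J)) =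
      Submodule.span 𝕜 (e' '' ↑((T \ J).erase l)) ⊔ Submodule.span 𝕜 {a₁ - a₀} := by
    rw [← hspan, show a₁ - a₀ = e' l from hle, span_image_erase_sup_span_singleton hl]
  have hnotMem := he'.notMem_span_erase hl
  rw [← hle] at hnotMem
  rw [hsup] at hIrr hsimp
  rw [← Finset.sdiff_insert] at hnotMem hIrr hIrr' hsimp hsub
  exact ⟨l, hl, e', ⟨fun i hi => he'.mem_sub i (hsub hi), he'.indepMod.mono_set hsub⟩, hIrr',
    hsimp.insert_of_contract hlJ hJne ha₀ ha₁ hnotMem hIrr hIrr'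
      (hH.contract (Finset.insert_subset hlT hJT.subset) fun i hi => he'.mem_sub i (hsub hi))⟩

omit [DecidableEq ι] in
theorem IsIrreducibleMod.isSimplicialMod (h : IsIrreducibleMod A T (⊥ : Submodule 𝕜 V))
    (hH : HessianVanishes A T (⊥ : Submodule 𝕜 V)) (hT : T.Nonempty) :
    IsSimplicialMod A T (⊥ : Submodule 𝕜 V) := by
  classical
  obtain ⟨j, hj⟩ := hT
  obtain ⟨J, hjJ, hJ⟩ := (T.powerset.filter (HasSimplicialContraction 𝕜 A T)).exists_le_maximal
    (a := {j}) (by simp [hj, hasSimplicialContraction_singleton h hH hj])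
  obtain ⟨hJT, hJS⟩ := Finset.mem_filter.1 hJ.prop
  obtain rfl : J = T := by
    by_contra hne
    obtain ⟨l, hl, hlS⟩ := hJS.exists_insert h hH
      ((Finset.mem_powerset.1 hJT).ssubset_of_ne hne) ⟨j, Finset.singleton_subset_iff.1 hjJ⟩
    obtain ⟨hlT, hlJ⟩ := Finset.mem_sdiff.1 hl
    exact hJ.not_prop_of_gt (Finset.ssubset_insert hlJ) (Finset.mem_filter.2
      ⟨Finset.mem_powerset.2 (Finset.insert_subset hlT (Finset.mem_powerset.1 hJT)), hlS⟩)
  obtain ⟨e, -, -, he⟩ := hJS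
  simpa using he

end Induction

section Lattice

variable {n : ℕ} {A : Fin n → Finset (Fin n → ℤ)}

/-- The inclusion of the lattice `ℤⁿ` into `ℂⁿ`. -/
def complexify (n : ℕ) : (Fin n → ℤ) →ₗ[ℤ] Fin n → ℂ := (Algebra.linearMap ℤ ℂ).compLeft (Fin n)

@[simp]
theorem complexify_apply (a : Fin n → ℤ) (j : Fin n) : complexify n a j = a j := rfl

theorem complexify_injective : Function.Injective (complexify n) := fun _ _ h =>
  funext fun j => Int.cast_injective (congrFun h j)

/-- The supports `Aᵢ`, regarded as subsets of `ℂⁿ`. -/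
def complexSupport (A : Fin n → Finset (Fin n → ℤ)) (i : Fin n) : Set (Fin n → ℂ) :=
  complexify n '' A i

theorem translatesInto_directionSpan (A : Fin n → Finset (Fin n → ℤ)) {I : Finset (Fin n)}
    {i : Fin n} (hi : i ∈ I) :
    TranslatesInto (A i) (directionSpan ℤ (fun i => (A i : Set (Fin n → ℤ))) I) := by
  rcases (A i).eq_empty_or_nonempty with hA | ⟨b, hb⟩
  · exact ⟨0, by simp [hA]⟩
  · exact ⟨b, fun a ha => vectorSpan_le_directionSpan (A := fun i => (A i : Set (Fin n → ℤ))) hi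
      (mem_vectorSpan_of_mem_sub (Set.sub_mem_sub ha hb))⟩

theorem IsReducedTuple.directionSpan_eq_top (h : IsReducedTuple A) :
    directionSpan ℤ (fun i => (A i : Set (Fin n → ℤ))) Finset.univ = ⊤ := by
  by_contra hne
  exact h ⟨_, hne, fun i => translatesInto_directionSpan A (Finset.mem_univ i)⟩

theorem IsIrreducibleTuple.card_lt_finrank (h : IsIrreducibleTuple A) {I : Finset (Fin n)}
    (hI : I.Nonempty) (hIn : I ⊂ Finset.univ) :
    I.card < finrank ℤ (directionSpan ℤ (fun i => (A i : Set (Fin n → ℤ))) I) := by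
  by_contra! hle
  exact h ⟨I, _, hI.card_pos, by simpa using Finset.card_lt_card hIn, hle,
    fun _ hi => translatesInto_directionSpan A hi⟩

theorem finrank_le_of_le_comap_complexify {M : Submodule ℤ (Fin n → ℤ)}
    {N : Submodule ℂ (Fin n → ℂ)} (h : M ≤ (N.restrictScalars ℤ).comap (complexify n)) :
    finrank ℤ M ≤ finrank ℂ N := by
  let b := finBasis ℤ M
  have hb : LinearIndependent ℂ fun k => complexify n (b k) :=
    linearIndependent_algebraMap_comp_iff.2
      (b.linearIndependent.map' M.subtype (by simp))
  have hbN : LinearIndependent ℂ fun k => (⟨complexify n (b k), h (b k).2⟩ : N) :=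
    LinearIndependent.of_comp N.subtype hb
  simpa using hbN.fintype_card_le_finrank

theorem directionSpan_le_comap_complexify (A : Fin n → Finset (Fin n → ℤ)) (I : Finset (Fin n)) :
    directionSpan ℤ (fun i => (A i : Set (Fin n → ℤ))) I ≤
      ((directionSpan ℂ (complexSupport A) I).restrictScalars ℤ).comap (complexify n) := by
  refine directionSpan_le_iff.2 fun i hi => vectorSpan_le_iff.2 fun a ha b hb => ?_
  rw [Submodule.mem_comap, map_sub]
  exact vectorSpan_le_directionSpan hi (mem_vectorSpan_of_mem_sub
    (Set.sub_mem_sub (Set.mem_image_of_mem _ ha) (Set.mem_image_of_mem _ hb)))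

theorem IsIrreducibleTuple.isIrreducibleMod (h : IsIrreducibleTuple A) (hr : IsReducedTuple A) :
    IsIrreducibleMod (complexSupport A) Finset.univ (⊥ : Submodule ℂ (Fin n → ℂ)) where
  lt_finrank I hIn hI := by
    rw [finrank_bot, zero_add, bot_sup_eq]
    exact (h.card_lt_finrank hI hIn).trans_le
      (finrank_le_of_le_comap_complexify (directionSpan_le_comap_complexify A I))
  sup_directionSpan := by
    rw [bot_sup_eq]
    refine Submodule.eq_top_of_finrank_eq (le_antisymm (Submodule.finrank_le _) ?_)
    have := finrank_le_of_le_comap_complexify (directionSpan_le_comap_complexify A Finset.univ)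
    rw [hr.directionSpan_eq_top, finrank_top] at this
    simpa using this
  finrank_add_card := by simp

end Lattice

section Simplex

variable {𝕜 V ι β : Type*} [DecidableEq β]

/-- The vertices `m` joined to `l` by integer combinations of `S` form a union of components: the
sum of the coordinates over it vanishes on `S`, hence on `single k 1 - single l 1`. -/
theorem single_sub_single_mem_span_int [Finite β] [CommRing 𝕜] [Nontrivial 𝕜] {S : Set (β → 𝕜)}
    (hS : ∀ x ∈ S, ∃ p q, x = Pi.single p 1 - Pi.single q 1) {k l : β}
    (hkl : (Pi.single k 1 - Pi.single l 1 : β → 𝕜) ∈ Submodule.span 𝕜 S) :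
    (Pi.single k 1 - Pi.single l 1 : β → 𝕜) ∈ Submodule.span ℤ S := by
  classical
  have := Fintype.ofFinite β
  let C : Finset β := {m | (Pi.single m 1 - Pi.single l 1 : β → 𝕜) ∈ Submodule.span ℤ S}
  let χ : (β → 𝕜) →ₗ[𝕜] 𝕜 := ∑ b ∈ C, LinearMap.proj b
  have hχ : ∀ m, χ (Pi.single m 1) = if m ∈ C then 1 else 0 := fun m => by
    simp [χ, Pi.single_apply]
  have hSC : ∀ p q, (Pi.single p 1 - Pi.single q 1 : β → 𝕜) ∈ S → (p ∈ C ↔ q ∈ C) := by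
    intro p q hpq
    have hpq' := Submodule.subset_span (R := ℤ) hpq
    simp only [C, Finset.mem_filter_univ]
    rw [← sub_add_sub_cancel (Pi.single p 1) (Pi.single q 1) (Pi.single l 1),
      Submodule.add_mem_iff_right _ hpq']
  have hker : Submodule.span 𝕜 S ≤ LinearMap.ker χ := by
    refine Submodule.span_le.2 fun x hx => ?_
    obtain ⟨p, q, rfl⟩ := hS x hx
    simp [hχ, hSC p q hx]
  have hl : l ∈ C := by simp [C]
  have hk := hker hkl
  rw [LinearMap.mem_ker, map_sub, hχ, hχ, if_pos hl] at hk
  by_contra hkC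
  have hkC' : k ∉ C := by simpa only [C, Finset.mem_filter_univ] using hkC
  simp [hkC'] at hk

theorem SimplexLabelling.exists_coord_eq {β : Type} [Fintype β] [DecidableEq β] [Field 𝕜]
    [AddCommGroup V] [Module 𝕜 V] [FiniteDimensional 𝕜 V] {A : ι → Set V} {T : Finset ι}
    {E : Submodule 𝕜 V} (L : SimplexLabelling A T E β) (h : IsIrreducibleMod A T E) {z : β → 𝕜}
    (hz : ∑ b, z b = 0) : ∃ x, L.coord x = z := by
  let χ : Dual 𝕜 (β → 𝕜) := ∑ b, LinearMap.proj b
  have hχ : ∀ z, χ z = ∑ b, z b := fun z => by simp [χ]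
  obtain ⟨b⟩ : Nonempty β := Fintype.card_pos_iff.1 (by have := L.card_eq; omega)
  have hχ0 : χ ≠ 0 := fun h0 => by simpa [χ] using LinearMap.congr_fun h0 (Pi.single b 1)
  have hker := Dual.finrank_ker_add_one_of_ne_zero hχ0
  have hrange := LinearMap.finrank_range_add_finrank_ker L.coord
  have hle : LinearMap.range L.coord ≤ LinearMap.ker χ := by
    rintro _ ⟨x, rfl⟩
    rw [LinearMap.mem_ker, hχ,
      L.sum_coord_eq_zero (h.sup_directionSpan ▸ Submodule.mem_top)]
  rw [finrank_fintype_fun_eq_card, L.card_eq] at hker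
  rw [L.ker_coord, ← h.finrank_add_card] at hrange
  have hmem : z ∈ LinearMap.ker χ := by rw [LinearMap.mem_ker, hχ, hz]
  rwa [← Submodule.eq_of_le_of_finrank_eq hle (by omega)] at hmem

end Simplex

section EssentiallyLinear

variable {n : ℕ} {A : Fin n → Finset (Fin n → ℤ)} {β : Type}

theorem IsReducedTuple.span_range_sub_eq_top (hr : IsReducedTuple A) {ℓ : Fin n → (Fin n → ℤ) → β}
    {u : β → Fin n → ℤ} (hu : ∀ i, ∀ a ∈ A i, ∀ b ∈ A i, a - b = u (ℓ i a) - u (ℓ i b)) (b₀ : β) :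
    Submodule.span ℤ (Set.range fun b : {b // b ≠ b₀} => u b - u b₀) = ⊤ := by
  have hmem : ∀ b, u b - u b₀ ∈
      Submodule.span ℤ (Set.range fun b : {b // b ≠ b₀} => u b - u b₀) := fun b => by
    by_cases hb : b = b₀
    · simp [hb]
    · exact Submodule.subset_span ⟨⟨b, hb⟩, rfl⟩
  rw [eq_top_iff, ← hr.directionSpan_eq_top]
  refine directionSpan_le_iff.2 fun i _ => vectorSpan_le_iff.2 fun a ha b hb => ?_
  rw [hu i a ha b hb, ← sub_sub_sub_cancel_right _ _ (u b₀)]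
  exact sub_mem (hmem _) (hmem _)

theorem IsReducedTuple.essentiallyLinear [Fintype β] (hr : IsReducedTuple A)
    (hβ : Fintype.card β = n + 1) (ℓ : Fin n → (Fin n → ℤ) → β) (u : β → Fin n → ℤ)
    (hu : ∀ i, ∀ a ∈ A i, ∀ b ∈ A i, a - b = u (ℓ i a) - u (ℓ i b)) : EssentiallyLinear A := by
  classical
  obtain ⟨b₀⟩ : Nonempty β := Fintype.card_pos_iff.1 (by omega)
  have hcard : Fintype.card {b // b ≠ b₀} = n := by
    rw [Fintype.card_subtype_compl, hβ, Fintype.card_subtype_eq, Nat.add_sub_cancel]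
  let σ : {b // b ≠ b₀} ≃ Fin n := Fintype.equivFinOfCardEq hcard
  let B : Basis (Fin n) ℤ (Fin n → ℤ) :=
    (basisOfTopLeSpanOfCardEqFinrank (fun b : {b // b ≠ b₀} => u b - u b₀)
      (hr.span_range_sub_eq_top hu b₀).ge (by simp [hcard])).reindex σ
  have hB : ∀ b, B.equivFun (u b - u b₀) ∈ stdSimplexVertices n := fun b => by
    by_cases hb : b = b₀
    · exact Or.inl (by simp [hb])
    · refine Or.inr ⟨σ ⟨b, hb⟩, ?_⟩
      have hBb : B (σ ⟨b, hb⟩) = u b - u b₀ := by simp [B]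
      ext j
      rw [← hBb, Basis.equivFun_self]
      simp only [Pi.single_apply, eq_comm]
  have htranslate : ∀ i, ∃ v, ∀ a ∈ A i, B.equivFun a + v ∈ stdSimplexVertices n := fun i => by
    rcases (A i).eq_empty_or_nonempty with hi | ⟨b, hb⟩
    · exact ⟨0, by simp [hi]⟩
    · refine ⟨B.equivFun (u (ℓ i b) - u b₀ - b), fun a ha => ?_⟩
      rw [← map_add]
      convert hB (ℓ i a) using 2
      rw [← sub_add_cancel (u (ℓ i a)) (u (ℓ i b)), ← hu i a ha b hb]
      abel
  choose v hv using htranslate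
  exact ⟨B.equivFun.toAddEquiv, v, hv⟩

theorem SimplexLabelling.exists_coord_complexify_eq [Fintype β] [DecidableEq β]
    (L : SimplexLabelling (complexSupport A) Finset.univ (⊥ : Submodule ℂ (Fin n → ℂ)) β)
    (h : IsIrreducibleMod (complexSupport A) Finset.univ (⊥ : Submodule ℂ (Fin n → ℂ)))
    (k l : β) : ∃ a, L.coord (complexify n a) = Pi.single k 1 - Pi.single l 1 := by
  let S : Set (β → ℂ) := {x | ∃ i, ∃ a ∈ A i, ∃ b ∈ A i, x = L.coord (complexify n (a - b))}
  have hcoord : ∀ i, ∀ a ∈ A i, ∀ b ∈ A i, L.coord (complexify n (a - b)) =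
      Pi.single (L.label i (complexify n a)) 1 - Pi.single (L.label i (complexify n b)) 1 :=
    fun i a ha b hb => by
      rw [map_sub, L.coord_sub i (Finset.mem_univ i) _ (Set.mem_image_of_mem _ ha) _
        (Set.mem_image_of_mem _ hb)]
  have hspan : (⊤ : Submodule ℂ (Fin n → ℂ)) ≤ (Submodule.span ℂ S).comap L.coord := by
    rw [← h.directionSpan_eq_top, directionSpan_le_iff]
    refine fun i _ => vectorSpan_le_iff.2 ?_
    rintro _ ⟨a, ha, rfl⟩ _ ⟨b, hb, rfl⟩
    exact Submodule.subset_span ⟨i, a, ha, b, hb, by rw [map_sub (complexify n)]⟩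
  have hrange : Submodule.span ℤ S ≤
      LinearMap.range ((L.coord.restrictScalars ℤ).comp (complexify n)) := by
    rw [Submodule.span_le]
    rintro _ ⟨i, a, -, b, -, rfl⟩
    exact ⟨a - b, rfl⟩
  obtain ⟨x, hx⟩ := L.exists_coord_eq h (z := Pi.single k 1 - Pi.single l 1) (by simp)
  refine hrange (single_sub_single_mem_span_int ?_ (hx ▸ hspan Submodule.mem_top))
  rintro _ ⟨i, a, ha, b, hb, rfl⟩
  exact ⟨_, _, hcoord i a ha b hb⟩

theorem IsSimplicialMod.essentiallyLinear
    (hS : IsSimplicialMod (complexSupport A) Finset.univ (⊥ : Submodule ℂ (Fin n → ℂ)))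
    (h : IsIrreducibleTuple A) (hr : IsReducedTuple A) : EssentiallyLinear A := by
  obtain ⟨β, _, _, ⟨L⟩⟩ := hS
  have hcard : Fintype.card β = n + 1 := by simpa using L.card_eq
  obtain ⟨b₀⟩ : Nonempty β := Fintype.card_pos_iff.1 (by omega)
  choose u hu using fun b => L.exists_coord_complexify_eq (h.isIrreducibleMod hr) b b₀
  refine hr.essentiallyLinear hcard (fun i a => L.label i (complexify n a)) u
    fun i a ha b hb => complexify_injective (LinearMap.ker_eq_bot.1 L.ker_coord ?_)
  rw [map_sub, L.coord_sub i (Finset.mem_univ i) _ (Set.mem_image_of_mem _ ha) _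
    (Set.mem_image_of_mem _ hb), map_sub, map_sub, hu, hu, sub_sub_sub_cancel_right]

theorem IsIrreducibleTuple.not_hessianVanishes (h : IsIrreducibleTuple A) (hr : IsReducedTuple A)
    (hA : ¬ EssentiallyLinear A) :
    ¬ HessianVanishes (complexSupport A) Finset.univ (⊥ : Submodule ℂ (Fin n → ℂ)) := by
  intro hH
  rcases (Finset.univ : Finset (Fin n)).eq_empty_or_nonempty with hn | hn
  · have := Finset.univ_eq_empty_iff.1 hn
    exact hA ⟨AddEquiv.refl _, 0, isEmptyElim⟩
  · exact hA (((h.isIrreducibleMod hr).isSimplicialMod hH hn).essentiallyLinear h hr)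

end EssentiallyLinear

section KrullDimension

theorem ringKrullDim_le_of_isIntegral {R S : Type*} [CommRing R] [CommRing S] [Algebra R S]
    [Algebra.IsIntegral R S] (h : Function.Injective (algebraMap R S)) :
    ringKrullDim R ≤ ringKrullDim S := by
  refine iSup_le fun l => ?_
  have hker : (⊥ : Ideal S).comap (algebraMap R S) ≤ l.head.asIdeal := by
    rw [← RingHom.ker_eq_comap_bot, (RingHom.injective_iff_ker_eq_bot _).1 h]
    exact bot_le
  obtain ⟨P, -, hP, hPl⟩ := Ideal.exists_ideal_over_prime_of_isIntegral l.head.asIdeal ⊥ hker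
  have : P.LiesOver l.head.asIdeal := ⟨hPl.symm⟩
  obtain ⟨L, hL, -⟩ := Ideal.exists_ltSeries_of_hasGoingUp l P
  exact hL ▸ Order.LTSeries.length_le_krullDim L

variable {k R ι : Type*} [Field k] [CommRing R] [Algebra k R] [Algebra.FiniteType k R] [Fintype ι]

/-- By Noether normalization `R` is integral over a polynomial ring in `s` variables; both the
transcendence degree and the Krull dimension then equal `s`. -/
theorem card_le_ringKrullDim_of_algebraicIndependent_of_isDomain [IsDomain R] {x : ι → R}
    (hx : AlgebraicIndependent k x) : (Fintype.card ι : WithBot ℕ∞) ≤ ringKrullDim R := by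
  obtain ⟨s, g, hg, hint⟩ := exists_integral_inj_algHom_of_fg k R
  algebraize [g.toRingHom]
  have : Algebra.IsIntegral (MvPolynomial (Fin s) k) R := ⟨hint⟩
  have hdim := ringKrullDim_le_of_isIntegral (R := MvPolynomial (Fin s) k) (S := R) hg
  rw [MvPolynomial.ringKrullDim_of_isNoetherianRing, ringKrullDim_eq_zero_of_field, zero_add,
    Nat.card_fin] at hdim
  refine le_trans ?_ hdim
  have : FaithfulSMul (MvPolynomial (Fin s) k) R := (faithfulSMul_iff_algebraMap_injective _ _).2 hg
  have htrdeg : Algebra.trdeg k R = s := by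
    simpa using ((IsTranscendenceBasis.mvPolynomial (Fin s) k).algebraMap_comp
      (A := R)).lift_cardinalMk_eq_trdeg.symm
  have hle : Fintype.card ι ≤ s := by
    simpa [htrdeg] using hx.lift_cardinalMk_le_trdeg
  exact_mod_cast hle

theorem card_le_ringKrullDim_of_algebraicIndependent {x : ι → R} (hx : AlgebraicIndependent k x) :
    (Fintype.card ι : WithBot ℕ∞) ≤ ringKrullDim R := by
  obtain ⟨P, hP, -, hdisj⟩ := Ideal.exists_le_prime_disjoint (I := (⊥ : Ideal R))
    ((nonZeroDivisors (MvPolynomial ι k)).map (MvPolynomial.aeval x : MvPolynomial ι k →ₐ[k] R)) (by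
      rw [Set.disjoint_left]
      rintro _ h0 ⟨p, hp, rfl⟩
      exact nonZeroDivisors.ne_zero hp (hx ((Ideal.mem_bot.1 h0).trans (map_zero _).symm)))
  have hxP : AlgebraicIndependent k (fun i => Ideal.Quotient.mkₐ k P (x i)) := by
    refine algebraicIndependent_iff.2 fun p hp => ?_
    by_contra hp0
    rw [show MvPolynomial.aeval (fun i => Ideal.Quotient.mkₐ k P (x i)) p =
      Ideal.Quotient.mkₐ k P (MvPolynomial.aeval x p) from
        (MvPolynomial.map_aeval x _ p).symm] at hp
    exact Set.disjoint_left.1 hdisj (Ideal.Quotient.eq_zero_iff_mem.1 hp)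
      ⟨p, mem_nonZeroDivisors_of_ne_zero hp0, rfl⟩
  exact (card_le_ringKrullDim_of_algebraicIndependent_of_isDomain hxP).trans
    (ringKrullDim_quotient_le P)

end KrullDimension

section PolynomialMap

variable {k ι τ : Type*} [Field k]

theorem ringKrullDim_quotient_le_card_sub_one [Fintype ι] {I : Ideal (MvPolynomial ι k)}
    {g : MvPolynomial ι k} (hg : g ≠ 0) (hgI : g ∈ I) :
    ringKrullDim (MvPolynomial ι k ⧸ I) ≤ ((Fintype.card ι - 1 : ℕ) : WithBot ℕ∞) := by
  have hspan : Ideal.span {g} ≤ I := (Ideal.span_singleton_le_iff_mem I).2 hgI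
  refine (ringKrullDim_le_of_surjective (Ideal.Quotient.factor hspan)
    (Ideal.Quotient.factor_surjective hspan)).trans ?_
  have hdim := ringKrullDim_quotient_succ_le_of_nonZeroDivisor (mem_nonZeroDivisors_of_ne_zero hg)
  rw [MvPolynomial.ringKrullDim_of_isNoetherianRing, ringKrullDim_eq_zero_of_field, zero_add,
    Nat.card_eq_fintype_card] at hdim
  generalize ringKrullDim (MvPolynomial ι k ⧸ Ideal.span {g}) = d at hdim
  induction d with
  | bot => exact bot_le
  | coe d =>
    norm_cast at hdim ⊢
    induction d with
    | top => simp at hdim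
    | coe d =>
      norm_cast at hdim
      exact Nat.cast_le.2 (Nat.le_sub_one_of_lt hdim)

/-- If the components of `Φ` are algebraically dependent, a relation vanishes on the whole image;
otherwise `D` is algebraic over them and divides a nonzero polynomial in them. -/
theorem exists_ne_zero_eval_comp_eq_zero [Fintype ι] [Fintype τ]
    (hcard : Fintype.card ι = Fintype.card τ) (Φ : ι → MvPolynomial τ k) {D : MvPolynomial τ k}
    (hD : D ≠ 0) : ∃ g : MvPolynomial ι k, g ≠ 0 ∧ ∀ y : τ → k, MvPolynomial.eval y D = 0 →
      MvPolynomial.eval (fun i => MvPolynomial.eval y (Φ i)) g = 0 := by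
  have heval (y : τ → k) (g : MvPolynomial ι k) :
      MvPolynomial.eval (fun i => MvPolynomial.eval y (Φ i)) g =
        MvPolynomial.eval y (MvPolynomial.aeval Φ g) :=
    (MvPolynomial.eval₂Hom_bind₁ (RingHom.id k) y Φ g).symm
  by_cases hΦ : AlgebraicIndependent k Φ
  · have hbasis : IsTranscendenceBasis k Φ := by
      apply hΦ.isTranscendenceBasis_of_lift_trdeg_le_of_finite
      simp [hcard, MvPolynomial.trdeg_of_isDomain]
    have := hbasis.isAlgebraic
    obtain ⟨⟨r, hr⟩, hr0, hdvd⟩ := (Algebra.IsAlgebraic.isAlgebraic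
      (R := Algebra.adjoin k (Set.range Φ)) D).exists_nonzero_dvd
        (mem_nonZeroDivisors_of_ne_zero hD)
    rw [Algebra.adjoin_range_eq_range_aeval] at hr
    obtain ⟨g, rfl⟩ := hr
    refine ⟨g, ?_, fun y hy => ?_⟩
    · rintro rfl
      exact hr0 (Subtype.ext (map_zero _))
    · rw [heval]
      exact eq_zero_of_zero_dvd (hy ▸ map_dvd (MvPolynomial.eval y) hdvd)
  · rw [algebraicIndependent_iff] at hΦ
    push Not at hΦ
    obtain ⟨g, hg, hg0⟩ := hΦ
    exact ⟨g, hg0, fun y _ => by rw [heval, hg, map_zero]⟩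

end PolynomialMap

section Dimension

variable {ι : Type*}

theorem mem_vanishingIdeal_zclosure {Z : Set (ι → ℂ)} {p : MvPolynomial ι ℂ} :
    p ∈ vanishingIdeal (zclosure Z) ↔ ∀ c ∈ Z, MvPolynomial.eval c p = 0 :=
  ⟨fun h c hc => h c (Set.mem_sInter.2 fun _ hW => hW.2 hc), fun h _ hc =>
    Set.mem_sInter.1 hc {c | MvPolynomial.eval c p = 0} ⟨⟨{p}, by simp⟩, h⟩⟩

theorem adim_zclosure_eq_card_sub_one [Fintype ι] {Z : Set (ι → ℂ)} {g : MvPolynomial ι ℂ}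
    (hg : g ≠ 0) (hgZ : ∀ c ∈ Z, MvPolynomial.eval c g = 0) (k₀ : ι)
    (hk₀ : ∀ p : MvPolynomial {k // k ≠ k₀} ℂ,
      (∀ c ∈ Z, MvPolynomial.eval (fun k : {k // k ≠ k₀} => c k) p = 0) → p = 0) :
    adim (zclosure Z) = ((Fintype.card ι - 1 : ℕ) : WithBot ℕ∞) := by
  classical
  refine le_antisymm (ringKrullDim_quotient_le_card_sub_one hg
    (mem_vanishingIdeal_zclosure.2 hgZ)) ?_
  have hind : AlgebraicIndependent ℂ fun k : {k // k ≠ k₀} =>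
      Ideal.Quotient.mkₐ ℂ (vanishingIdeal (zclosure Z)) (MvPolynomial.X k.1) := by
    refine algebraicIndependent_iff.2 fun p hp => hk₀ p fun c hc => ?_
    have hmem : MvPolynomial.rename Subtype.val p ∈ vanishingIdeal (zclosure Z) := by
      refine Ideal.Quotient.eq_zero_iff_mem.1 (Eq.trans ?_ hp)
      exact DFunLike.congr_fun (MvPolynomial.algHom_ext (f := (Ideal.Quotient.mkₐ ℂ
        (vanishingIdeal (zclosure Z))).comp (MvPolynomial.rename Subtype.val)) (by simp)) p
    simpa [MvPolynomial.eval_rename] using! mem_vanishingIdeal_zclosure.1 hmem c hc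
  refine le_trans (le_of_eq ?_) (card_le_ringKrullDim_of_algebraicIndependent hind)
  rw [Fintype.card_subtype_compl, Fintype.card_subtype_eq]

end Dimension

section LogJacobian

variable {n : ℕ} {A : Fin n → Finset (Fin n → ℤ)} {R S : Type*} [CommRing R] [CommRing S]

/-- The logarithmic Jacobian matrix `(xⱼ ∂fᵢ/∂xⱼ)` of a system of Laurent polynomials, as a function
of the values `Y` of its terms `c_a x^a`. -/
def logJacobian (Y : CIdx A → R) : Matrix (Fin n) (Fin n) R :=
  Matrix.of fun i j => ∑ a : {a // a ∈ A i}, Y ⟨i, a⟩ * (a.1 j : R)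

theorem map_logJacobian (f : R →+* S) (Y : CIdx A → R) :
    f.mapMatrix (logJacobian Y) = logJacobian (f ∘ Y) := by
  ext i j
  simp [logJacobian]

theorem jacobian_eq_mul_diagonal (c : Coeff A) (x : Torus n) :
    jacobian A c x = logJacobian (fun k : CIdx A => c k * mono k.2.1 x) *
      Matrix.diagonal fun j => (x j : ℂ)⁻¹ := by
  ext i j
  rw [Matrix.mul_diagonal, jacobian, logJacobian, Matrix.of_apply, Matrix.of_apply,
    ← Finset.univ_eq_attach]
  congr 1
  exact Finset.sum_congr rfl fun a _ => mul_right_comm _ _ _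

theorem isSingularRoot_iff {c : Coeff A} {x : Torus n} :
    IsSingularRoot A c x ↔ (∀ i, ∑ a : {a // a ∈ A i}, c ⟨i, a⟩ * mono a.1 x = 0) ∧
      (logJacobian fun k : CIdx A => c k * mono k.2.1 x).det = 0 := by
  have hdet : (Matrix.diagonal fun j => (x j : ℂ)⁻¹).det ≠ 0 := by
    simp [Finset.prod_ne_zero_iff]
  rw [IsSingularRoot, jacobian_eq_mul_diagonal, Matrix.det_mul, mul_eq_zero, or_iff_left hdet]
  rfl

theorem IsIrreducibleTuple.exists_det_logJacobian_ne_zero (h : IsIrreducibleTuple A)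
    (hr : IsReducedTuple A) : (∀ i, (A i).Nonempty) ∧ ∃ Y : CIdx A → ℂ,
      (∀ i, ∑ a : {a // a ∈ A i}, Y ⟨i, a⟩ = 0) ∧ (logJacobian Y).det ≠ 0 := by
  obtain ⟨e, he, hind⟩ := (h.isIrreducibleMod hr).exists_edges
  simp only [complexSupport, Set.mem_sub, Set.exists_mem_image, Finset.mem_coe, Finset.mem_univ,
    true_imp_iff] at he
  choose s hs t ht hst using he
  let Y (i : Fin n) : {a // a ∈ A i} → ℂ := Pi.single ⟨s i, hs i⟩ 1 - Pi.single ⟨t i, ht i⟩ 1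
  have hY : logJacobian (fun k : CIdx A => Y k.1 k.2) = Matrix.of e := by
    ext i j
    simp [logJacobian, Y, sub_mul, Finset.sum_sub_distrib, Pi.single_apply, ← hst]
  refine ⟨fun i => ⟨s i, hs i⟩, fun k => Y k.1 k.2, fun i => by simp [Y], fun hdet => ?_⟩
  obtain ⟨g, hg, hge⟩ := Matrix.exists_vecMul_eq_zero_iff.2 (hY ▸ hdet)
  refine hg (funext fun i => indepMod_iff_sum.1 hind g ?_ i (Finset.mem_univ i))
  rw [Submodule.mem_bot, ← hge, Matrix.vecMul_eq_sum]
  rfl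

end LogJacobian

section CompleteAtBase

variable {n : ℕ} {A : Fin n → Finset (Fin n → ℤ)} {R S : Type*} [CommRing R] [CommRing S]
  (b : ∀ i, {a // a ∈ A i})

/-- Replaces the entries of `y` at the base points `b i ∈ Aᵢ` so that the sum over each `Aᵢ`
vanishes. -/
def completeAtBase (y : CIdx A → R) (k : CIdx A) : R :=
  if k.2 = b k.1 then -∑ a ∈ Finset.univ.erase (b k.1), y ⟨k.1, a⟩ else y k

theorem map_comp_completeAtBase (f : R →+* S) (y : CIdx A → R) :
    f ∘ completeAtBase b y = completeAtBase b (f ∘ y) := by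
  ext k
  simp [completeAtBase, apply_ite f]

theorem completeAtBase_eq {y z : CIdx A → R} (hz : ∀ i, ∑ a : {a // a ∈ A i}, z ⟨i, a⟩ = 0)
    (hyz : ∀ k, k.2 ≠ b k.1 → y k = z k) : completeAtBase b y = z := by
  ext ⟨i, a⟩
  rw [completeAtBase]
  split_ifs with ha
  · obtain rfl : a = b i := ha
    rw [Finset.sum_congr rfl fun a ha => hyz ⟨i, a⟩ (Finset.ne_of_mem_erase ha),
      neg_eq_iff_add_eq_zero, Finset.sum_erase_add _ _ (Finset.mem_univ _), hz]
  · exact hyz _ ha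

end CompleteAtBase

section UpperBound

variable {n : ℕ} {A : Fin n → Finset (Fin n → ℤ)}

theorem mono_ne_zero (a : Fin n → ℤ) (x : Torus n) : mono a x ≠ 0 :=
  Finset.prod_ne_zero_iff.2 fun j _ => zpow_ne_zero _ (x j).ne_zero

theorem mono_sub (a b : Fin n → ℤ) (x : Torus n) : mono (a - b) x = mono a x / mono b x := by
  simp only [mono, Pi.sub_apply, zpow_sub₀ (x _).ne_zero, Finset.prod_div_distrib]

theorem mono_eq_prod_pow_toNat {a : Fin n → ℤ} (ha : 0 ≤ a) (x : Torus n) :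
    mono a x = ∏ j, (x j : ℂ) ^ (a j).toNat :=
  Finset.prod_congr rfl fun j _ => by rw [← zpow_natCast, Int.toNat_of_nonneg (ha j)]

/-- The polynomials expressing the coefficients `c` of a system in terms of a root `x` and of the
values `y` of the terms divided by `x^m`. The variables at the base points, where the value of the
term is determined by the others, stand for the coordinates of `x`. -/
noncomputable def coeffParam (b : ∀ i, {a // a ∈ A i}) (m : Fin n → ℤ) (k : CIdx A) :
    MvPolynomial (CIdx A) ℂ :=
  completeAtBase b MvPolynomial.X k * ∏ j, MvPolynomial.X ⟨j, b j⟩ ^ (m j - k.2.1 j).toNat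

theorem IsSingularRoot.exists_coeffParam_eq {c : Coeff A} {x : Torus n} (h : IsSingularRoot A c x)
    (b : ∀ i, {a // a ∈ A i}) {m : Fin n → ℤ} (hm : ∀ k : CIdx A, k.2.1 ≤ m) :
    ∃ y : CIdx A → ℂ, (logJacobian (completeAtBase b y)).det = 0 ∧
      ∀ k, MvPolynomial.eval y (coeffParam b m k) = c k := by
  obtain ⟨hroot, hdet⟩ := isSingularRoot_iff.1 h
  let z (k : CIdx A) : ℂ := (mono m x)⁻¹ * (c k * mono k.2.1 x)
  let y (k : CIdx A) : ℂ := if k.2 = b k.1 then x k.1 else z k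
  have hyz : completeAtBase b y = z := completeAtBase_eq b
    (fun i => by rw [← Finset.mul_sum, hroot, mul_zero]) fun k hk => if_neg hk
  have hybase (j : Fin n) : y ⟨j, b j⟩ = x j := if_pos rfl
  refine ⟨y, ?_, fun k => ?_⟩
  · have hz : logJacobian z = (mono m x)⁻¹ • logJacobian fun k : CIdx A => c k * mono k.2.1 x := by
      ext i j
      simp [logJacobian, z, Finset.mul_sum, mul_assoc]
    rw [hyz, hz, Matrix.det_smul, hdet, mul_zero]
  · have hX : MvPolynomial.eval y (completeAtBase b MvPolynomial.X k) = z k := by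
      rw [← hyz, ← Function.comp_apply (f := MvPolynomial.eval y), map_comp_completeAtBase]
      congr 1
      ext k
      simp
    have hmk : ∏ j, (x j : ℂ) ^ (m j - k.2.1 j).toNat = mono m x / mono k.2.1 x := by
      rw [← mono_sub, mono_eq_prod_pow_toNat (sub_nonneg.2 (hm k))]
      rfl
    simp only [coeffParam, map_mul, map_prod, map_pow, MvPolynomial.eval_X, hX, hybase, hmk, z]
    field_simp [mono_ne_zero]

theorem IsIrreducibleTuple.exists_ne_zero_eval_eq_zero (h : IsIrreducibleTuple A)
    (hr : IsReducedTuple A) : ∃ g : MvPolynomial (CIdx A) ℂ, g ≠ 0 ∧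
      ∀ c : Coeff A, (∃ x, IsSingularRoot A c x) → MvPolynomial.eval c g = 0 := by
  obtain ⟨hne, Y, hY, hdet⟩ := h.exists_det_logJacobian_ne_zero hr
  let b (i : Fin n) : {a // a ∈ A i} := ⟨_, (hne i).choose_spec⟩
  obtain ⟨m, hm⟩ := (Set.finite_range fun k : CIdx A => k.2.1).bddAbove
  have heval (y : CIdx A → ℂ) :
      MvPolynomial.eval y (logJacobian (completeAtBase b MvPolynomial.X)).det =
        (logJacobian (completeAtBase b y)).det := by
    rw [RingHom.map_det, map_logJacobian, map_comp_completeAtBase]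
    congr 3
    ext k
    simp
  have hD : (logJacobian (completeAtBase b (MvPolynomial.X (R := ℂ)))).det ≠ 0 := fun h0 => by
    have := heval Y
    rw [h0, map_zero, completeAtBase_eq b hY fun _ _ => rfl] at this
    exact hdet this.symm
  obtain ⟨g, hg, hgD⟩ := exists_ne_zero_eval_comp_eq_zero rfl (coeffParam b m) hD
  refine ⟨g, hg, fun c ⟨x, hx⟩ => ?_⟩
  obtain ⟨y, hy, hc⟩ := hx.exists_coeffParam_eq b fun k => hm ⟨k, rfl⟩
  simpa only [hc] using hgD y ((heval y).trans hy)

end UpperBound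

section ExponentialSums

variable {ι V : Type*} {κ : ι → Type*} [Fintype ι] [∀ i, Fintype (κ i)]
  [NormedAddCommGroup V] [NormedSpace ℂ V]

/-- The system of exponential sums `fᵢ(u) = ∑ c_k exp u(a_k)` in `u ∈ V*` has a nondegenerate
singular root of corank one at `u = 0`: the kernel of its differential is spanned by `v`, and the
Hessian of the combination `∑ l i fᵢ`, which has a critical point, does not vanish on `v`. -/
structure IsNondegenerateSingularRoot (a : (Σ i, κ i) → V) (c : (Σ i, κ i) → ℂ) (l : ι → ℂ)
    (v : StrongDual ℂ V) : Prop where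
  sum_coeff i : ∑ k, c ⟨i, k⟩ = 0
  sum_coeff_mul i : ∑ k, c ⟨i, k⟩ * v (a ⟨i, k⟩) = 0
  sum_smul_eq_zero : ∑ i, l i • ∑ k, c ⟨i, k⟩ • a ⟨i, k⟩ = 0
  exists_eq_smul (u : StrongDual ℂ V) (hu : ∀ i, ∑ k, c ⟨i, k⟩ * u (a ⟨i, k⟩) = 0) :
    ∃ s : ℂ, u = s • v
  hessian_ne_zero : ∑ i, l i * ∑ k, c ⟨i, k⟩ * v (a ⟨i, k⟩) ^ 2 ≠ 0

variable {a : (Σ i, κ i) → V} {c : (Σ i, κ i) → ℂ} {l : ι → ℂ} {v : StrongDual ℂ V}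
  {k₀ : Σ i, κ i}

theorem IsNondegenerateSingularRoot.sum_mul_eq_zero (h : IsNondegenerateSingularRoot a c l v)
    (u : StrongDual ℂ V) : ∑ i, l i * ∑ k, c ⟨i, k⟩ * u (a ⟨i, k⟩) = 0 := by
  simpa using congrArg u h.sum_smul_eq_zero

theorem IsNondegenerateSingularRoot.exists_ne_zero (h : IsNondegenerateSingularRoot a c l v) :
    ∃ k₀ : Σ i, κ i, l k₀.1 ≠ 0 ∧ v (a k₀) ≠ 0 := by
  obtain ⟨i, -, hi⟩ := Finset.exists_ne_zero_of_sum_ne_zero h.hessian_ne_zero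
  obtain ⟨k, -, hk⟩ := Finset.exists_ne_zero_of_sum_ne_zero (right_ne_zero_of_mul hi)
  exact ⟨⟨i, k⟩, left_ne_zero_of_mul hi, ne_zero_pow two_ne_zero (right_ne_zero_of_mul hk)⟩

/-- The equations saying that `w` is a kernel vector at the root `u` of the system of exponential
sums with coefficients `c`, together with the normalization `w (a k₀)` of `w` and all coefficients
except `c k₀`. -/
noncomputable def singularRootMap (a : (Σ i, κ i) → V) (k₀ : Σ i, κ i)
    (p : StrongDual ℂ V × ((Σ i, κ i) → ℂ) × StrongDual ℂ V) :
    (ι → ℂ) × (ι → ℂ) × ℂ × ({k // k ≠ k₀} → ℂ) :=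
  (fun i => ∑ k, p.2.1 ⟨i, k⟩ * Complex.exp (p.1 (a ⟨i, k⟩)),
    fun i => ∑ k, p.2.1 ⟨i, k⟩ * Complex.exp (p.1 (a ⟨i, k⟩)) * p.2.2 (a ⟨i, k⟩),
    p.2.2 (a k₀), fun k => p.2.1 k)

theorem contDiff_singularRootMap [DecidableEq (Σ i, κ i)] (a : (Σ i, κ i) → V) (k₀ : Σ i, κ i) :
    ContDiff ℂ 1 (singularRootMap a k₀) := by
  unfold singularRootMap
  fun_prop

theorem hasLineDerivAt_singularRootMap [DecidableEq (Σ i, κ i)] (a : (Σ i, κ i) → V)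
    (k₀ : Σ i, κ i) (c c' : (Σ i, κ i) → ℂ) (u' v w' : StrongDual ℂ V) :
    HasLineDerivAt ℂ (singularRootMap a k₀)
      (fun i => ∑ k, (c' ⟨i, k⟩ + c ⟨i, k⟩ * u' (a ⟨i, k⟩)),
        fun i => ∑ k, ((c' ⟨i, k⟩ + c ⟨i, k⟩ * u' (a ⟨i, k⟩)) * v (a ⟨i, k⟩) +
          c ⟨i, k⟩ * w' (a ⟨i, k⟩)),
        w' (a k₀), fun k : {k // k ≠ k₀} => c' k) (0, c, v) (u', c', w') := by
  have hlin (α β : ℂ) : HasDerivAt (fun t : ℂ => α + t * β) β 0 := by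
    simpa using ((hasDerivAt_id (0 : ℂ)).mul_const β).const_add α
  have hexp (β : ℂ) : HasDerivAt (fun t : ℂ => Complex.exp (t * β)) β 0 := by
    simpa using ((hasDerivAt_id (0 : ℂ)).mul_const β).cexp
  have hterm (k : Σ i, κ i) : HasDerivAt
      (fun t : ℂ => (c k + t * c' k) * Complex.exp (t * u' (a k))) (c' k + c k * u' (a k)) 0 := by
    simpa using (hlin (c k) (c' k)).fun_mul (hexp (u' (a k)))
  have hderiv (k : Σ i, κ i) : HasDerivAt
      (fun t : ℂ => (c k + t * c' k) * Complex.exp (t * u' (a k)) * (v (a k) + t * w' (a k)))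
      ((c' k + c k * u' (a k)) * v (a k) + c k * w' (a k)) 0 := by
    simpa using (hterm k).fun_mul (hlin (v (a k)) (w' (a k)))
  simpa [HasLineDerivAt, singularRootMap] using
    (hasDerivAt_pi.2 fun i => HasDerivAt.fun_sum fun k _ => hterm ⟨i, k⟩).prodMk
    ((hasDerivAt_pi.2 fun i => HasDerivAt.fun_sum fun k _ => hderiv ⟨i, k⟩).prodMk
      ((hlin (v (a k₀)) (w' (a k₀))).prodMk
        (hasDerivAt_pi.2 fun k : {k // k ≠ k₀} => hlin (c k) (c' k))))

omit [Fintype ι] in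
theorem fderiv_singularRootMap_apply [Finite ι] (a : (Σ i, κ i) → V) (k₀ : Σ i, κ i)
    (c c' : (Σ i, κ i) → ℂ) (u' v w' : StrongDual ℂ V) :
    fderiv ℂ (singularRootMap a k₀) (0, c, v) (u', c', w') =
      (fun i => ∑ k, (c' ⟨i, k⟩ + c ⟨i, k⟩ * u' (a ⟨i, k⟩)),
        fun i => ∑ k, ((c' ⟨i, k⟩ + c ⟨i, k⟩ * u' (a ⟨i, k⟩)) * v (a ⟨i, k⟩) +
          c ⟨i, k⟩ * w' (a ⟨i, k⟩)),
        w' (a k₀), fun k : {k // k ≠ k₀} => c' k) := by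
  classical
  have := Fintype.ofFinite ι
  exact (((contDiff_singularRootMap a k₀).differentiable one_ne_zero _).hasFDerivAt.hasLineDerivAt
    (u', c', w')).unique (hasLineDerivAt_singularRootMap a k₀ c c' u' v w')

theorem IsNondegenerateSingularRoot.injective_fderiv_singularRootMap
    (h : IsNondegenerateSingularRoot a c l v) (hl : l k₀.1 ≠ 0) (hv : v (a k₀) ≠ 0) :
    Function.Injective (fderiv ℂ (singularRootMap a k₀) (0, c, v)) := by
  refine (injective_iff_map_eq_zero _).2 ?_
  rintro ⟨u', c', w'⟩ h0
  simp only [fderiv_singularRootMap_apply, Prod.mk_eq_zero, funext_iff, Pi.zero_apply,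
    Finset.sum_add_distrib] at h0
  obtain ⟨hroot, hker, hnorm, hrest⟩ := h0
  have hc' : c' = 0 := by
    have hsum : ∑ k, l k.1 * c' k = 0 := calc
      _ = ∑ i, l i * (∑ k, c' ⟨i, k⟩ + ∑ k, c ⟨i, k⟩ * u' (a ⟨i, k⟩)) := by
        simp only [mul_add, Finset.sum_add_distrib, h.sum_mul_eq_zero u', add_zero]
        simp only [Finset.mul_sum, Fintype.sum_sigma]
      _ = 0 := Finset.sum_eq_zero fun i _ => mul_eq_zero_of_right _ (hroot i)
    rw [Fintype.sum_eq_single k₀ fun k hk => by rw [hrest ⟨k, hk⟩, mul_zero]] at hsum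
    ext k
    by_cases hk : k = k₀
    · exact hk ▸ (mul_eq_zero.1 hsum).resolve_left hl
    · exact hrest ⟨k, hk⟩
  subst hc'
  simp only [Pi.zero_apply, Finset.sum_const_zero, zero_add] at hroot hker
  obtain ⟨t, rfl⟩ := h.exists_eq_smul u' hroot
  have ht : t * ∑ i, l i * ∑ k, c ⟨i, k⟩ * v (a ⟨i, k⟩) ^ 2 = 0 := calc
    _ = ∑ i, l i * (∑ k, c ⟨i, k⟩ * (t • v) (a ⟨i, k⟩) * v (a ⟨i, k⟩) +
          ∑ k, c ⟨i, k⟩ * w' (a ⟨i, k⟩)) := by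
      simp only [mul_add, Finset.sum_add_distrib, h.sum_mul_eq_zero w', add_zero]
      simp only [Finset.mul_sum, smul_apply, smul_eq_mul]
      exact Finset.sum_congr rfl fun i _ => Finset.sum_congr rfl fun k _ => by ring
    _ = 0 := Finset.sum_eq_zero fun i _ => mul_eq_zero_of_right _ (hker i)
  obtain rfl := (mul_eq_zero.1 ht).resolve_right h.hessian_ne_zero
  simp only [smul_apply, smul_eq_mul, zero_mul, mul_zero, Finset.sum_const_zero, zero_add] at hker
  obtain ⟨r, rfl⟩ := h.exists_eq_smul w' hker
  obtain rfl := (mul_eq_zero.1 hnorm).resolve_right hv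
  simp [zero_smul ℂ v]

theorem IsNondegenerateSingularRoot.range_fderiv_singularRootMap [FiniteDimensional ℂ V]
    (hV : finrank ℂ V = Fintype.card ι) (h : IsNondegenerateSingularRoot a c l v)
    (hl : l k₀.1 ≠ 0) (hv : v (a k₀) ≠ 0) :
    (fderiv ℂ (singularRootMap a k₀) (0, c, v)).range = ⊤ := by
  classical
  have hdual : finrank ℂ (StrongDual ℂ V) = Fintype.card ι :=
    (LinearMap.toContinuousLinearMap.finrank_eq.symm.trans Subspace.dual_finrank_eq).trans hV
  have hcard : Fintype.card {k // k ≠ k₀} + 1 = Fintype.card (Σ i, κ i) := by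
    rw [Fintype.card_subtype_compl, Fintype.card_subtype_eq,
      Nat.sub_add_cancel (Fintype.card_pos_iff.2 ⟨k₀⟩)]
  have hfinrank : finrank ℂ (StrongDual ℂ V × ((Σ i, κ i) → ℂ) × StrongDual ℂ V) =
      finrank ℂ ((ι → ℂ) × (ι → ℂ) × ℂ × ({k // k ≠ k₀} → ℂ)) := by
    simp only [finrank_prod, finrank_fintype_fun_eq_card, finrank_self, hdual, ← hcard]
    omega
  exact LinearMap.range_eq_top.2 <|
    (LinearMap.injective_iff_surjective_of_finrank_eq_finrank hfinrank).1
      (h.injective_fderiv_singularRootMap hl hv)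

open Filter Topology in
theorem IsNondegenerateSingularRoot.eventually_exists [FiniteDimensional ℂ V]
    (hV : finrank ℂ V = Fintype.card ι) (h : IsNondegenerateSingularRoot a c l v)
    (hl : l k₀.1 ≠ 0) (hv : v (a k₀) ≠ 0) :
    ∀ᶠ d in 𝓝 fun k : {k // k ≠ k₀} => c k, ∃ (u : StrongDual ℂ V) (c' : (Σ i, κ i) → ℂ)
      (w : StrongDual ℂ V), singularRootMap a k₀ (u, c', w) = (0, 0, v (a k₀), d) := by
  classical
  have hstrict := ((contDiff_singularRootMap a k₀).contDiffAt (x := (0, c, v))).hasStrictFDerivAt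
    one_ne_zero
  have hval : singularRootMap a k₀ (0, c, v) =
      (0, 0, v (a k₀), fun k : {k // k ≠ k₀} => c k) := by
    simp [singularRootMap, h.sum_coeff, h.sum_coeff_mul, funext_iff]
  have hrange : Set.range (singularRootMap a k₀) ∈
      𝓝 ((0, 0, v (a k₀), fun k => c k) : (ι → ℂ) × (ι → ℂ) × ℂ × ({k // k ≠ k₀} → ℂ)) := by
    rw [← hval, ← hstrict.map_nhds_eq_of_surj (h.range_fderiv_singularRootMap hV hl hv)]
    exact range_mem_map
  have hcont : Continuous fun d : {k // k ≠ k₀} → ℂ =>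
      ((0, 0, v (a k₀), d) : (ι → ℂ) × (ι → ℂ) × ℂ × ({k // k ≠ k₀} → ℂ)) := by fun_prop
  filter_upwards [hcont.continuousAt.preimage_mem_nhds hrange]
  rintro d ⟨⟨u, c', w⟩, hd⟩
  exact ⟨u, c', w, hd⟩

end ExponentialSums

theorem eq_zero_of_eventually_eval_eq_zero {𝕜 σ : Type*} [NontriviallyNormedField 𝕜] [Finite σ]
    {p : MvPolynomial σ 𝕜} {c : σ → 𝕜} (hp : ∀ᶠ d in nhds c, MvPolynomial.eval d p = 0) :
    p = 0 := by
  have := Fintype.ofFinite σ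
  obtain ⟨ε, hε, hball⟩ := Metric.eventually_nhds_iff_ball.1 hp
  refine MvPolynomial.funext_set (fun k => Metric.ball (c k) ε)
    (fun k => infinite_of_mem_nhds (c k) (Metric.ball_mem_nhds _ hε)) fun d hd => ?_
  rw [map_zero]
  exact hball d (by rwa [ball_pi _ hε])

theorem exists_coeff_of_mem_hessianGraph {𝕜 V κ : Type*} [Field 𝕜] [AddCommGroup V] [Module 𝕜 V]
    [Fintype κ] {α : κ → V} {k₁ : κ} {v : Dual 𝕜 V} {x : V} {q : 𝕜}
    (hx : (x, q) ∈ hessianGraph (Set.range α) (α k₁) v) (hv : v x = 0) :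
    ∃ c : κ → 𝕜, ∑ k, c k = 0 ∧ ∑ k, c k • α k = x ∧ ∑ k, c k * v (α k) ^ 2 = q := by
  classical
  rw [hessianGraph, ← Set.range_comp, Submodule.mem_span_range_iff_exists_fun] at hx
  obtain ⟨d, hd⟩ := hx
  simp only [Function.comp_apply, Prod.smul_mk, smul_eq_mul, Prod.ext_iff, Prod.fst_sum,
    Prod.snd_sum] at hd
  obtain ⟨rfl, rfl⟩ := hd
  refine ⟨d - Pi.single k₁ (∑ k, d k), by simp, ?_, ?_⟩
  · simp [sub_smul, smul_sub, Pi.single_apply, Finset.sum_smul]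
  · simp only [map_sum, map_smul, smul_eq_mul] at hv
    have hsq (k : κ) : d k * v (α k) ^ 2 = d k * v (α k - α k₁) ^ 2 +
        2 * v (α k₁) * (d k * v (α k - α k₁)) + d k * v (α k₁) ^ 2 := by
      rw [map_sub v]
      ring
    simp [sub_mul, Pi.single_apply, hsq, Finset.sum_add_distrib, ← Finset.mul_sum,
      ← Finset.sum_mul, hv, -map_sub]

section SingularRootOfHessian

variable {ι V : Type*} {κ : ι → Type*} [Fintype ι] [∀ i, Fintype (κ i)]
  [NormedAddCommGroup V] [NormedSpace ℂ V] [FiniteDimensional ℂ V]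

theorem exists_isNondegenerateSingularRoot {a : (Σ i, κ i) → V}
    (h : ¬ HessianVanishes (fun i => Set.range fun k => a ⟨i, k⟩) Finset.univ
      (⊥ : Submodule ℂ V)) :
    ∃ c l v, IsNondegenerateSingularRoot a c l v := by
  simp only [HessianVanishes, not_forall, Finset.mem_univ, true_imp_iff, Finset.coe_univ,
    Set.image_univ, bot_sup_eq, Submodule.mem_bot] at h
  obtain ⟨o, x, q, l, v, hx, hv, hl, hq⟩ := h
  have hvx (i : ι) : v (x i) = 0 :=
    LinearMap.mem_ker.1 (hv ▸ Submodule.subset_span (Set.mem_range_self i))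
  choose k hk using fun i => (hx i).1
  have hxk (i : ι) : (x i, q i) ∈ hessianGraph (Set.range fun k => a ⟨i, k⟩) (a ⟨i, k i⟩) v := by
    have := (hx i).2
    rwa [← hk i] at this
  choose c hc hcx hcq using fun i => exists_coeff_of_mem_hessianGraph (hxk i) (hvx i)
  refine ⟨fun k => c k.1 k.2, l, v.toContinuousLinearMap, hc, fun i => ?_, ?_, fun u hu => ?_, ?_⟩
  · simpa using (congrArg v (hcx i)).trans (hvx i)
  · simpa [hcx] using hl
  · have hle : LinearMap.ker v ≤ LinearMap.ker (u : V →ₗ[ℂ] ℂ) := by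
      rw [hv, Submodule.span_le, Set.range_subset_iff]
      intro i
      simpa [← hcx i] using hu i
    obtain ⟨s, hs⟩ := Submodule.mem_span_singleton.1
      (by simpa using mem_span_of_iInf_ker_le_ker (L := fun _ : Unit => v) (by simpa using hle))
    exact ⟨s, ContinuousLinearMap.coe_injective hs.symm⟩
  · simpa [hcq] using hq

end SingularRootOfHessian

section Torus

variable {n : ℕ} {A : Fin n → Finset (Fin n → ℤ)}

theorem apply_complexify (u : StrongDual ℂ (Fin n → ℂ)) (a : Fin n → ℤ) :
    u (complexify n a) = ∑ j, (a j : ℂ) * u (Pi.single j 1) := by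
  rw [← u.coe_coe, LinearMap.pi_apply_eq_sum_univ]
  simp [← Pi.single_apply, Pi.single_comm]

theorem complexSupport_eq_range (A : Fin n → Finset (Fin n → ℤ)) (i : Fin n) :
    complexSupport A i = Set.range fun a : {a // a ∈ A i} => complexify n a := by
  ext
  simp [complexSupport]

/-- The point of the torus with coordinates `exp (u eⱼ)`. -/
noncomputable def expTorus (u : StrongDual ℂ (Fin n → ℂ)) : Torus n :=
  fun j => Units.mk0 (Complex.exp (u (Pi.single j 1))) (Complex.exp_ne_zero _)

theorem mono_expTorus (a : Fin n → ℤ) (u : StrongDual ℂ (Fin n → ℂ)) :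
    mono a (expTorus u) = Complex.exp (u (complexify n a)) := by
  simp only [mono, expTorus, Units.val_mk0, apply_complexify, Complex.exp_sum,
    ← Complex.exp_int_mul]

theorem isSingularRoot_expTorus {k₀ : CIdx A} {c : Coeff A} {u w : StrongDual ℂ (Fin n → ℂ)}
    {y : ℂ} {d : {k // k ≠ k₀} → ℂ} (hy : y ≠ 0)
    (h : singularRootMap (fun k : CIdx A => complexify n k.2.1) k₀ (u, c, w) = (0, 0, y, d)) :
    IsSingularRoot A c (expTorus u) := by
  simp only [singularRootMap, Prod.mk.injEq, funext_iff, Pi.zero_apply] at h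
  obtain ⟨hroot, hker, hnorm, -⟩ := h
  simp only [isSingularRoot_iff, mono_expTorus]
  refine ⟨hroot, Matrix.exists_mulVec_eq_zero_iff.1 ⟨fun j => w (Pi.single j 1), fun hw => ?_, ?_⟩⟩
  · refine hy (hnorm.symm.trans ?_)
    simp [apply_complexify, congrFun hw _]
  · ext i
    rw [Pi.zero_apply, ← hker i]
    simp only [Matrix.mulVec, dotProduct, logJacobian, Matrix.of_apply, apply_complexify w,
      Finset.sum_mul, Finset.mul_sum, mul_assoc]
    exact Finset.sum_comm

theorem IsIrreducibleTuple.exists_forall_eq_zero (h : IsIrreducibleTuple A) (hr : IsReducedTuple A)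
    (hA : ¬ EssentiallyLinear A) :
    ∃ k₀ : CIdx A, ∀ p : MvPolynomial {k // k ≠ k₀} ℂ,
      (∀ c : Coeff A, (∃ x, IsSingularRoot A c x) →
        MvPolynomial.eval (fun k : {k // k ≠ k₀} => c k) p = 0) → p = 0 := by
  have hH := h.not_hessianVanishes hr hA
  rw [funext (complexSupport_eq_range A)] at hH
  obtain ⟨c, l, v, hroot⟩ :=
    exists_isNondegenerateSingularRoot (a := fun k : CIdx A => complexify n k.2.1) hH
  obtain ⟨k₀, hl, hv⟩ := hroot.exists_ne_zero
  refine ⟨k₀, fun p hp => eq_zero_of_eventually_eval_eq_zero (c := fun k => c k) ?_⟩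
  filter_upwards [hroot.eventually_exists ((finrank_fin_fun ℂ).trans (Fintype.card_fin n).symm)
    hl hv]
  rintro d ⟨u, c', w, hd⟩
  have hrestrict : (fun k : {k // k ≠ k₀} => c' k) = d := congrArg (fun p => p.2.2.2) hd
  exact hrestrict ▸ hp c' ⟨_, isSingularRoot_expTorus hv hd⟩

end Torus

/-- Theorem 1.20: a reduced irreducible tuple which is not linear up to a
monomial change of variables is dual effective, i.e. its discriminant `D_A` has complex
dimension `dim ℂ^A − 1`. -/
theorem dual_effective_of_not_essentially_linear {n : ℕ} (A : Fin n → Finset (Fin n → ℤ))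
    (hred : IsReducedTuple A) (hirr : IsIrreducibleTuple A)
    (hlin : ¬ EssentiallyLinear A) :
    DualEffective A := by
  obtain ⟨g, hg, hgA⟩ := hirr.exists_ne_zero_eval_eq_zero hred
  obtain ⟨k₀, hk₀⟩ := hirr.exists_forall_eq_zero hred hlin
  exact adim_zclosure_eq_card_sub_one hg hgA k₀ hk₀

end Esterov
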